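/- arXiv:0711.4457 — 2 statements merged into one kernel-verified Lean document; each statement's English description precedes it below -/
import Mathlib

section
/- Let α ∈ (1,2), let f, g ∈ L^α(S, μ) be nonzero and satisfy Assumptions (A1) and (A2) with constants ε₁, ε₂, and let ξ, η be jointly SαS with spectral pair (f, g). Let K and L be functions satisfying Assumptions (K1), (K2) and (K3). Then K(ξ) and L(η) are square-integrable and there exists a constant C (depending only on ε₁, ε₂, α, K, L, ‖f‖_α and ‖g‖_α) such that |Cov(K(ξ), L(η))| ≤ C ([f,g]₁ + [f,g]₂). (Paper's Theorem 2.4.) -/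
open MeasureTheory Real Set Filter
open scoped ENNReal Topology

noncomputable def nrm (α : ℝ) {S : Type*} [MeasurableSpace S] (μ : Measure S) (f : S → ℝ) : ℝ :=
  (∫ s, |f s| ^ α ∂μ) ^ (1 / α)

noncomputable def dep2 (α : ℝ) {S : Type*} [MeasurableSpace S] (μ : Measure S) (f g : S → ℝ) : ℝ :=
  ∫ s, |f s * g s| ^ (α / 2) ∂μ

noncomputable def dep1s (α : ℝ) {S : Type*} [MeasurableSpace S] (μ : Measure S) (f g : S → ℝ) : ℝ :=
  ∫ s, |f s| ^ (α - 1) * |g s| ∂μ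

noncomputable def dep1 (α : ℝ) {S : Type*} [MeasurableSpace S] (μ : Measure S) (f g : S → ℝ) : ℝ :=
  dep1s α μ f g + dep1s α μ g f

/-- `f ∈ L^α(S, μ)`. -/
def MemLalpha (α : ℝ) {S : Type*} [MeasurableSpace S] (μ : Measure S) (f : S → ℝ) : Prop :=
  AEStronglyMeasurable f μ ∧ Integrable (fun s => |f s| ^ α) μ

/-- Assumption (A1) with constant ε₁. -/
def A1 (α ε₁ : ℝ) {S : Type*} [MeasurableSpace S] (μ : Measure S) (f g : S → ℝ) : Prop :=
  nrm α μ f ^ (α / 2) * nrm α μ g ^ (α / 2) - dep2 α μ f g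
    ≥ ε₁ * (nrm α μ f ^ (α / 2) * nrm α μ g ^ (α / 2))

/-- Assumption (A2) with constant ε₂. -/
def A2 (α ε₂ : ℝ) {S : Type*} [MeasurableSpace S] (μ : Measure S) (f g : S → ℝ) : Prop :=
  ∀ u v : ℝ, nrm α μ (fun s => u * f s + v * g s) ^ α
    ≥ ε₂ * (|u| ^ α * nrm α μ f ^ α + |v| ^ α * nrm α μ g ^ α)

noncomputable def Ufun (α : ℝ) {S : Type*} [MeasurableSpace S] (μ : Measure S)
    (f g : S → ℝ) (u v : ℝ) : ℝ :=
  Real.exp (-(nrm α μ (fun s => u * f s + v * g s) ^ α)) -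
    Real.exp (-(nrm α μ (fun s => u * f s) ^ α) - nrm α μ (fun s => v * g s) ^ α)

/-- signed power `a^⟨p⟩ = sign(a)|a|^p`. -/
noncomputable def spow (a p : ℝ) : ℝ := Real.sign a * |a| ^ p

noncomputable def D1 (α : ℝ) {S : Type*} [MeasurableSpace S] (μ : Measure S)
    (f g : S → ℝ) (u v : ℝ) : ℝ :=
  -α * (∫ s, spow (u * f s + v * g s) (α - 1) * f s ∂μ) *
      Real.exp (-(nrm α μ (fun s => u * f s + v * g s) ^ α)) +
    α * (∫ s, spow (u * f s) (α - 1) * f s ∂μ) *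
      Real.exp (-(nrm α μ (fun s => u * f s) ^ α) - nrm α μ (fun s => v * g s) ^ α)

noncomputable def D2 (α : ℝ) {S : Type*} [MeasurableSpace S] (μ : Measure S)
    (f g : S → ℝ) (u v : ℝ) : ℝ :=
  -(α * (α - 1)) * (∫ s, (if f s = 0 ∨ g s = 0 then (0:ℝ) else
        |u * f s + v * g s| ^ (α - 2) * (f s * g s)) ∂μ) *
      Real.exp (-(nrm α μ (fun s => u * f s + v * g s) ^ α)) +
    α ^ 2 * (∫ s, spow (u * f s + v * g s) (α - 1) * f s ∂μ) *
      (∫ s, spow (u * f s + v * g s) (α - 1) * g s ∂μ) *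
      Real.exp (-(nrm α μ (fun s => u * f s + v * g s) ^ α)) -
    α ^ 2 * (∫ s, spow (u * f s) (α - 1) * f s ∂μ) *
      (∫ s, spow (v * g s) (α - 1) * g s ∂μ) *
      Real.exp (-(nrm α μ (fun s => u * f s) ^ α) - nrm α μ (fun s => v * g s) ^ α)

/-- `(ξ, η)` is jointly SαS with spectral pair `(f, g)`. -/
def JointSAS (α : ℝ) {S : Type*} [MeasurableSpace S] (μ : Measure S) (f g : S → ℝ)
    {Ω : Type*} [MeasurableSpace Ω] (P : Measure Ω) (ξ η : Ω → ℝ) : Prop :=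
  ∀ u v : ℝ, (∫ ω, Complex.exp (Complex.I * ((u * ξ ω + v * η ω : ℝ) : ℂ)) ∂P)
    = Complex.exp (-((nrm α μ (fun s => u * f s + v * g s) ^ α : ℝ) : ℂ))

/-!
The law of `(ξ, η)` is infinitely divisible, with exponent `∫ (1 - cos ⟨z, y⟩) ν(dy)` for a stable
Lévy measure `ν` on the plane; the product of its marginals has as Lévy measure the sum of the
projections of `ν` to the two axes. Along the segment `ν_t` joining this sum to `ν`, the
characteristic function `exp (-ψ_t)` has derivative `exp (-ψ_t)` times an integral over `y ∼ ν` of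
symmetrized products of `exp (i y₁ z₁) - 1` and `exp (i y₂ z₂) - 1`.

The weighted `L¹` norm `∫ (1 + |x₁|) ^ β (1 + |x₂|) ^ β |Φ̂ x|` is at most a constant for
`Φ = exp (-ψ_t)`: a contour shift treats the small jumps, whose exponent is entire, and the large
jumps contribute a Fourier multiplier. Each product of increments multiplies the bound by at most
a constant times `min |y₁| (|y₁| ^ β) * min |y₂| (|y₂| ^ β)`, and the `ν`-integral of this is at
most a constant times `[f,g]₂`. By Fourier inversion the difference of the two laws has a density
that integrates `K ⊗ L`, whose integral against it is the covariance.
-/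

/-! ### The weighted Fourier norm on the plane -/

/-- The character `z ↦ e^{i(x₁z₁ + x₂z₂)}` of the plane with frequency `x`. -/
noncomputable def planeChar (x z : ℝ × ℝ) : ℂ :=
  Complex.exp (Complex.I * ((x.1 * z.1 + x.2 * z.2 : ℝ) : ℂ))

/-- The Fourier transform on the plane, in the angular-frequency normalisation and without the
factor `(2π)⁻²`. -/
noncomputable def planeFourier (Φ : ℝ × ℝ → ℂ) (x : ℝ × ℝ) : ℂ :=
  ∫ z, planeChar (-x) z * Φ z

/-- The submultiplicative weight `(1 + |x₁|)^β (1 + |x₂|)^β` dominating products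
`K(x₁) L(x₂)` of functions of growth order `β`. -/
noncomputable def polyWeight (β : ℝ) (x : ℝ × ℝ) : ℝ :=
  (1 + |x.1|) ^ β * (1 + |x.2|) ^ β

/-- The weighted `L¹` norm of the Fourier transform of `Φ`. -/
noncomputable def fourierNorm (β : ℝ) (Φ : ℝ × ℝ → ℂ) : ℝ≥0∞ :=
  ∫⁻ x, ENNReal.ofReal (polyWeight β x) * ‖planeFourier Φ x‖ₑ

section PlaneFourier

variable {β : ℝ} {Φ Ψ : ℝ × ℝ → ℂ}

lemma norm_planeChar (x z : ℝ × ℝ) : ‖planeChar x z‖ = 1 :=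
  Complex.norm_exp_I_mul_ofReal _

lemma planeChar_add (x y z : ℝ × ℝ) : planeChar (x + y) z = planeChar x z * planeChar y z := by
  rw [planeChar, planeChar, planeChar, ← Complex.exp_add, ← mul_add, ← Complex.ofReal_add]
  congr 3
  simp only [Prod.fst_add, Prod.snd_add]
  ring

lemma continuous_planeChar : Continuous fun p : (ℝ × ℝ) × (ℝ × ℝ) => planeChar p.1 p.2 := by
  unfold planeChar
  fun_prop

@[fun_prop]
lemma measurable_planeChar {X : Type*} [MeasurableSpace X] {p q : X → ℝ × ℝ} (hp : Measurable p)
    (hq : Measurable q) : Measurable fun t => planeChar (p t) (q t) :=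
  continuous_planeChar.measurable.comp (hp.prodMk hq)

lemma integrable_planeChar_mul {μ : Measure (ℝ × ℝ)} (hΦ : Integrable Φ μ) (x : ℝ × ℝ) :
    Integrable (fun z => planeChar x z * Φ z) μ :=
  hΦ.bdd_mul (c := 1) (measurable_planeChar measurable_const measurable_id).aestronglyMeasurable
    (Eventually.of_forall fun z => (norm_planeChar x z).le)

@[fun_prop]
lemma measurable_polyWeight (β : ℝ) : Measurable (polyWeight β) := by
  unfold polyWeight
  fun_prop

lemma polyWeight_nonneg (β : ℝ) (x : ℝ × ℝ) : 0 ≤ polyWeight β x := by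
  unfold polyWeight
  positivity

lemma polyWeight_neg (β : ℝ) (x : ℝ × ℝ) : polyWeight β (-x) = polyWeight β x := by
  simp [polyWeight]

lemma one_le_polyWeight (hβ : 0 ≤ β) (x : ℝ × ℝ) : 1 ≤ polyWeight β x :=
  one_le_mul_of_one_le_of_one_le (one_le_rpow (le_add_of_nonneg_right (abs_nonneg _)) hβ)
    (one_le_rpow (le_add_of_nonneg_right (abs_nonneg _)) hβ)

lemma one_add_abs_add_rpow_le (hβ : 0 ≤ β) (a b : ℝ) :
    (1 + |a + b|) ^ β ≤ (1 + |a|) ^ β * (1 + |b|) ^ β := by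
  rw [← mul_rpow (by positivity) (by positivity)]
  refine rpow_le_rpow (by positivity) ?_ hβ
  nlinarith [abs_add_le a b, mul_nonneg (abs_nonneg a) (abs_nonneg b)]

lemma polyWeight_add_le (hβ : 0 ≤ β) (x y : ℝ × ℝ) :
    polyWeight β (x + y) ≤ polyWeight β x * polyWeight β y :=
  calc polyWeight β (x + y)
      ≤ ((1 + |x.1|) ^ β * (1 + |y.1|) ^ β) * ((1 + |x.2|) ^ β * (1 + |y.2|) ^ β) :=
        mul_le_mul (one_add_abs_add_rpow_le hβ _ _) (one_add_abs_add_rpow_le hβ _ _)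
          (by positivity) (by positivity)
    _ = polyWeight β x * polyWeight β y := by
        unfold polyWeight
        ring

lemma measurable_planeFourier (hΦ : Measurable Φ) : Measurable (planeFourier Φ) :=
  (StronglyMeasurable.integral_prod_right'
    (f := fun p : (ℝ × ℝ) × (ℝ × ℝ) => planeChar (-p.1) p.2 * Φ p.2)
    (Measurable.stronglyMeasurable (by fun_prop))).measurable

lemma planeFourier_add (hΦ : Integrable Φ) (hΨ : Integrable Ψ) (x : ℝ × ℝ) :
    planeFourier (fun z => Φ z + Ψ z) x = planeFourier Φ x + planeFourier Ψ x := by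
  simp only [planeFourier, mul_add]
  exact integral_add (integrable_planeChar_mul hΦ _) (integrable_planeChar_mul hΨ _)

lemma planeFourier_planeChar_mul (y x : ℝ × ℝ) :
    planeFourier (fun z => planeChar y z * Φ z) x = planeFourier Φ (x - y) := by
  simp only [planeFourier]
  refine integral_congr_ae (Eventually.of_forall fun z => ?_)
  simp only [neg_sub', sub_neg_eq_add, planeChar_add, mul_assoc]

lemma fourierNorm_add_le (hΦm : Measurable Φ) (hΦ : Integrable Φ) (hΨ : Integrable Ψ) :
    fourierNorm β (fun z => Φ z + Ψ z) ≤ fourierNorm β Φ + fourierNorm β Ψ := by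
  have hm : Measurable fun x => ENNReal.ofReal (polyWeight β x) * ‖planeFourier Φ x‖ₑ :=
    (measurable_polyWeight β).ennreal_ofReal.mul (measurable_planeFourier hΦm).enorm
  unfold fourierNorm
  rw [← lintegral_add_left hm]
  refine lintegral_mono fun x => ?_
  rw [planeFourier_add hΦ hΨ, ← mul_add]
  gcongr
  exact enorm_add_le _ _

lemma fourierNorm_const_mul (c : ℂ) (hΦ : Measurable Φ) :
    fourierNorm β (fun z => c * Φ z) = ‖c‖ₑ * fourierNorm β Φ := by
  have hm : Measurable fun x => ENNReal.ofReal (polyWeight β x) * ‖planeFourier Φ x‖ₑ :=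
    (measurable_polyWeight β).ennreal_ofReal.mul (measurable_planeFourier hΦ).enorm
  unfold fourierNorm
  rw [← lintegral_const_mul _ hm]
  refine lintegral_congr fun x => ?_
  have hc : planeFourier (fun z => c * Φ z) x = c * planeFourier Φ x := by
    simp only [planeFourier, mul_left_comm _ c]
    exact integral_const_mul _ _
  rw [hc, enorm_mul]
  ring

lemma fourierNorm_planeChar_mul_le (hβ : 0 ≤ β) (hΦ : Measurable Φ) (y : ℝ × ℝ) :
    fourierNorm β (fun z => planeChar y z * Φ z)
      ≤ ENNReal.ofReal (polyWeight β y) * fourierNorm β Φ := by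
  have hm : Measurable fun x => ENNReal.ofReal (polyWeight β x) * ‖planeFourier Φ x‖ₑ :=
    (measurable_polyWeight β).ennreal_ofReal.mul (measurable_planeFourier hΦ).enorm
  unfold fourierNorm
  simp only [planeFourier_planeChar_mul]
  rw [← lintegral_const_mul _ hm, ← lintegral_add_right_eq_self _ y]
  refine lintegral_mono fun x => ?_
  rw [add_sub_cancel_right, ← mul_assoc, ← ENNReal.ofReal_mul (polyWeight_nonneg _ _)]
  gcongr
  simpa only [add_comm] using polyWeight_add_le hβ y x

lemma fourierNorm_integral_le {Y : Type*} [MeasurableSpace Y] {ρ : Measure Y} [SFinite ρ]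
    {Θ : ℝ × ℝ → Y → ℂ} (hm : Measurable (Function.uncurry Θ))
    (hi : Integrable (Function.uncurry Θ) (volume.prod ρ)) :
    fourierNorm β (fun z => ∫ p, Θ z p ∂ρ) ≤ ∫⁻ p, fourierNorm β (fun z => Θ z p) ∂ρ := by
  have hswap : ∀ x, planeFourier (fun z => ∫ p, Θ z p ∂ρ) x
      = ∫ p, planeFourier (fun z => Θ z p) x ∂ρ := fun x => by
    simp only [planeFourier, ← integral_const_mul]
    refine integral_integral_swap (hi.bdd_mul (c := 1) ?_
      (Eventually.of_forall fun q => (norm_planeChar (-x) q.1).le))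
    exact (measurable_planeChar measurable_const measurable_fst).aestronglyMeasurable
  have hFm : Measurable fun q : (ℝ × ℝ) × Y => planeFourier (fun z => Θ z q.2) q.1 :=
    (StronglyMeasurable.integral_prod_right'
      (f := fun r : ((ℝ × ℝ) × Y) × (ℝ × ℝ) => planeChar (-r.1.1) r.2 * Θ r.2 r.1.2)
      (Measurable.stronglyMeasurable ((by fun_prop : Measurable _).mul
        (hm.comp (by fun_prop : Measurable fun r : ((ℝ × ℝ) × Y) × (ℝ × ℝ) =>
          (r.2, r.1.2)))))).measurable
  have hFx : ∀ x, Measurable fun p => ‖planeFourier (fun z => Θ z p) x‖ₑ :=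
    fun x => (hFm.comp measurable_prodMk_left).enorm
  calc fourierNorm β (fun z => ∫ p, Θ z p ∂ρ)
      ≤ ∫⁻ x, ENNReal.ofReal (polyWeight β x) * ∫⁻ p, ‖planeFourier (fun z => Θ z p) x‖ₑ ∂ρ :=
        lintegral_mono fun x => by
          rw [hswap]
          gcongr
          exact enorm_integral_le_lintegral_enorm _
    _ = ∫⁻ x, ∫⁻ p, ENNReal.ofReal (polyWeight β x) * ‖planeFourier (fun z => Θ z p) x‖ₑ ∂ρ :=
        lintegral_congr fun x => (lintegral_const_mul _ (hFx x)).symm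
    _ = ∫⁻ p, fourierNorm β (fun z => Θ z p) ∂ρ :=
        lintegral_lintegral_swap
          (((measurable_polyWeight β).comp measurable_fst).ennreal_ofReal.mul
            hFm.enorm).aemeasurable

lemma fourierNorm_le_of_tendsto {Φs : ℕ → ℝ × ℝ → ℂ} {bound : ℝ × ℝ → ℝ} {A : ℝ≥0∞}
    (hm : ∀ n, Measurable (Φs n)) (hbound : Integrable bound)
    (hle : ∀ n z, ‖Φs n z‖ ≤ bound z) (hlim : ∀ z, Tendsto (fun n => Φs n z) atTop (𝓝 (Φ z)))
    (hA : ∀ n, fourierNorm β (Φs n) ≤ A) : fourierNorm β Φ ≤ A := by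
  have hF : ∀ x, Tendsto (fun n => planeFourier (Φs n) x) atTop (𝓝 (planeFourier Φ x)) := fun x =>
    tendsto_integral_of_dominated_convergence bound
      (fun n => (Measurable.mul (by fun_prop) (hm n)).aestronglyMeasurable) hbound
      (fun n => Eventually.of_forall fun z => by simpa [norm_planeChar] using hle n z)
      (Eventually.of_forall fun z => (hlim z).const_mul _)
  have hFw : ∀ x, Tendsto (fun n => ENNReal.ofReal (polyWeight β x) * ‖planeFourier (Φs n) x‖ₑ)
      atTop (𝓝 (ENNReal.ofReal (polyWeight β x) * ‖planeFourier Φ x‖ₑ)) := fun x =>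
    ENNReal.Tendsto.const_mul (hF x).enorm (Or.inr ENNReal.ofReal_ne_top)
  calc fourierNorm β Φ
      = ∫⁻ x, liminf (fun n => ENNReal.ofReal (polyWeight β x) * ‖planeFourier (Φs n) x‖ₑ) atTop :=
        lintegral_congr fun x => (hFw x).liminf_eq.symm
    _ ≤ liminf (fun n => fourierNorm β (Φs n)) atTop :=
        lintegral_liminf_le fun n =>
          (measurable_polyWeight β).ennreal_ofReal.mul (measurable_planeFourier (hm n)).enorm
    _ ≤ A := (liminf_le_liminf (Eventually.of_forall hA)).trans_eq (by simp)

end PlaneFourier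

/-! ### Multipliers of the weighted Fourier norm -/

lemma norm_one_add_div_pow_le_exp (w : ℂ) {n : ℕ} (hn : n ≠ 0) :
    ‖(1 + w / n) ^ n‖ ≤ Real.exp ‖w‖ := by
  have hn' : (0 : ℝ) < n := by positivity
  calc ‖(1 + w / n) ^ n‖ ≤ (‖w‖ / n + 1) ^ n := by
        rw [norm_pow]
        gcongr
        exact (norm_add_le _ _).trans_eq (by simp [add_comm])
    _ ≤ Real.exp (‖w‖ / n) ^ n := by
        gcongr
        exact Real.add_one_le_exp _
    _ = Real.exp ‖w‖ := by rw [← Real.exp_nat_mul, mul_div_cancel₀ _ hn'.ne']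

/-- `m` is a bounded measurable function, multiplication by which increases `fourierNorm β` at
most by the factor `A`. -/
structure IsFourierMultiplier (β : ℝ) (m : ℝ × ℝ → ℂ) (A : ℝ≥0∞) : Prop where
  measurable : Measurable m
  bounded : ∃ B, ∀ z, ‖m z‖ ≤ B
  fourierNorm_mul_le : ∀ ⦃Φ : ℝ × ℝ → ℂ⦄, Measurable Φ → Integrable Φ →
    fourierNorm β (fun z => m z * Φ z) ≤ A * fourierNorm β Φ

namespace IsFourierMultiplier

variable {β : ℝ} {m m' : ℝ × ℝ → ℂ} {A A' : ℝ≥0∞}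

lemma integrable_mul (hm : IsFourierMultiplier β m A) {Φ : ℝ × ℝ → ℂ} (hΦ : Integrable Φ) :
    Integrable fun z => m z * Φ z :=
  let ⟨_, hB⟩ := hm.bounded
  hΦ.bdd_mul hm.measurable.aestronglyMeasurable (Eventually.of_forall hB)

lemma mono (hm : IsFourierMultiplier β m A) (h : A ≤ A') : IsFourierMultiplier β m A' where
  measurable := hm.measurable
  bounded := hm.bounded
  fourierNorm_mul_le _ hΦ hΦi := (hm.fourierNorm_mul_le hΦ hΦi).trans (by gcongr)

lemma const (c : ℂ) : IsFourierMultiplier β (fun _ => c) ‖c‖ₑ where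
  measurable := measurable_const
  bounded := ⟨‖c‖, fun _ => le_rfl⟩
  fourierNorm_mul_le _ hΦ _ := (fourierNorm_const_mul c hΦ).le

lemma planeChar (hβ : 0 ≤ β) (y : ℝ × ℝ) :
    IsFourierMultiplier β (planeChar y) (ENNReal.ofReal (polyWeight β y)) where
  measurable := measurable_planeChar measurable_const measurable_id
  bounded := ⟨1, fun z => (norm_planeChar y z).le⟩
  fourierNorm_mul_le _ hΦ _ := fourierNorm_planeChar_mul_le hβ hΦ y

lemma add (hm : IsFourierMultiplier β m A) (hm' : IsFourierMultiplier β m' A') :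
    IsFourierMultiplier β (fun z => m z + m' z) (A + A') where
  measurable := hm.measurable.add hm'.measurable
  bounded :=
    let ⟨B, hB⟩ := hm.bounded
    let ⟨B', hB'⟩ := hm'.bounded
    ⟨B + B', fun z => (norm_add_le _ _).trans (add_le_add (hB z) (hB' z))⟩
  fourierNorm_mul_le Φ hΦ hΦi := by
    simp only [add_mul]
    exact (fourierNorm_add_le (hm.measurable.mul hΦ) (hm.integrable_mul hΦi)
      (hm'.integrable_mul hΦi)).trans
        (add_le_add (hm.fourierNorm_mul_le hΦ hΦi) (hm'.fourierNorm_mul_le hΦ hΦi))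

lemma mul (hm : IsFourierMultiplier β m A) (hm' : IsFourierMultiplier β m' A') :
    IsFourierMultiplier β (fun z => m z * m' z) (A * A') where
  measurable := hm.measurable.mul hm'.measurable
  bounded :=
    let ⟨B, hB⟩ := hm.bounded
    let ⟨B', hB'⟩ := hm'.bounded
    ⟨B * B', fun z => (norm_mul _ _).trans_le
      (mul_le_mul (hB z) (hB' z) (norm_nonneg _) ((norm_nonneg _).trans (hB z)))⟩
  fourierNorm_mul_le Φ hΦ hΦi := by
    simp only [mul_assoc]
    exact (hm.fourierNorm_mul_le (hm'.measurable.mul hΦ) (hm'.integrable_mul hΦi)).trans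
      (by gcongr; exact hm'.fourierNorm_mul_le hΦ hΦi)

lemma pow (hm : IsFourierMultiplier β m A) :
    ∀ n : ℕ, IsFourierMultiplier β (fun z => m z ^ n) (A ^ n)
  | 0 => by simpa using const (β := β) 1
  | n + 1 => by simpa only [pow_succ] using (hm.pow n).mul hm

lemma integral {Y : Type*} [MeasurableSpace Y] {ρ : Measure Y} [IsFiniteMeasure ρ]
    {m : ℝ × ℝ → Y → ℂ} {A : Y → ℝ≥0∞} {B : ℝ} (hmeas : Measurable (Function.uncurry m))
    (hA : Measurable A) (hB : ∀ z p, ‖m z p‖ ≤ B)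
    (hm : ∀ p, IsFourierMultiplier β (fun z => m z p) (A p)) :
    IsFourierMultiplier β (fun z => ∫ p, m z p ∂ρ) (∫⁻ p, A p ∂ρ) where
  measurable := hmeas.stronglyMeasurable.integral_prod_right.measurable
  bounded := ⟨B * ρ.real univ, fun z =>
    norm_integral_le_of_norm_le_const (Eventually.of_forall (hB z))⟩
  fourierNorm_mul_le Φ hΦ hΦi := by
    simp only [← integral_mul_const]
    refine (fourierNorm_integral_le (hmeas.mul (hΦ.comp measurable_fst))
      ((hΦi.comp_fst ρ).bdd_mul hmeas.aestronglyMeasurable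
        (Eventually.of_forall fun q => hB q.1 q.2))).trans ?_
    rw [← lintegral_mul_const _ hA]
    exact lintegral_mono fun p => (hm p).fourierNorm_mul_le hΦ hΦi

lemma cos (hβ : 0 ≤ β) (y : ℝ × ℝ) :
    IsFourierMultiplier β (fun z => ((Real.cos (z.1 * y.1 + z.2 * y.2) : ℝ) : ℂ))
      (ENNReal.ofReal (polyWeight β y)) := by
  have hhalf : ‖(1 / 2 : ℂ)‖ₑ = ENNReal.ofReal (1 / 2) := by
    rw [← ofReal_norm]; norm_num
  convert (const (1 / 2 : ℂ)).mul ((planeChar hβ y).add (planeChar hβ (-y))) using 1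
  · ext z
    simp only [_root_.planeChar, Prod.fst_neg, Prod.snd_neg, Complex.ofReal_cos, Complex.cos]
    push_cast
    ring_nf
  · have hw := polyWeight_nonneg β y
    rw [polyWeight_neg, hhalf, ← ENNReal.ofReal_add hw hw, ← ENNReal.ofReal_mul (by norm_num)]
    congr 1
    ring

lemma one_add_div_pow {a : ℝ} (ha : 0 ≤ a) (hm : IsFourierMultiplier β m (ENNReal.ofReal a))
    {n : ℕ} (hn : n ≠ 0) :
    IsFourierMultiplier β (fun z => (1 + m z / n) ^ n) (ENNReal.ofReal (Real.exp a)) := by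
  have hn' : (0 : ℝ) < n := by positivity
  have hroot : IsFourierMultiplier β (fun z => 1 + m z / n)
      (ENNReal.ofReal (Real.exp (a / n))) := by
    have hsum := (const (β := β) 1).add ((const (β := β) ((n : ℂ)⁻¹)).mul hm)
    simp only [← div_eq_inv_mul] at hsum
    refine hsum.mono ?_
    rw [← ofReal_norm, ← ofReal_norm, ← ENNReal.ofReal_mul (norm_nonneg _),
      ← ENNReal.ofReal_add (norm_nonneg _) (by positivity)]
    refine ENNReal.ofReal_le_ofReal ?_
    rw [norm_one, norm_inv, Complex.norm_natCast, ← div_eq_inv_mul, add_comm]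
    exact Real.add_one_le_exp _
  refine (hroot.pow n).mono (le_of_eq ?_)
  rw [← ENNReal.ofReal_pow (Real.exp_nonneg _), ← Real.exp_nat_mul, mul_div_cancel₀ _ hn'.ne']

lemma exp {a : ℝ} (ha : 0 ≤ a) (hm : IsFourierMultiplier β m (ENNReal.ofReal a)) :
    IsFourierMultiplier β (fun z => Complex.exp (m z)) (ENNReal.ofReal (Real.exp a)) where
  measurable := hm.measurable.cexp
  bounded :=
    let ⟨B, hB⟩ := hm.bounded
    ⟨Real.exp B, fun z => (Complex.norm_exp_le_exp_norm _).trans (Real.exp_le_exp.2 (hB z))⟩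
  fourierNorm_mul_le Φ hΦ hΦi := by
    obtain ⟨B, hB⟩ := hm.bounded
    have hpow : ∀ n : ℕ, IsFourierMultiplier β (fun z => (1 + m z / ((n + 1 : ℕ) : ℂ)) ^ (n + 1))
        (ENNReal.ofReal (Real.exp a)) := fun n => one_add_div_pow ha hm n.succ_ne_zero
    refine fourierNorm_le_of_tendsto
      (Φs := fun n z => (1 + m z / ((n + 1 : ℕ) : ℂ)) ^ (n + 1) * Φ z)
      (fun n => (hpow n).measurable.mul hΦ) (hΦi.norm.const_mul (Real.exp B)) (fun n z => ?_)
      (fun z => Tendsto.mul_const _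
        ((Complex.tendsto_one_add_div_pow_exp (m z)).comp (tendsto_add_atTop_nat 1)))
      (fun n => (hpow n).fourierNorm_mul_le hΦ hΦi)
    rw [norm_mul]
    gcongr
    exact (norm_one_add_div_pow_le_exp _ n.succ_ne_zero).trans (Real.exp_le_exp.2 (hB z))

end IsFourierMultiplier

/-! ### Contour shifts and exponentially decaying Fourier transforms -/

/-- The exponential decay profile `(1 + |u|) e^{-c|u|}`, which absorbs one linear factor. -/
noncomputable def expDecay (c u : ℝ) : ℝ := (1 + |u|) * Real.exp (-c * |u|)

section ExpDecay

variable {c : ℝ}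

lemma expDecay_nonneg (c u : ℝ) : 0 ≤ expDecay c u := by
  unfold expDecay
  positivity

lemma continuous_expDecay (c : ℝ) : Continuous (expDecay c) := by
  unfold expDecay
  fun_prop

lemma expDecay_le (hc : 0 < c) (u : ℝ) :
    expDecay c u ≤ (1 + 2 / c) * Real.exp (-(c / 2) * |u|) := by
  have hexp : c / 2 * |u| + 1 ≤ Real.exp (c / 2 * |u|) := Real.add_one_le_exp _
  have hlin : 1 + |u| ≤ (1 + 2 / c) * Real.exp (c / 2 * |u|) :=
    calc 1 + |u| ≤ (1 + 2 / c) * (c / 2 * |u| + 1) := by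
          field_simp
          nlinarith [abs_nonneg u, mul_nonneg hc.le (abs_nonneg u),
            mul_nonneg (mul_nonneg hc.le hc.le) (abs_nonneg u)]
      _ ≤ (1 + 2 / c) * Real.exp (c / 2 * |u|) := by gcongr
  calc expDecay c u ≤ ((1 + 2 / c) * Real.exp (c / 2 * |u|)) * Real.exp (-c * |u|) := by
        unfold expDecay
        gcongr
    _ = (1 + 2 / c) * Real.exp (-(c / 2) * |u|) := by
        rw [mul_assoc, ← Real.exp_add]
        ring_nf

lemma integrable_exp_neg_mul_abs (hc : 0 < c) : Integrable fun u : ℝ => Real.exp (-c * |u|) :=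
  (integrable_fun_norm_addHaar volume (f := fun r => Real.exp (-c * r))).2
    (by simpa using integrableOn_exp_mul_Ioi (neg_lt_zero.2 hc) 0)

lemma integrable_expDecay (hc : 0 < c) : Integrable (expDecay c) :=
  ((integrable_exp_neg_mul_abs (half_pos hc)).const_mul (1 + 2 / c)).mono'
    (continuous_expDecay c).aestronglyMeasurable
    (Eventually.of_forall fun u =>
      (Real.norm_of_nonneg (expDecay_nonneg c u)).trans_le (expDecay_le hc u))

lemma tendsto_expDecay_cocompact (hc : 0 < c) : Tendsto (expDecay c) (cocompact ℝ) (𝓝 0) := by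
  have habs : Tendsto (fun u : ℝ => -(c / 2) * |u|) (cocompact ℝ) atBot :=
    (tendsto_norm_cocompact_atTop (E := ℝ)).const_mul_atTop_of_neg (by linarith)
  refine squeeze_zero (expDecay_nonneg c) (expDecay_le hc) ?_
  simpa using (Real.tendsto_exp_atBot.comp habs).const_mul (1 + 2 / c)

end ExpDecay

section ContourShift

variable {b : ℝ → ℝ} {D τ σ : ℝ}

lemma tendsto_intervalIntegral_vertical {G : ℂ → ℂ} {l : Filter ℝ} (hb : Tendsto b l (𝓝 0))
    (hGb : ∀ u τ : ℝ, |τ| ≤ 1 → ‖G (u + τ * Complex.I)‖ ≤ b u) (hτ : |τ| ≤ 1) :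
    Tendsto (fun T : ℝ => ∫ y in (0 : ℝ)..τ, G (T + y * Complex.I)) l (𝓝 0) := by
  have hy : ∀ y ∈ uIoc 0 τ, |y| ≤ 1 := fun y hy => by
    have := abs_sub_left_of_mem_uIcc (uIoc_subset_uIcc hy)
    simp only [sub_zero] at this
    exact this.trans hτ
  refine squeeze_zero_norm
    (fun T => intervalIntegral.norm_integral_le_of_norm_le_const fun y h => hGb T y (hy y h)) ?_
  simpa using hb.mul_const |τ - 0|

lemma integral_eq_integral_add_mul_I {G : ℂ → ℂ} (hG : Differentiable ℂ G) (hb : Integrable b)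
    (hb0 : Tendsto b (cocompact ℝ) (𝓝 0))
    (hGb : ∀ u τ : ℝ, |τ| ≤ 1 → ‖G (u + τ * Complex.I)‖ ≤ b u) (hτ : |τ| ≤ 1) :
    ∫ u : ℝ, G u = ∫ u : ℝ, G (u + τ * Complex.I) := by
  rw [cocompact_eq_atBot_atTop, tendsto_sup] at hb0
  have hhor : ∀ τ : ℝ, |τ| ≤ 1 →
      Tendsto (fun T : ℝ => ∫ u in (-T)..T, G (u + τ * Complex.I)) atTop
        (𝓝 (∫ u : ℝ, G (u + τ * Complex.I))) := fun τ hτ =>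
    intervalIntegral_tendsto_integral
      (hb.mono' (hG.continuous.comp (by fun_prop)).aestronglyMeasurable
        (Eventually.of_forall fun u => hGb u τ hτ))
      tendsto_neg_atTop_atBot tendsto_id
  have hright := tendsto_intervalIntegral_vertical hb0.2 hGb hτ
  have hleft := (tendsto_intervalIntegral_vertical hb0.1 hGb hτ).comp tendsto_neg_atTop_atBot
  have hrect : ∀ T : ℝ,
      (∫ u in (-T)..T, G (u + (0 : ℝ) * Complex.I)) - (∫ u in (-T)..T, G (u + τ * Complex.I))
        + Complex.I • (∫ y in (0 : ℝ)..τ, G (T + y * Complex.I))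
        - Complex.I • (∫ y in (0 : ℝ)..τ, G (((-T : ℝ) : ℂ) + y * Complex.I)) = 0 := fun T => by
    simpa using Complex.integral_boundary_rect_eq_zero_of_differentiableOn G ((-T : ℝ) : ℂ)
      (T + τ * Complex.I) hG.differentiableOn
  have hlim := ((((hhor 0 (by simp)).sub (hhor τ hτ)).add (hright.const_smul Complex.I)).sub
    (hleft.const_smul Complex.I)).congr hrect
  have hzero := tendsto_nhds_unique hlim tendsto_const_nhds
  simp only [Complex.ofReal_zero, zero_mul, add_zero, smul_zero, sub_zero] at hzero
  exact sub_eq_zero.1 hzero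

lemma integral_prod_eq_integral_prod_add_mul_I {H : ℂ → ℂ → ℂ}
    (hH₁ : ∀ w, Differentiable ℂ fun z => H z w) (hH₂ : ∀ z, Differentiable ℂ (H z))
    (hHm : Measurable (Function.uncurry H)) (hb : Integrable b)
    (hb0 : Tendsto b (cocompact ℝ) (𝓝 0))
    (hHb : ∀ u v τ σ : ℝ, |τ| ≤ 1 → |σ| ≤ 1 →
      ‖H (u + τ * Complex.I) (v + σ * Complex.I)‖ ≤ D * (b u * b v)) (hτ : |τ| ≤ 1) (hσ : |σ| ≤ 1) :
    ∫ x : ℝ × ℝ, H x.1 x.2 = ∫ x : ℝ × ℝ, H (x.1 + τ * Complex.I) (x.2 + σ * Complex.I) := by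
  have hint : ∀ τ σ : ℝ, |τ| ≤ 1 → |σ| ≤ 1 →
      Integrable fun x : ℝ × ℝ => H (x.1 + τ * Complex.I) (x.2 + σ * Complex.I) :=
    fun τ σ hτ hσ => ((hb.mul_prod hb).const_mul D).mono'
      (hHm.comp (by fun_prop : Measurable fun x : ℝ × ℝ =>
        ((x.1 : ℂ) + τ * Complex.I, (x.2 : ℂ) + σ * Complex.I))).aestronglyMeasurable
      (Eventually.of_forall fun x => hHb x.1 x.2 τ σ hτ hσ)
  have h00 := hint 0 0 (by simp) (by simp)
  have h0σ := hint 0 σ (by simp) hσ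
  simp only [Complex.ofReal_zero, zero_mul, add_zero] at h00 h0σ
  calc ∫ x : ℝ × ℝ, H x.1 x.2
      = ∫ u : ℝ, ∫ v : ℝ, H u v := integral_prod _ h00
    _ = ∫ u : ℝ, ∫ v : ℝ, H u (v + σ * Complex.I) := integral_congr_ae <|
        Eventually.of_forall fun u => integral_eq_integral_add_mul_I (hH₂ u)
          ((hb.const_mul (b u)).const_mul D)
          (by simpa using (hb0.const_mul (b u)).const_mul D)
          (fun v σ hσ => by simpa using hHb u v 0 σ (by simp) hσ) hσ
    _ = ∫ v : ℝ, ∫ u : ℝ, H u (v + σ * Complex.I) := integral_integral_swap h0σ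
    _ = ∫ v : ℝ, ∫ u : ℝ, H (u + τ * Complex.I) (v + σ * Complex.I) := integral_congr_ae <|
        Eventually.of_forall fun v => integral_eq_integral_add_mul_I
          (hH₁ (v + σ * Complex.I)) ((hb.mul_const (b v)).const_mul D)
          (by simpa using (hb0.mul_const (b v)).const_mul D) (fun u τ hτ => hHb u v τ σ hτ hσ) hτ
    _ = ∫ x : ℝ × ℝ, H (x.1 + τ * Complex.I) (x.2 + σ * Complex.I) :=
        (integral_prod_symm _ (hint τ σ hτ hσ)).symm

end ContourShift

section StripBound

variable {β c D : ℝ} {G : ℂ → ℂ → ℂ}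

lemma norm_cexp_neg_I_mul (a b u v τ σ : ℝ) :
    ‖Complex.exp (-(Complex.I * (a * (u + τ * Complex.I) + b * (v + σ * Complex.I))))‖
      = Real.exp (a * τ + b * σ) := by
  rw [Complex.norm_exp]
  simp

lemma mul_le_abs_of_abs_le_one (a : ℝ) {t : ℝ} (ht : |t| ≤ 1) : a * t ≤ |a| :=
  (le_abs_self _).trans (by rw [abs_mul]; exact mul_le_of_le_one_right (abs_nonneg a) ht)

lemma exists_abs_le_one_mul_eq_neg_abs (a : ℝ) : ∃ τ : ℝ, |τ| ≤ 1 ∧ a * τ = -|a| := by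
  rcases le_total 0 a with ha | ha
  · exact ⟨-1, by simp, by rw [abs_of_nonneg ha, mul_neg_one]⟩
  · exact ⟨1, by simp, by rw [abs_of_nonpos ha, mul_one, neg_neg]⟩

lemma norm_planeFourier_le_of_strip_bound (hc : 0 < c)
    (hG₁ : ∀ w, Differentiable ℂ fun z => G z w) (hG₂ : ∀ z, Differentiable ℂ (G z))
    (hGm : Measurable (Function.uncurry G))
    (hGb : ∀ u v τ σ : ℝ, |τ| ≤ 1 → |σ| ≤ 1 →
      ‖G (u + τ * Complex.I) (v + σ * Complex.I)‖ ≤ D * (expDecay c u * expDecay c v))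
    (x : ℝ × ℝ) :
    ‖planeFourier (fun z => G z.1 z.2) x‖
      ≤ D * (∫ u, expDecay c u) ^ 2 * (Real.exp (-|x.1|) * Real.exp (-|x.2|)) := by
  set H : ℂ → ℂ → ℂ := fun z w => Complex.exp (-(Complex.I * (x.1 * z + x.2 * w))) * G z w with hH
  have hHnorm : ∀ u v τ σ : ℝ, |τ| ≤ 1 → |σ| ≤ 1 →
      ‖H (u + τ * Complex.I) (v + σ * Complex.I)‖
        ≤ Real.exp (x.1 * τ + x.2 * σ) * (D * (expDecay c u * expDecay c v)) :=
    fun u v τ σ hτ hσ => by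
      rw [hH, norm_mul, norm_cexp_neg_I_mul]
      gcongr
      exact hGb u v τ σ hτ hσ
  have hHb : ∀ u v τ σ : ℝ, |τ| ≤ 1 → |σ| ≤ 1 → ‖H (u + τ * Complex.I) (v + σ * Complex.I)‖
      ≤ Real.exp (|x.1| + |x.2|) * D * (expDecay c u * expDecay c v) := fun u v τ σ hτ hσ => by
    have hD : 0 ≤ D * (expDecay c u * expDecay c v) := (norm_nonneg _).trans (hGb u v τ σ hτ hσ)
    refine (hHnorm u v τ σ hτ hσ).trans ?_
    rw [mul_assoc]
    gcongr
    exacts [mul_le_abs_of_abs_le_one _ hτ, mul_le_abs_of_abs_le_one _ hσ]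
  obtain ⟨τ, hτ, hxτ⟩ := exists_abs_le_one_mul_eq_neg_abs x.1
  obtain ⟨σ, hσ, hxσ⟩ := exists_abs_le_one_mul_eq_neg_abs x.2
  have hshift : planeFourier (fun z => G z.1 z.2) x
      = ∫ z : ℝ × ℝ, H (z.1 + τ * Complex.I) (z.2 + σ * Complex.I) := by
    rw [← integral_prod_eq_integral_prod_add_mul_I (fun w => by fun_prop) (fun z => by fun_prop)
      (by fun_prop) (integrable_expDecay hc) (tendsto_expDecay_cocompact hc) hHb hτ hσ]
    refine integral_congr_ae (Eventually.of_forall fun z => ?_)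
    simp only [hH, planeChar, Prod.fst_neg, Prod.snd_neg]
    push_cast
    ring_nf
  calc ‖planeFourier (fun z => G z.1 z.2) x‖
      ≤ ∫ z : ℝ × ℝ, Real.exp (-|x.1| + -|x.2|) * (D * (expDecay c z.1 * expDecay c z.2)) := by
        rw [hshift, ← hxτ, ← hxσ]
        exact norm_integral_le_of_norm_le
          ((((integrable_expDecay hc).mul_prod (integrable_expDecay hc)).const_mul D).const_mul _)
          (Eventually.of_forall fun z => hHnorm z.1 z.2 τ σ hτ hσ)
    _ = D * (∫ u, expDecay c u) ^ 2 * (Real.exp (-|x.1|) * Real.exp (-|x.2|)) := by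
        rw [integral_const_mul, integral_const_mul, Measure.volume_eq_prod, integral_prod_mul,
          Real.exp_add]
        ring

lemma polyWeight_mul_exp_neg_le (hβ : β ≤ 1) (x : ℝ × ℝ) :
    polyWeight β x * (Real.exp (-|x.1|) * Real.exp (-|x.2|)) ≤ expDecay 1 x.1 * expDecay 1 x.2 := by
  have hle : ∀ t : ℝ, (1 + |t|) ^ β ≤ 1 + |t| := fun t =>
    rpow_le_self_of_one_le (by linarith [abs_nonneg t]) hβ
  calc polyWeight β x * (Real.exp (-|x.1|) * Real.exp (-|x.2|))
      ≤ ((1 + |x.1|) * (1 + |x.2|)) * (Real.exp (-|x.1|) * Real.exp (-|x.2|)) := by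
        unfold polyWeight
        gcongr
        exacts [hle _, hle _]
    _ = expDecay 1 x.1 * expDecay 1 x.2 := by
        simp only [expDecay, neg_one_mul]
        ring

lemma fourierNorm_le_of_strip_bound (hβ : β ≤ 1) (hc : 0 < c)
    (hG₁ : ∀ w, Differentiable ℂ fun z => G z w) (hG₂ : ∀ z, Differentiable ℂ (G z))
    (hGm : Measurable (Function.uncurry G))
    (hGb : ∀ u v τ σ : ℝ, |τ| ≤ 1 → |σ| ≤ 1 →
      ‖G (u + τ * Complex.I) (v + σ * Complex.I)‖ ≤ D * (expDecay c u * expDecay c v)) :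
    fourierNorm β (fun z => G z.1 z.2)
      ≤ ENNReal.ofReal (D * (∫ u, expDecay c u) ^ 2 * (∫ u, expDecay 1 u) ^ 2) := by
  have hi := integrable_expDecay one_pos
  have hD : 0 ≤ D := by
    simpa [expDecay] using (norm_nonneg _).trans (hGb 0 0 0 0 (by simp) (by simp))
  calc fourierNorm β (fun z => G z.1 z.2)
      ≤ ∫⁻ x : ℝ × ℝ, ENNReal.ofReal
          (D * (∫ u, expDecay c u) ^ 2 * (expDecay 1 x.1 * expDecay 1 x.2)) := by
        refine lintegral_mono fun x => ?_
        rw [← ofReal_norm, ← ENNReal.ofReal_mul (polyWeight_nonneg _ _)]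
        refine ENNReal.ofReal_le_ofReal ?_
        have hx := norm_planeFourier_le_of_strip_bound hc hG₁ hG₂ hGm hGb x
        calc _ ≤ polyWeight β x * (D * (∫ u, expDecay c u) ^ 2
              * (Real.exp (-|x.1|) * Real.exp (-|x.2|))) :=
              mul_le_mul_of_nonneg_left hx (polyWeight_nonneg _ _)
          _ = D * (∫ u, expDecay c u) ^ 2
              * (polyWeight β x * (Real.exp (-|x.1|) * Real.exp (-|x.2|))) := by ring
          _ ≤ _ := mul_le_mul_of_nonneg_left (polyWeight_mul_exp_neg_le hβ x) (by positivity)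
    _ = ENNReal.ofReal (D * (∫ u, expDecay c u) ^ 2 * (∫ u, expDecay 1 u) ^ 2) := by
        rw [Measure.volume_eq_prod,
          ← ofReal_integral_eq_lintegral_ofReal ((hi.mul_prod hi).const_mul _)
          (Eventually.of_forall fun x => mul_nonneg (by positivity)
            (mul_nonneg (expDecay_nonneg _ _) (expDecay_nonneg _ _))), integral_const_mul,
          integral_prod_mul, sq (∫ u, expDecay 1 u)]

end StripBound

/-! ### Lévy exponents on the plane -/

/-- The `ℓ¹` norm on the plane. -/
noncomputable def l1Norm (x : ℝ × ℝ) : ℝ := |x.1| + |x.2|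

/-- The weight `min (|x|², |x|^{2β})` whose integrability controls a Lévy measure both near `0`
and, to order `2β`, near infinity. -/
noncomputable def levyWeight (β : ℝ) (x : ℝ × ℝ) : ℝ := min (l1Norm x ^ 2) (l1Norm x ^ (2 * β))

/-- The Lévy exponent `z ↦ ∫ (1 - cos ⟨z, x⟩) ν(dx)` of a measure with no Gaussian part. -/
noncomputable def levyExponent (ν : Measure (ℝ × ℝ)) (z : ℝ × ℝ) : ℝ :=
  ∫ x, (1 - Real.cos (z.1 * x.1 + z.2 * x.2)) ∂ν

/-- The extension of `levyExponent` to complex frequencies. -/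
noncomputable def complexLevyExponent (ν : Measure (ℝ × ℝ)) (z w : ℂ) : ℂ :=
  ∫ x, (1 - Complex.cos (z * (x.1 : ℂ) + w * (x.2 : ℂ))) ∂ν

/-- `s` is entire and grows at most linearly, with constant `M`, on the strip `|Im| ≤ 1`. -/
structure IsStripLinear (s : ℂ → ℂ) (M : ℝ) : Prop where
  differentiable : Differentiable ℂ s
  norm_le : ∀ u τ : ℝ, |τ| ≤ 1 → ‖s (u + τ * Complex.I)‖ ≤ M * (1 + |u|)

/-- Quantitative control of a Lévy measure: the total `levyWeight` is at most `C₀` and the Lévy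
exponent is at least `c|z| - C₁`. -/
structure HasLevyBounds (β c C₀ C₁ : ℝ) (ν : Measure (ℝ × ℝ)) : Prop where
  integrable : Integrable (levyWeight β) ν
  integral_le : ∫ x, levyWeight β x ∂ν ≤ C₀
  coercive : ∀ z, c * l1Norm z - C₁ ≤ levyExponent ν z

section Trigonometry

lemma norm_sin_le_mul_exp (ζ : ℂ) : ‖Complex.sin ζ‖ ≤ ‖ζ‖ * Real.exp ‖ζ‖ := by
  have hexp : ∀ w : ℂ, ‖Complex.exp w - 1‖ ≤ ‖w‖ * Real.exp ‖w‖ := fun w => by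
    simpa using Complex.norm_exp_sub_sum_le_norm_mul_exp w 1
  have hneg := hexp (-ζ * Complex.I)
  have hpos := hexp (ζ * Complex.I)
  have hsin : Complex.sin ζ = ((Complex.exp (-ζ * Complex.I) - 1)
      - (Complex.exp (ζ * Complex.I) - 1)) * Complex.I / 2 := by
    rw [Complex.sin]
    ring
  rw [hsin, norm_div, norm_mul, Complex.norm_I, Complex.norm_two, mul_one]
  simp only [norm_mul, norm_neg, Complex.norm_I, mul_one] at hneg hpos
  linarith [norm_sub_le (Complex.exp (-ζ * Complex.I) - 1) (Complex.exp (ζ * Complex.I) - 1)]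

lemma norm_one_sub_cos_le_sq_mul_exp (ζ : ℂ) :
    ‖1 - Complex.cos ζ‖ ≤ ‖ζ‖ ^ 2 * Real.exp ‖ζ‖ := by
  have hcos : 1 - Complex.cos ζ = 2 * Complex.sin (ζ / 2) ^ 2 := by
    have htwo := Complex.cos_two_mul (ζ / 2)
    rw [show 2 * (ζ / 2) = ζ by ring] at htwo
    rw [htwo]
    linear_combination (-2 : ℂ) * Complex.sin_sq_add_cos_sq (ζ / 2)
  have hhalf : ‖ζ / 2‖ = ‖ζ‖ / 2 := by simp
  calc ‖1 - Complex.cos ζ‖ = 2 * ‖Complex.sin (ζ / 2)‖ ^ 2 := by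
        rw [hcos, norm_mul, norm_pow, Complex.norm_two]
    _ ≤ 2 * (‖ζ‖ / 2 * Real.exp (‖ζ‖ / 2)) ^ 2 := by
        gcongr
        simpa only [hhalf] using norm_sin_le_mul_exp (ζ / 2)
    _ = ‖ζ‖ ^ 2 * Real.exp ‖ζ‖ / 2 := by
        rw [mul_pow, ← Real.exp_nat_mul]
        push_cast
        ring_nf
    _ ≤ ‖ζ‖ ^ 2 * Real.exp ‖ζ‖ := half_le_self (by positivity)

lemma one_sub_cos_sub_sq_le_re (a : ℝ) {b : ℝ} (hb : |b| ≤ 1) :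
    1 - Real.cos a - b ^ 2 ≤ (1 - Complex.cos (a + b * Complex.I)).re := by
  have hre : (1 - Complex.cos (a + b * Complex.I)).re = 1 - Real.cos a * Real.cosh b := by
    simp [Complex.cos_add_mul_I, Complex.cos_ofReal_re]
  have hcosh : Real.cosh b - 1 ≤ b ^ 2 := by
    have hpos := (abs_le.1 (Real.abs_exp_sub_one_sub_id_le hb)).2
    have hneg := (abs_le.1 (Real.abs_exp_sub_one_sub_id_le (x := -b) (by simpa using hb))).2
    rw [Real.cosh_eq]
    linarith
  rw [hre]
  nlinarith [Real.cos_le_one a, Real.one_le_cosh b]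

end Trigonometry

section LevyWeight

variable {β : ℝ}

lemma l1Norm_nonneg (x : ℝ × ℝ) : 0 ≤ l1Norm x := by
  unfold l1Norm
  positivity

@[fun_prop]
lemma measurable_l1Norm : Measurable l1Norm := by
  unfold l1Norm
  fun_prop

@[fun_prop]
lemma measurable_levyWeight (β : ℝ) : Measurable (levyWeight β) := by
  unfold levyWeight
  fun_prop

lemma levyWeight_nonneg (β : ℝ) (x : ℝ × ℝ) : 0 ≤ levyWeight β x :=
  le_min (sq_nonneg _) (rpow_nonneg (l1Norm_nonneg x) _)

lemma levyWeight_of_le_one (hβ0 : 0 < β) (hβ1 : β < 1) {x : ℝ × ℝ} (hx : l1Norm x ≤ 1) :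
    levyWeight β x = l1Norm x ^ 2 := by
  refine min_eq_left ?_
  rw [← rpow_natCast]
  exact rpow_le_rpow_of_exponent_ge' (l1Norm_nonneg x) hx (by positivity) (by push_cast; linarith)

lemma levyWeight_of_one_le (hβ1 : β < 1) {x : ℝ × ℝ} (hx : 1 ≤ l1Norm x) :
    levyWeight β x = l1Norm x ^ (2 * β) := by
  refine min_eq_right ?_
  rw [← rpow_natCast]
  exact rpow_le_rpow_of_exponent_le hx (by push_cast; linarith)

lemma one_le_levyWeight (hβ0 : 0 < β) {x : ℝ × ℝ} (hx : 1 ≤ l1Norm x) : 1 ≤ levyWeight β x :=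
  le_min (one_le_pow₀ hx) (one_le_rpow hx (by positivity))

lemma polyWeight_le_levyWeight (hβ0 : 0 < β) (hβ1 : β < 1) {x : ℝ × ℝ} (hx : 1 ≤ l1Norm x) :
    polyWeight β x ≤ 4 * levyWeight β x := by
  have hr := l1Norm_nonneg x
  have h₁ : 1 + |x.1| ≤ 2 * l1Norm x := by
    unfold l1Norm at *
    linarith [abs_nonneg x.2]
  have h₂ : 1 + |x.2| ≤ 2 * l1Norm x := by
    unfold l1Norm at *
    linarith [abs_nonneg x.1]
  calc polyWeight β x ≤ (2 * l1Norm x) ^ β * (2 * l1Norm x) ^ β := by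
        unfold polyWeight
        gcongr
    _ = 2 ^ (2 * β) * l1Norm x ^ (2 * β) := by
        rw [← rpow_add (by linarith), ← two_mul, mul_rpow zero_le_two hr]
    _ ≤ 2 ^ (2 : ℝ) * l1Norm x ^ (2 * β) := by
        gcongr
        exacts [one_le_two, by linarith]
    _ = 4 * levyWeight β x := by
        rw [levyWeight_of_one_le hβ1 hx]
        norm_num

lemma norm_add_mul_le_l1Norm (z w : ℂ) (x : ℝ × ℝ) :
    ‖z * (x.1 : ℂ) + w * (x.2 : ℂ)‖ ≤ (‖z‖ + ‖w‖) * l1Norm x := by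
  refine (norm_add_le _ _).trans ?_
  simp only [norm_mul, l1Norm, Complex.norm_real, Real.norm_eq_abs]
  nlinarith [mul_nonneg (norm_nonneg z) (abs_nonneg x.2),
    mul_nonneg (norm_nonneg w) (abs_nonneg x.1)]

lemma abs_add_mul_le_l1Norm (u v : ℝ) (x : ℝ × ℝ) :
    |u * x.1 + v * x.2| ≤ (|u| + |v|) * l1Norm x := by
  refine (abs_add_le _ _).trans ?_
  simp only [abs_mul, l1Norm]
  nlinarith [mul_nonneg (abs_nonneg u) (abs_nonneg x.2), mul_nonneg (abs_nonneg v) (abs_nonneg x.1)]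

lemma one_sub_cos_le_levyWeight (hβ0 : 0 < β) (hβ1 : β < 1) (z x : ℝ × ℝ) :
    1 - Real.cos (z.1 * x.1 + z.2 * x.2) ≤ (2 + l1Norm z ^ 2) * levyWeight β x := by
  rcases le_total (l1Norm x) 1 with hx | hx
  · rw [levyWeight_of_le_one hβ0 hβ1 hx]
    have hcos := Real.one_sub_sq_div_two_le_cos (x := z.1 * x.1 + z.2 * x.2)
    have hsq : (z.1 * x.1 + z.2 * x.2) ^ 2 ≤ (l1Norm z * l1Norm x) ^ 2 := by
      rw [← sq_abs]
      gcongr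
      exact abs_add_mul_le_l1Norm z.1 z.2 x
    nlinarith [sq_nonneg (l1Norm x), sq_nonneg (l1Norm z * l1Norm x)]
  · have hone := one_le_levyWeight hβ0 hx
    nlinarith [Real.neg_one_le_cos (z.1 * x.1 + z.2 * x.2), sq_nonneg (l1Norm z),
      mul_nonneg (sq_nonneg (l1Norm z)) (levyWeight_nonneg β x)]

lemma integrable_one_sub_cos (hβ0 : 0 < β) (hβ1 : β < 1) {ν : Measure (ℝ × ℝ)}
    (hν : Integrable (levyWeight β) ν) (z : ℝ × ℝ) :
    Integrable (fun x : ℝ × ℝ => 1 - Real.cos (z.1 * x.1 + z.2 * x.2)) ν := by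
  refine (hν.const_mul (2 + l1Norm z ^ 2)).mono' (Measurable.aestronglyMeasurable (by fun_prop))
    (Eventually.of_forall fun x => ?_)
  rw [Real.norm_of_nonneg (sub_nonneg.2 (Real.cos_le_one _))]
  exact one_sub_cos_le_levyWeight hβ0 hβ1 z x

@[fun_prop]
lemma measurable_levyExponent (ν : Measure (ℝ × ℝ)) [SFinite ν] : Measurable (levyExponent ν) :=
  (StronglyMeasurable.integral_prod_right' (f := fun y : (ℝ × ℝ) × (ℝ × ℝ) =>
    1 - Real.cos (y.1.1 * y.2.1 + y.1.2 * y.2.2))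
    (Measurable.stronglyMeasurable (by fun_prop))).measurable

end LevyWeight

section SmallJumps

variable {β : ℝ} {ν : Measure (ℝ × ℝ)}

lemma complexLevyExponent_ofReal (ν : Measure (ℝ × ℝ)) (u v : ℝ) :
    complexLevyExponent ν u v = ((levyExponent ν (u, v) : ℝ) : ℂ) := by
  simp only [complexLevyExponent, levyExponent]
  rw [← integral_complex_ofReal]
  push_cast
  rfl

lemma measurable_complexLevyExponent (ν : Measure (ℝ × ℝ)) [SFinite ν] :
    Measurable (Function.uncurry (complexLevyExponent ν)) :=
  (StronglyMeasurable.integral_prod_right' (f := fun y : (ℂ × ℂ) × (ℝ × ℝ) =>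
    1 - Complex.cos (y.1.1 * (y.2.1 : ℂ) + y.1.2 * (y.2.2 : ℂ)))
    (Measurable.stronglyMeasurable (by fun_prop))).measurable

lemma norm_one_sub_cos_le_of_norm_le {ζ : ℂ} {R r : ℝ} (hR : 0 ≤ R) (hr : r ≤ 1)
    (hζ : ‖ζ‖ ≤ R * r) : ‖1 - Complex.cos ζ‖ ≤ R ^ 2 * Real.exp R * r ^ 2 := by
  have hζR : ‖ζ‖ ≤ R := hζ.trans (mul_le_of_le_one_right hR hr)
  calc ‖1 - Complex.cos ζ‖ ≤ ‖ζ‖ ^ 2 * Real.exp ‖ζ‖ := norm_one_sub_cos_le_sq_mul_exp ζ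
    _ ≤ (R * r) ^ 2 * Real.exp R := by gcongr
    _ = R ^ 2 * Real.exp R * r ^ 2 := by ring

lemma integrable_one_sub_cos_of_small (hs : ∀ᵐ x ∂ν, l1Norm x ≤ 1)
    (hi : Integrable (fun x => l1Norm x ^ 2) ν) {R : ℝ} (hR : 0 ≤ R) {ζ : ℝ × ℝ → ℂ}
    (hζm : Measurable ζ) (hζ : ∀ x, ‖ζ x‖ ≤ R * l1Norm x) :
    Integrable (fun x => 1 - Complex.cos (ζ x)) ν :=
  (hi.const_mul (R ^ 2 * Real.exp R)).mono' (Measurable.aestronglyMeasurable (by fun_prop))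
    (hs.mono fun x hx => norm_one_sub_cos_le_of_norm_le hR hx (hζ x))

lemma differentiable_integral_one_sub_cos (hs : ∀ᵐ x ∂ν, l1Norm x ≤ 1)
    (hi : Integrable (fun x => l1Norm x ^ 2) ν) {p q : ℝ × ℝ → ℂ} (hp : Measurable p)
    (hq : Measurable q) {Q : ℝ} (hQ : 0 ≤ Q) (hpn : ∀ x, ‖p x‖ ≤ l1Norm x)
    (hqn : ∀ x, ‖q x‖ ≤ Q * l1Norm x) :
    Differentiable ℂ fun t : ℂ => ∫ x, (1 - Complex.cos (t * p x + q x)) ∂ν := by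
  intro t₀
  have hζ : ∀ t x, ‖t * p x + q x‖ ≤ (‖t‖ + Q) * l1Norm x := fun t x => by
    refine (norm_add_le _ _).trans ?_
    rw [norm_mul, add_mul]
    gcongr
    exacts [hpn x, hqn x]
  set R := ‖t₀‖ + 1 + Q
  have hR : 0 ≤ R := by positivity
  refine (hasDerivAt_integral_of_dominated_loc_of_deriv_le (𝕜 := ℂ) (μ := ν)
    (F' := fun t x => Complex.sin (t * p x + q x) * p x)
    (bound := fun x => R * Real.exp R * l1Norm x ^ 2) (Metric.ball_mem_nhds t₀ one_pos)
    (Eventually.of_forall fun t => Measurable.aestronglyMeasurable (by fun_prop))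
    (integrable_one_sub_cos_of_small hs hi (by positivity) (by fun_prop) (hζ t₀))
    (Measurable.aestronglyMeasurable (by fun_prop)) ?_ (hi.const_mul _)
    (Eventually.of_forall fun x t _ => ?_)).2.differentiableAt
  · filter_upwards [hs] with x hx t ht
    have ht' : ‖t‖ ≤ ‖t₀‖ + 1 := by
      have := mem_ball_iff_norm.1 ht
      linarith [norm_le_norm_add_norm_sub' t t₀]
    have hr := l1Norm_nonneg x
    have hζr : ‖t * p x + q x‖ ≤ R * l1Norm x :=
      (hζ t x).trans (mul_le_mul_of_nonneg_right (by linarith) hr)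
    have hζR : ‖t * p x + q x‖ ≤ R := hζr.trans (mul_le_of_le_one_right hR hx)
    calc ‖Complex.sin (t * p x + q x) * p x‖
        ≤ (‖t * p x + q x‖ * Real.exp ‖t * p x + q x‖) * l1Norm x := by
          rw [norm_mul]
          gcongr
          exacts [norm_sin_le_mul_exp _, hpn x]
      _ ≤ (R * l1Norm x * Real.exp R) * l1Norm x := by gcongr
      _ = R * Real.exp R * l1Norm x ^ 2 := by ring
  · have hlin : HasDerivAt (fun t : ℂ => t * p x + q x) (p x) t := by
      simpa using ((hasDerivAt_id t).mul_const (p x)).add_const (q x)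
    simpa using hlin.ccos.const_sub 1

lemma differentiable_complexLevyExponent_left (hs : ∀ᵐ x ∂ν, l1Norm x ≤ 1)
    (hi : Integrable (fun x => l1Norm x ^ 2) ν) (w : ℂ) :
    Differentiable ℂ fun z => complexLevyExponent ν z w :=
  differentiable_integral_one_sub_cos hs hi (p := fun x => (x.1 : ℂ)) (q := fun x => w * (x.2 : ℂ))
    (by fun_prop) (by fun_prop) (norm_nonneg w) (fun x => by simp [l1Norm])
    (fun x => by simpa using norm_add_mul_le_l1Norm 0 w x)

lemma differentiable_complexLevyExponent_right (hs : ∀ᵐ x ∂ν, l1Norm x ≤ 1)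
    (hi : Integrable (fun x => l1Norm x ^ 2) ν) (z : ℂ) :
    Differentiable ℂ (complexLevyExponent ν z) := by
  have hd := differentiable_integral_one_sub_cos hs hi (p := fun x => (x.2 : ℂ))
    (q := fun x => z * (x.1 : ℂ)) (by fun_prop) (by fun_prop) (norm_nonneg z)
    (fun x => by simp [l1Norm]) (fun x => by simpa using norm_add_mul_le_l1Norm z 0 x)
  simp only [add_comm _ (z * _)] at hd
  exact hd

lemma levyExponent_sub_le_re (hs : ∀ᵐ x ∂ν, l1Norm x ≤ 1)
    (hi : Integrable (fun x => l1Norm x ^ 2) ν) (u v : ℝ) {τ σ : ℝ} (hτ : |τ| ≤ 1)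
    (hσ : |σ| ≤ 1) :
    levyExponent ν (u, v) - ∫ x, l1Norm x ^ 2 ∂ν
      ≤ (complexLevyExponent ν (u + τ * Complex.I) (v + σ * Complex.I)).re := by
  have hint : ∀ z w : ℂ, Integrable
      (fun x : ℝ × ℝ => 1 - Complex.cos (z * (x.1 : ℂ) + w * (x.2 : ℂ))) ν := fun z w =>
    integrable_one_sub_cos_of_small hs hi (by positivity) (by fun_prop) (norm_add_mul_le_l1Norm z w)
  have hreal : Integrable (fun x : ℝ × ℝ => 1 - Real.cos (u * x.1 + v * x.2)) ν := by
    refine (hint u v).re.congr (Eventually.of_forall fun x => ?_)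
    change (1 - Complex.cos (u * (x.1 : ℂ) + v * (x.2 : ℂ))).re = _
    norm_cast
  have hcomplex := hint (u + τ * Complex.I) (v + σ * Complex.I)
  have hre : (complexLevyExponent ν (u + τ * Complex.I) (v + σ * Complex.I)).re = _ :=
    (integral_re hcomplex).symm
  rw [hre, levyExponent, ← integral_sub hreal hi]
  refine integral_mono_ae (hreal.sub hi) hcomplex.re ?_
  filter_upwards [hs] with x hx
  have hsplit : (u + τ * Complex.I) * (x.1 : ℂ) + (v + σ * Complex.I) * (x.2 : ℂ)
      = ((u * x.1 + v * x.2 : ℝ) : ℂ) + ((τ * x.1 + σ * x.2 : ℝ) : ℂ) * Complex.I := by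
    push_cast
    ring
  have hb : |τ * x.1 + σ * x.2| ≤ l1Norm x := by
    refine (abs_add_le _ _).trans (add_le_add ?_ ?_) <;> rw [abs_mul]
    exacts [mul_le_of_le_one_left (abs_nonneg _) hτ, mul_le_of_le_one_left (abs_nonneg _) hσ]
  have hre := one_sub_cos_sub_sq_le_re (u * x.1 + v * x.2) (hb.trans hx)
  have hb2 : (τ * x.1 + σ * x.2) ^ 2 ≤ l1Norm x ^ 2 := by
    rw [← sq_abs]
    gcongr
  rw [hsplit]
  exact (sub_le_sub_left hb2 _).trans hre

end SmallJumps

/-- The constant in the weighted Fourier bound for `exp (-levyExponent ν)` under `HasLevyBounds`. -/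
noncomputable def levyConst (c C₀ C₁ : ℝ) : ℝ :=
  Real.exp (11 * C₀ + C₁) * (∫ u, expDecay c u) ^ 2 * (∫ u, expDecay 1 u) ^ 2

section BaseBound

variable {β c C₀ C₁ M₁ M₂ : ℝ} {ν : Measure (ℝ × ℝ)} {s₁ s₂ : ℂ → ℂ}

lemma levyConst_nonneg (c C₀ C₁ : ℝ) : 0 ≤ levyConst c C₀ C₁ := by
  unfold levyConst
  positivity

lemma IsStripLinear.const_nonneg {s : ℂ → ℂ} {M : ℝ} (hs : IsStripLinear s M) : 0 ≤ M := by
  simpa using (norm_nonneg _).trans (hs.norm_le 0 0 (by simp))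

lemma one_add_abs_mul_exp_neg_le {C Ψ : ℝ} {z : ℝ × ℝ} (h : c * l1Norm z - C ≤ Ψ) :
    (1 + |z.1|) * (1 + |z.2|) * Real.exp (-Ψ)
      ≤ Real.exp C * (expDecay c z.1 * expDecay c z.2) :=
  calc _ ≤ (1 + |z.1|) * (1 + |z.2|) * Real.exp (C + (-c * |z.1| + -c * |z.2|)) := by
        rw [l1Norm] at h
        gcongr
        linarith
    _ = _ := by
        rw [Real.exp_add, Real.exp_add, expDecay, expDecay]
        ring

lemma norm_mul_exp_neg_complexLevyExponent_le (hs : ∀ᵐ x ∂ν, l1Norm x ≤ 1)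
    (hi : Integrable (fun x => l1Norm x ^ 2) ν) (hC₀ : ∫ x, l1Norm x ^ 2 ∂ν ≤ C₀)
    (hlow : ∀ z, c * l1Norm z - C₁ ≤ levyExponent ν z) (h₁ : IsStripLinear s₁ M₁)
    (h₂ : IsStripLinear s₂ M₂) (u v : ℝ) {τ σ : ℝ} (hτ : |τ| ≤ 1) (hσ : |σ| ≤ 1) :
    ‖s₁ (u + τ * Complex.I) * s₂ (v + σ * Complex.I)
        * Complex.exp (-complexLevyExponent ν (u + τ * Complex.I) (v + σ * Complex.I))‖
      ≤ M₁ * M₂ * Real.exp (C₀ + C₁) * (expDecay c u * expDecay c v) := by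
  have hM₁ := h₁.const_nonneg
  have hM₂ := h₂.const_nonneg
  have hre : c * l1Norm (u, v) - (C₀ + C₁)
      ≤ (complexLevyExponent ν (u + τ * Complex.I) (v + σ * Complex.I)).re := by
    linarith [hlow (u, v), levyExponent_sub_le_re hs hi u v hτ hσ]
  have hexp := one_add_abs_mul_exp_neg_le hre
  rw [norm_mul, norm_mul, Complex.norm_exp, Complex.neg_re]
  refine (mul_le_mul_of_nonneg_right (mul_le_mul (h₁.norm_le u τ hτ) (h₂.norm_le v σ hσ)
    (norm_nonneg _) (by positivity)) (Real.exp_pos _).le).trans ?_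
  linear_combination (M₁ * M₂) * hexp

lemma integrable_mul_exp_neg_levyExponent [SFinite ν] (hc : 0 < c)
    (hlow : ∀ z, c * l1Norm z - C₁ ≤ levyExponent ν z) (h₁ : IsStripLinear s₁ M₁)
    (h₂ : IsStripLinear s₂ M₂) :
    Integrable fun z : ℝ × ℝ => s₁ z.1 * s₂ z.2 * Complex.exp (-(levyExponent ν z : ℂ)) := by
  have hm₁ := h₁.differentiable.continuous.measurable
  have hm₂ := h₂.differentiable.continuous.measurable
  have hM₁ := h₁.const_nonneg
  have hM₂ := h₂.const_nonneg
  refine (((integrable_expDecay hc).mul_prod (integrable_expDecay hc)).const_mul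
    (M₁ * M₂ * Real.exp C₁)).mono' (Measurable.aestronglyMeasurable (by fun_prop))
    (Eventually.of_forall fun z => ?_)
  have hexp := one_add_abs_mul_exp_neg_le (hlow z)
  have hz₁ : ‖s₁ z.1‖ ≤ M₁ * (1 + |z.1|) := by simpa using h₁.norm_le z.1 0 (by simp)
  have hz₂ : ‖s₂ z.2‖ ≤ M₂ * (1 + |z.2|) := by simpa using h₂.norm_le z.2 0 (by simp)
  rw [norm_mul, norm_mul, Complex.norm_exp, ← Complex.ofReal_neg, Complex.ofReal_re]
  refine (mul_le_mul_of_nonneg_right (mul_le_mul hz₁ hz₂ (norm_nonneg _) (by positivity))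
    (Real.exp_pos _).le).trans ?_
  linear_combination (M₁ * M₂) * hexp

lemma fourierNorm_mul_exp_neg_levyExponent_le_of_small [SFinite ν] (hβ : β ≤ 1) (hc : 0 < c)
    (hs : ∀ᵐ x ∂ν, l1Norm x ≤ 1) (hi : Integrable (fun x => l1Norm x ^ 2) ν)
    (hC₀ : ∫ x, l1Norm x ^ 2 ∂ν ≤ C₀) (hlow : ∀ z, c * l1Norm z - C₁ ≤ levyExponent ν z)
    (h₁ : IsStripLinear s₁ M₁) (h₂ : IsStripLinear s₂ M₂) :
    fourierNorm β (fun z => s₁ z.1 * s₂ z.2 * Complex.exp (-(levyExponent ν z : ℂ)))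
      ≤ ENNReal.ofReal (M₁ * M₂ * Real.exp (C₀ + C₁)
          * (∫ u, expDecay c u) ^ 2 * (∫ u, expDecay 1 u) ^ 2) := by
  have hd₁ := h₁.differentiable
  have hd₂ := h₂.differentiable
  have hm₁ := hd₁.continuous.measurable
  have hm₂ := hd₂.continuous.measurable
  have hψ : Measurable fun p : ℂ × ℂ => complexLevyExponent ν p.1 p.2 :=
    measurable_complexLevyExponent ν
  have hbound := fourierNorm_le_of_strip_bound hβ hc
    (G := fun z w => s₁ z * s₂ w * Complex.exp (-complexLevyExponent ν z w))
    (fun w => (hd₁.mul_const _).mul (differentiable_complexLevyExponent_left hs hi w).neg.cexp)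
    (fun z => (hd₂.const_mul _).mul (differentiable_complexLevyExponent_right hs hi z).neg.cexp)
    (by unfold Function.uncurry; fun_prop)
    (fun u v τ σ hτ hσ => norm_mul_exp_neg_complexLevyExponent_le hs hi hC₀ hlow h₁ h₂ u v hτ hσ)
  simpa only [complexLevyExponent_ofReal] using hbound

lemma isFourierMultiplier_exp_neg_levyExponent [IsFiniteMeasure ν] (hβ : 0 ≤ β)
    (hi : Integrable (polyWeight β) ν) :
    IsFourierMultiplier β (fun z => Complex.exp (-(levyExponent ν z : ℂ)))
      (ENNReal.ofReal (Real.exp (2 * ∫ x, polyWeight β x ∂ν))) := by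
  have hsummand : ∀ x : ℝ × ℝ, IsFourierMultiplier β
      (fun z => ((Real.cos (z.1 * x.1 + z.2 * x.2) : ℝ) : ℂ) + (-1))
      (ENNReal.ofReal (2 * polyWeight β x)) := fun x => by
    refine ((IsFourierMultiplier.cos hβ x).add (.const (-1))).mono ?_
    rw [enorm_neg, enorm_one, ← ENNReal.ofReal_one, ← ENNReal.ofReal_add (polyWeight_nonneg _ _)
      zero_le_one]
    exact ENNReal.ofReal_le_ofReal (by linarith [one_le_polyWeight hβ x])
  have hint := IsFourierMultiplier.integral (ρ := ν) (B := 2)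
    (m := fun z x => ((Real.cos (z.1 * x.1 + z.2 * x.2) : ℝ) : ℂ) + (-1))
    (by unfold Function.uncurry; fun_prop) (by fun_prop) (fun z x => by
      norm_cast
      rw [Real.norm_eq_abs]
      exact abs_le.2 ⟨by push_cast; linarith [Real.neg_one_le_cos (z.1 * x.1 + z.2 * x.2)],
        by push_cast; linarith [Real.cos_le_one (z.1 * x.1 + z.2 * x.2)]⟩) hsummand
  rw [← ofReal_integral_eq_lintegral_ofReal (hi.const_mul 2)
    (Eventually.of_forall fun x => mul_nonneg zero_le_two (polyWeight_nonneg β x)),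
    integral_const_mul] at hint
  have hlevy : ∀ z, ∫ x : ℝ × ℝ, (((Real.cos (z.1 * x.1 + z.2 * x.2) : ℝ) : ℂ) + (-1)) ∂ν
      = -(levyExponent ν z : ℂ) := fun z => by
    rw [levyExponent, ← integral_complex_ofReal, ← integral_neg]
    congr with x
    push_cast
    ring
  simp only [hlevy] at hint
  exact hint.exp (mul_nonneg zero_le_two (integral_nonneg (polyWeight_nonneg β)))

end BaseBound

lemma measurableSet_l1Norm_le_one : MeasurableSet {x | l1Norm x ≤ 1} :=
  measurableSet_le measurable_l1Norm measurable_const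

lemma measurableSet_one_lt_l1Norm : MeasurableSet {x | 1 < l1Norm x} :=
  measurableSet_lt measurable_const measurable_l1Norm

namespace HasLevyBounds

variable {β c C₀ C₁ : ℝ} {ν : Measure (ℝ × ℝ)}

lemma integrable_sq_restrict (hβ0 : 0 < β) (hβ1 : β < 1) (hν : HasLevyBounds β c C₀ C₁ ν) :
    Integrable (fun x => l1Norm x ^ 2) (ν.restrict {x | l1Norm x ≤ 1}) :=
  hν.integrable.restrict.congr <| (ae_restrict_mem measurableSet_l1Norm_le_one).mono
    fun _ hx => levyWeight_of_le_one hβ0 hβ1 hx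

lemma setIntegral_levyWeight_le (hν : HasLevyBounds β c C₀ C₁ ν) (E : Set (ℝ × ℝ)) :
    ∫ x in E, levyWeight β x ∂ν ≤ C₀ :=
  (setIntegral_le_integral hν.integrable
    (Eventually.of_forall (levyWeight_nonneg β))).trans hν.integral_le

lemma setIntegral_sq_le (hβ0 : 0 < β) (hβ1 : β < 1) (hν : HasLevyBounds β c C₀ C₁ ν) :
    ∫ x in {x | l1Norm x ≤ 1}, l1Norm x ^ 2 ∂ν ≤ C₀ :=
  (setIntegral_congr_fun measurableSet_l1Norm_le_one
    fun _ hx => (levyWeight_of_le_one hβ0 hβ1 hx).symm).trans_le (hν.setIntegral_levyWeight_le _)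

lemma isFiniteMeasure_restrict (hβ0 : 0 < β) (hν : HasLevyBounds β c C₀ C₁ ν) :
    IsFiniteMeasure (ν.restrict {x | 1 < l1Norm x}) := by
  refine ⟨?_⟩
  rw [Measure.restrict_apply_univ]
  refine (measure_mono fun x (hx : 1 < l1Norm x) => ?_).trans_lt
    (hν.integrable.measure_ge_lt_top one_pos)
  exact one_le_levyWeight hβ0 hx.le

lemma integrable_polyWeight_restrict (hβ0 : 0 < β) (hβ1 : β < 1)
    (hν : HasLevyBounds β c C₀ C₁ ν) :
    Integrable (polyWeight β) (ν.restrict {x | 1 < l1Norm x}) :=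
  (hν.integrable.restrict.const_mul 4).mono' (by fun_prop) <|
    (ae_restrict_mem measurableSet_one_lt_l1Norm).mono fun x hx => by
      rw [Real.norm_of_nonneg (polyWeight_nonneg β x)]
      exact polyWeight_le_levyWeight hβ0 hβ1 (le_of_lt hx)

lemma setIntegral_polyWeight_le (hβ0 : 0 < β) (hβ1 : β < 1) (hν : HasLevyBounds β c C₀ C₁ ν) :
    ∫ x in {x | 1 < l1Norm x}, polyWeight β x ∂ν ≤ 4 * C₀ :=
  calc _ ≤ ∫ x in {x | 1 < l1Norm x}, 4 * levyWeight β x ∂ν :=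
        setIntegral_mono_on (hν.integrable_polyWeight_restrict hβ0 hβ1)
          (hν.integrable.restrict.const_mul 4) measurableSet_one_lt_l1Norm
          fun _ hx => polyWeight_le_levyWeight hβ0 hβ1 (le_of_lt hx)
    _ ≤ 4 * C₀ := by
        rw [integral_const_mul]
        gcongr
        exact hν.setIntegral_levyWeight_le _

lemma levyExponent_restrict_le (hβ0 : 0 < β) (hβ1 : β < 1) (hν : HasLevyBounds β c C₀ C₁ ν)
    (z : ℝ × ℝ) : levyExponent (ν.restrict {x | 1 < l1Norm x}) z ≤ 2 * C₀ :=
  calc _ ≤ ∫ x in {x | 1 < l1Norm x}, 2 * levyWeight β x ∂ν :=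
        setIntegral_mono_on (integrable_one_sub_cos hβ0 hβ1 hν.integrable.restrict z)
          (hν.integrable.restrict.const_mul 2) measurableSet_one_lt_l1Norm
          fun x hx => by
            linarith [Real.neg_one_le_cos (z.1 * x.1 + z.2 * x.2),
              one_le_levyWeight hβ0 (le_of_lt hx)]
    _ ≤ 2 * C₀ := by
        rw [integral_const_mul]
        gcongr
        exact hν.setIntegral_levyWeight_le _

lemma levyExponent_restrict_add (hβ0 : 0 < β) (hβ1 : β < 1) (hν : HasLevyBounds β c C₀ C₁ ν)
    (z : ℝ × ℝ) :
    levyExponent (ν.restrict {x | l1Norm x ≤ 1}) z + levyExponent (ν.restrict {x | 1 < l1Norm x}) z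
      = levyExponent ν z := by
  have hcompl : {x | 1 < l1Norm x} = {x | l1Norm x ≤ 1}ᶜ := by
    ext
    simp
  rw [hcompl]
  exact integral_add_compl measurableSet_l1Norm_le_one
    (integrable_one_sub_cos hβ0 hβ1 hν.integrable z)

-- Small jumps give an entire exponent, handled by shifting contours; the large jumps, being of
-- finite mass, give a Fourier multiplier.
theorem fourierNorm_mul_exp_neg_le [SFinite ν] (hβ0 : 0 < β) (hβ1 : β < 1) (hc : 0 < c)
    (hν : HasLevyBounds β c C₀ C₁ ν) {s₁ s₂ : ℂ → ℂ} {M₁ M₂ : ℝ} (h₁ : IsStripLinear s₁ M₁)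
    (h₂ : IsStripLinear s₂ M₂) :
    fourierNorm β (fun z => s₁ z.1 * s₂ z.2 * Complex.exp (-(levyExponent ν z : ℂ)))
      ≤ ENNReal.ofReal (M₁ * M₂ * levyConst c C₀ C₁) := by
  set νs := ν.restrict {x | l1Norm x ≤ 1}
  set νl := ν.restrict {x | 1 < l1Norm x}
  have hs : ∀ᵐ x ∂νs, l1Norm x ≤ 1 := ae_restrict_mem measurableSet_l1Norm_le_one
  have hi := hν.integrable_sq_restrict hβ0 hβ1
  have hC₀ := hν.setIntegral_sq_le hβ0 hβ1
  have hlow : ∀ z, c * l1Norm z - (C₁ + 2 * C₀) ≤ levyExponent νs z := fun z => by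
    linarith [hν.coercive z, hν.levyExponent_restrict_le hβ0 hβ1 z,
      hν.levyExponent_restrict_add hβ0 hβ1 z]
  have hfin : IsFiniteMeasure νl := hν.isFiniteMeasure_restrict hβ0
  have hlarge := isFourierMultiplier_exp_neg_levyExponent hβ0.le
    (hν.integrable_polyWeight_restrict hβ0 hβ1)
  have hm₁ := h₁.differentiable.continuous.measurable
  have hm₂ := h₂.differentiable.continuous.measurable
  have hfactor : ∀ z : ℝ × ℝ, s₁ z.1 * s₂ z.2 * Complex.exp (-(levyExponent ν z : ℂ))
      = Complex.exp (-(levyExponent νl z : ℂ))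
        * (s₁ z.1 * s₂ z.2 * Complex.exp (-(levyExponent νs z : ℂ))) := fun z => by
    rw [← hν.levyExponent_restrict_add hβ0 hβ1 z, Complex.ofReal_add, neg_add, Complex.exp_add]
    ring
  simp only [hfactor]
  calc _ ≤ ENNReal.ofReal (Real.exp (8 * C₀)) * ENNReal.ofReal (M₁ * M₂
        * Real.exp (C₀ + (C₁ + 2 * C₀)) * (∫ u, expDecay c u) ^ 2 * (∫ u, expDecay 1 u) ^ 2) := by
        refine (hlarge.fourierNorm_mul_le (by fun_prop)
          (integrable_mul_exp_neg_levyExponent hc hlow h₁ h₂)).trans ?_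
        refine mul_le_mul' (ENNReal.ofReal_le_ofReal (Real.exp_le_exp.2 ?_))
          (fourierNorm_mul_exp_neg_levyExponent_le_of_small hβ1.le hc hs hi hC₀ hlow h₁ h₂)
        linarith [hν.setIntegral_polyWeight_le hβ0 hβ1]
    _ = _ := by
        rw [← ENNReal.ofReal_mul (by positivity), levyConst,
          show 11 * C₀ + C₁ = 8 * C₀ + (C₀ + (C₁ + 2 * C₀)) by ring, Real.exp_add (8 * C₀)]
        ring_nf

end HasLevyBounds

/-! ### Interpolating between a Lévy exponent and its independent version -/

/-- The difference `e^{iaz} - 1`, as an entire function of `z`. -/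
noncomputable def phaseDiff (a : ℝ) (z : ℂ) : ℂ := Complex.exp (Complex.I * a * z) - 1

/-- The weight `min (|a|, |a|^β)`, which is the cost of a factor `phaseDiff a` in the weighted
Fourier norm. -/
noncomputable def truncAbs (β a : ℝ) : ℝ := min |a| (|a| ^ β)

/-- The symmetrised mixed difference of characters: for fixed `y` it is the contribution of a jump
`y` to `axisExponent ν z - levyExponent ν z`. -/
noncomputable def mixedDiff (y z : ℝ × ℝ) : ℂ :=
  (phaseDiff y.1 z.1 * phaseDiff y.2 z.2 + phaseDiff (-y.1) z.1 * phaseDiff (-y.2) z.2) / 2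

/-- The exponent of a pair of independent variables with the same marginals as the infinitely
divisible law with exponent `levyExponent ν`. -/
noncomputable def axisExponent (ν : Measure (ℝ × ℝ)) (z : ℝ × ℝ) : ℝ :=
  levyExponent ν (z.1, 0) + levyExponent ν (0, z.2)

/-- The Lévy measure `tν + (1 - t)(ν₁ + ν₂)`, where `ν₁` and `ν₂` are the projections of `ν` to the
coordinate axes. -/
noncomputable def axisInterp (ν : Measure (ℝ × ℝ)) (t : ℝ) : Measure (ℝ × ℝ) :=
  ENNReal.ofReal t • ν + ENNReal.ofReal (1 - t) •
    (ν.map (fun x => (x.1, (0 : ℝ))) + ν.map (fun x => ((0 : ℝ), x.2)))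

section PhaseDiff

variable {β : ℝ}

lemma truncAbs_nonneg (β a : ℝ) : 0 ≤ truncAbs β a := by
  unfold truncAbs
  positivity

lemma truncAbs_neg (β a : ℝ) : truncAbs β (-a) = truncAbs β a := by
  simp only [truncAbs, abs_neg]

@[fun_prop]
lemma measurable_truncAbs (β : ℝ) : Measurable (truncAbs β) := by
  unfold truncAbs
  fun_prop

lemma truncAbs_of_abs_le_one (hβ0 : 0 < β) (hβ1 : β < 1) {a : ℝ} (ha : |a| ≤ 1) :
    truncAbs β a = |a| := by
  refine min_eq_left ?_
  simpa using rpow_le_rpow_of_exponent_ge' (abs_nonneg a) ha hβ0.le hβ1.le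

lemma one_add_abs_rpow_add_one_le (hβ0 : 0 < β) (hβ1 : β < 1) {a : ℝ} (ha : 1 < |a|) :
    (1 + |a|) ^ β + 1 ≤ 3 * truncAbs β a := by
  have htrunc : truncAbs β a = |a| ^ β :=
    min_eq_right (by simpa using rpow_le_rpow_of_exponent_le ha.le hβ1.le)
  have hone : 1 ≤ |a| ^ β := one_le_rpow ha.le hβ0.le
  have hdouble : (1 + |a|) ^ β ≤ 2 * |a| ^ β :=
    calc (1 + |a|) ^ β ≤ (2 * |a|) ^ β := by
          gcongr
          linarith
      _ = 2 ^ β * |a| ^ β := mul_rpow zero_le_two (abs_nonneg a)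
      _ ≤ 2 * |a| ^ β := by
          gcongr
          simpa using rpow_le_rpow_of_exponent_le one_le_two hβ1.le
  rw [htrunc]
  linarith

lemma differentiable_phaseDiff (a : ℝ) : Differentiable ℂ (phaseDiff a) := by
  unfold phaseDiff
  fun_prop

@[fun_prop]
lemma measurable_mixedDiff : Measurable fun p : (ℝ × ℝ) × (ℝ × ℝ) => mixedDiff p.1 p.2 := by
  unfold mixedDiff phaseDiff
  fun_prop

lemma norm_phaseDiff_le_abs_mul (a u : ℝ) : ‖phaseDiff a u‖ ≤ |a| * |u| := by
  have h := Real.norm_exp_I_mul_ofReal_sub_one_le (x := a * u)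
  rwa [Complex.ofReal_mul, ← mul_assoc, Real.norm_eq_abs, abs_mul] at h

lemma norm_phaseDiff_le_two (a u : ℝ) : ‖phaseDiff a u‖ ≤ 2 := by
  refine (norm_sub_le _ _).trans ?_
  rw [mul_assoc, ← Complex.ofReal_mul, Complex.norm_exp_I_mul_ofReal, norm_one]
  norm_num

lemma norm_phaseDiff_le_min (a u : ℝ) : ‖phaseDiff a u‖ ≤ 2 * (1 + |u|) * min 1 |a| := by
  rcases le_total 1 |a| with ha | ha
  · rw [min_eq_left ha]
    linarith [norm_phaseDiff_le_two a u, abs_nonneg u]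
  · rw [min_eq_right ha]
    nlinarith [norm_phaseDiff_le_abs_mul a u, abs_nonneg a,
      mul_nonneg (abs_nonneg a) (abs_nonneg u)]

lemma isStripLinear_phaseDiff {a : ℝ} (ha : |a| ≤ 1) : IsStripLinear (phaseDiff a) (3 * |a|) where
  differentiable := differentiable_phaseDiff a
  norm_le u τ hτ := by
    set r := Real.exp (-(a * τ))
    have hsplit : phaseDiff a (u + τ * Complex.I) = r * phaseDiff a u + ((r - 1 : ℝ) : ℂ) := by
      have hexp : Complex.exp (Complex.I * a * (u + τ * Complex.I))
          = (r : ℂ) * Complex.exp (Complex.I * a * u) := by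
        rw [Complex.ofReal_exp, ← Complex.exp_add]
        congr 1
        push_cast
        linear_combination (a * τ : ℂ) * Complex.I_sq
      rw [phaseDiff, phaseDiff, hexp]
      push_cast
      ring
    have hat : |-(a * τ)| ≤ |a| := by
      rw [abs_neg, abs_mul]
      exact mul_le_of_le_one_right (abs_nonneg a) hτ
    have hr : r ≤ 3 := by
      refine (Real.exp_le_exp.2 ((le_abs_self _).trans (hat.trans ha))).trans ?_
      linarith [Real.exp_one_lt_d9]
    have hr1 : |r - 1| ≤ 2 * |a| := (Real.abs_exp_sub_one_le (hat.trans ha)).trans (by linarith)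
    calc ‖phaseDiff a (u + τ * Complex.I)‖ ≤ r * ‖phaseDiff a u‖ + |r - 1| := by
          rw [hsplit]
          refine (norm_add_le _ _).trans_eq ?_
          rw [norm_mul, Complex.norm_real, Complex.norm_real, Real.norm_eq_abs, Real.norm_eq_abs,
            abs_of_pos (Real.exp_pos _)]
      _ ≤ 3 * (|a| * |u|) + 2 * |a| := by
          gcongr
          exact norm_phaseDiff_le_abs_mul a u
      _ ≤ 3 * |a| * (1 + |u|) := by linarith [abs_nonneg a]

lemma isStripLinear_one : IsStripLinear (fun _ => 1) 1 where
  differentiable := by fun_prop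
  norm_le u τ _ := by simp

lemma isFourierMultiplier_phaseDiff (hβ : 0 ≤ β) (a : ℝ) :
    IsFourierMultiplier β (fun z => phaseDiff a z.1) (ENNReal.ofReal ((1 + |a|) ^ β + 1)) ∧
      IsFourierMultiplier β (fun z => phaseDiff a z.2) (ENNReal.ofReal ((1 + |a|) ^ β + 1)) := by
  have hadd : ∀ y : ℝ × ℝ, IsFourierMultiplier β (fun z => planeChar y z + (-1))
      (ENNReal.ofReal (polyWeight β y + 1)) := fun y => by
    refine ((IsFourierMultiplier.planeChar hβ y).add (.const (-1))).mono (le_of_eq ?_)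
    rw [enorm_neg, enorm_one, ENNReal.ofReal_add (polyWeight_nonneg β y) zero_le_one,
      ENNReal.ofReal_one]
  constructor
  · convert hadd (a, 0) using 2
    · simp [phaseDiff, planeChar, sub_eq_add_neg, mul_assoc]
    · simp [polyWeight]
  · convert hadd (0, a) using 2
    · simp [phaseDiff, planeChar, sub_eq_add_neg, mul_assoc]
    · simp [polyWeight]

lemma exists_phaseDiff_eq_mul (hβ0 : 0 < β) (hβ1 : β < 1) (a : ℝ) :
    ∃ (m t : ℂ → ℂ) (A M : ℝ), (∀ z, phaseDiff a z = m z * t z) ∧ 0 ≤ A ∧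
      IsFourierMultiplier β (fun z => m z.1) (ENNReal.ofReal A) ∧
      IsFourierMultiplier β (fun z => m z.2) (ENNReal.ofReal A) ∧
      IsStripLinear t M ∧ A * M ≤ 3 * truncAbs β a := by
  rcases le_or_gt |a| 1 with ha | ha
  · refine ⟨fun _ => 1, phaseDiff a, 1, 3 * |a|, fun z => (one_mul _).symm, zero_le_one, ?_, ?_,
      isStripLinear_phaseDiff ha, ?_⟩
    · simpa using IsFourierMultiplier.const (β := β) 1
    · simpa using IsFourierMultiplier.const (β := β) 1
    · rw [truncAbs_of_abs_le_one hβ0 hβ1 ha, one_mul]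
  · obtain ⟨hfst, hsnd⟩ := isFourierMultiplier_phaseDiff hβ0.le a
    exact ⟨phaseDiff a, fun _ => 1, (1 + |a|) ^ β + 1, 1, fun z => (mul_one _).symm,
      by positivity, hfst, hsnd, isStripLinear_one,
      (mul_one _).trans_le (one_add_abs_rpow_add_one_le hβ0 hβ1 ha)⟩

lemma min_mul_min_le_levyWeight (hβ0 : 0 < β) (hβ1 : β < 1) (y : ℝ × ℝ) :
    min 1 |y.1| * min 1 |y.2| ≤ levyWeight β y := by
  have h₂ : 0 ≤ min 1 |y.2| := by positivity
  rcases le_total (l1Norm y) 1 with hy | hy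
  · rw [levyWeight_of_le_one hβ0 hβ1 hy, sq]
    refine mul_le_mul ((min_le_right _ _).trans ?_) ((min_le_right _ _).trans ?_) h₂
      (l1Norm_nonneg y)
    exacts [le_add_of_nonneg_right (abs_nonneg _), le_add_of_nonneg_left (abs_nonneg _)]
  · exact (mul_le_one₀ (min_le_left _ _) h₂ (min_le_left _ _)).trans (one_le_levyWeight hβ0 hy)

lemma mixedDiff_eq (y z : ℝ × ℝ) : mixedDiff y z =
    ((1 - Real.cos (z.1 * y.1) + (1 - Real.cos (z.2 * y.2))
      - (1 - Real.cos (z.1 * y.1 + z.2 * y.2)) : ℝ) : ℂ) := by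
  have hphase : ∀ a u : ℝ, phaseDiff a u
      = ((Real.cos (u * a) : ℝ) : ℂ) + ((Real.sin (u * a) : ℝ) : ℂ) * Complex.I - 1 := fun a u => by
    rw [phaseDiff, mul_assoc, mul_comm, mul_comm (a : ℂ), ← Complex.ofReal_mul,
      Complex.exp_mul_I, Complex.ofReal_cos, Complex.ofReal_sin]
  simp only [mixedDiff, hphase, mul_neg, Real.cos_neg, Real.sin_neg, Real.cos_add,
    Complex.ofReal_neg, Complex.ofReal_sub, Complex.ofReal_add, Complex.ofReal_mul,
    Complex.ofReal_one]
  linear_combination ((Real.sin (z.1 * y.1) : ℝ) : ℂ) * ((Real.sin (z.2 * y.2) : ℝ) : ℂ)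
    * Complex.I_sq

lemma norm_mixedDiff_le (hβ0 : 0 < β) (hβ1 : β < 1) (y z : ℝ × ℝ) :
    ‖mixedDiff y z‖ ≤ 4 * levyWeight β y * ((1 + |z.1|) * (1 + |z.2|)) := by
  have hprod : ∀ a b : ℝ, ‖phaseDiff a z.1 * phaseDiff b z.2‖
      ≤ 2 * (1 + |z.1|) * min 1 |a| * (2 * (1 + |z.2|) * min 1 |b|) := fun a b => by
    rw [norm_mul]
    exact mul_le_mul (norm_phaseDiff_le_min a z.1) (norm_phaseDiff_le_min b z.2) (norm_nonneg _)
      (by positivity)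
  have hneg := hprod (-y.1) (-y.2)
  rw [abs_neg, abs_neg] at hneg
  calc ‖mixedDiff y z‖ ≤ 4 * (min 1 |y.1| * min 1 |y.2|) * ((1 + |z.1|) * (1 + |z.2|)) := by
        rw [mixedDiff, norm_div, Complex.norm_two, div_le_iff₀ two_pos]
        refine (norm_add_le _ _).trans ?_
        linear_combination hprod y.1 y.2 + hneg
    _ ≤ _ := by
        gcongr
        exact min_mul_min_le_levyWeight hβ0 hβ1 y

end PhaseDiff

namespace HasLevyBounds

variable {β c C₀ C₁ : ℝ} {ν : Measure (ℝ × ℝ)}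

lemma integrable_exp_neg [SFinite ν] (hc : 0 < c) (hν : HasLevyBounds β c C₀ C₁ ν) :
    Integrable fun z : ℝ × ℝ => Complex.exp (-(levyExponent ν z : ℂ)) := by
  simpa using integrable_mul_exp_neg_levyExponent hc hν.coercive isStripLinear_one isStripLinear_one

lemma integrable_phaseDiff_mul_exp_neg [SFinite ν] (hβ : 0 ≤ β) (hc : 0 < c)
    (hν : HasLevyBounds β c C₀ C₁ ν) (a b : ℝ) :
    Integrable fun z : ℝ × ℝ =>
      phaseDiff a z.1 * phaseDiff b z.2 * Complex.exp (-(levyExponent ν z : ℂ)) :=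
  ((isFourierMultiplier_phaseDiff hβ a).1.mul (isFourierMultiplier_phaseDiff hβ b).2).integrable_mul
    (hν.integrable_exp_neg hc)

lemma fourierNorm_phaseDiff_mul_exp_neg_le [SFinite ν] (hβ0 : 0 < β) (hβ1 : β < 1) (hc : 0 < c)
    (hν : HasLevyBounds β c C₀ C₁ ν) (a b : ℝ) :
    fourierNorm β (fun z =>
        phaseDiff a z.1 * phaseDiff b z.2 * Complex.exp (-(levyExponent ν z : ℂ)))
      ≤ ENNReal.ofReal (9 * levyConst c C₀ C₁ * (truncAbs β a * truncAbs β b)) := by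
  obtain ⟨m, s, A, M, hms, hA, hm, -, hs, hAM⟩ := exists_phaseDiff_eq_mul hβ0 hβ1 a
  obtain ⟨m', s', A', M', hms', hA', -, hm', hs', hAM'⟩ := exists_phaseDiff_eq_mul hβ0 hβ1 b
  have hM' := hs'.const_nonneg
  have hms_meas := hs.differentiable.continuous.measurable
  have hms'_meas := hs'.differentiable.continuous.measurable
  have hfactor : ∀ z : ℝ × ℝ,
      phaseDiff a z.1 * phaseDiff b z.2 * Complex.exp (-(levyExponent ν z : ℂ))
        = m z.1 * m' z.2 * (s z.1 * s' z.2 * Complex.exp (-(levyExponent ν z : ℂ))) := fun z => by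
    rw [hms, hms']
    ring
  simp only [hfactor]
  calc _ ≤ ENNReal.ofReal A * ENNReal.ofReal A' * ENNReal.ofReal (M * M' * levyConst c C₀ C₁) := by
        refine ((hm.mul hm').fourierNorm_mul_le (by fun_prop)
          (integrable_mul_exp_neg_levyExponent hc hν.coercive hs hs')).trans ?_
        gcongr
        exact hν.fourierNorm_mul_exp_neg_le hβ0 hβ1 hc hs hs'
    _ = ENNReal.ofReal ((A * M) * (A' * M') * levyConst c C₀ C₁) := by
        rw [← ENNReal.ofReal_mul hA, ← ENNReal.ofReal_mul (mul_nonneg hA hA')]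
        ring_nf
    _ ≤ ENNReal.ofReal ((3 * truncAbs β a) * (3 * truncAbs β b) * levyConst c C₀ C₁) := by
        have hconst := levyConst_nonneg c C₀ C₁
        have htrunc := truncAbs_nonneg β a
        gcongr
    _ = _ := by ring_nf

lemma fourierNorm_mixedDiff_mul_exp_neg_le [SFinite ν] (hβ0 : 0 < β) (hβ1 : β < 1) (hc : 0 < c)
    (hν : HasLevyBounds β c C₀ C₁ ν) (y : ℝ × ℝ) :
    fourierNorm β (fun z => mixedDiff y z * Complex.exp (-(levyExponent ν z : ℂ)))
      ≤ ENNReal.ofReal (9 * levyConst c C₀ C₁ * (truncAbs β y.1 * truncAbs β y.2)) := by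
  have hmeas : ∀ a b : ℝ, Measurable fun z : ℝ × ℝ =>
      phaseDiff a z.1 * phaseDiff b z.2 * Complex.exp (-(levyExponent ν z : ℂ)) := fun a b => by
    unfold phaseDiff
    fun_prop
  have hint := hν.integrable_phaseDiff_mul_exp_neg hβ0.le hc
  have hpos := hν.fourierNorm_phaseDiff_mul_exp_neg_le hβ0 hβ1 hc y.1 y.2
  have hneg := hν.fourierNorm_phaseDiff_mul_exp_neg_le hβ0 hβ1 hc (-y.1) (-y.2)
  rw [truncAbs_neg, truncAbs_neg] at hneg
  have hsplit : ∀ z : ℝ × ℝ, mixedDiff y z * Complex.exp (-(levyExponent ν z : ℂ))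
      = (2 : ℂ)⁻¹ * (phaseDiff y.1 z.1 * phaseDiff y.2 z.2 * Complex.exp (-(levyExponent ν z : ℂ))
        + phaseDiff (-y.1) z.1 * phaseDiff (-y.2) z.2
          * Complex.exp (-(levyExponent ν z : ℂ))) := fun z => by
    rw [mixedDiff]
    ring
  have htwo : ‖(2 : ℂ)⁻¹‖ₑ = 2⁻¹ := by
    rw [enorm_inv two_ne_zero, ← ofReal_norm, Complex.norm_two, ENNReal.ofReal_ofNat]
  simp only [hsplit]
  refine (fourierNorm_const_mul _ ((hmeas _ _).add (hmeas _ _))).trans_le ?_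
  rw [htwo, ENNReal.inv_mul_le_iff two_ne_zero ENNReal.ofNat_ne_top, two_mul]
  exact (fourierNorm_add_le (hmeas _ _) (hint _ _) (hint _ _)).trans (add_le_add hpos hneg)

end HasLevyBounds

section AxisInterp

variable {β c C₀ C₁ t : ℝ} {ν : Measure (ℝ × ℝ)}

instance [SFinite ν] (t : ℝ) : SFinite (axisInterp ν t) := by
  unfold axisInterp
  infer_instance

lemma levyWeight_mono (hβ : 0 ≤ β) {x y : ℝ × ℝ} (h : l1Norm x ≤ l1Norm y) :
    levyWeight β x ≤ levyWeight β y := by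
  have := l1Norm_nonneg x
  unfold levyWeight
  gcongr

lemma levyWeight_fst_le (hβ : 0 ≤ β) (x : ℝ × ℝ) : levyWeight β (x.1, 0) ≤ levyWeight β x :=
  levyWeight_mono hβ (by simp [l1Norm])

lemma levyWeight_snd_le (hβ : 0 ≤ β) (x : ℝ × ℝ) : levyWeight β (0, x.2) ≤ levyWeight β x :=
  levyWeight_mono hβ (by simp [l1Norm])

lemma integrable_comp_fst (hβ : 0 ≤ β) (hν : Integrable (levyWeight β) ν) :
    Integrable (fun x => levyWeight β (x.1, 0)) ν :=
  hν.mono' (Measurable.aestronglyMeasurable (by fun_prop)) (Eventually.of_forall fun x => by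
    rw [Real.norm_of_nonneg (levyWeight_nonneg _ _)]
    exact levyWeight_fst_le hβ x)

lemma integrable_comp_snd (hβ : 0 ≤ β) (hν : Integrable (levyWeight β) ν) :
    Integrable (fun x => levyWeight β (0, x.2)) ν :=
  hν.mono' (Measurable.aestronglyMeasurable (by fun_prop)) (Eventually.of_forall fun x => by
    rw [Real.norm_of_nonneg (levyWeight_nonneg _ _)]
    exact levyWeight_snd_le hβ x)

lemma integrable_axisInterp {φ : ℝ × ℝ → ℝ} (hφ : Measurable φ) (h : Integrable φ ν)
    (h₁ : Integrable (fun x => φ (x.1, 0)) ν) (h₂ : Integrable (fun x => φ (0, x.2)) ν) (t : ℝ) :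
    Integrable φ (axisInterp ν t) :=
  (h.smul_measure ENNReal.ofReal_ne_top).add_measure
    ((((integrable_map_measure hφ.aestronglyMeasurable (by fun_prop)).2 h₁).add_measure
      ((integrable_map_measure hφ.aestronglyMeasurable (by fun_prop)).2 h₂)).smul_measure
        ENNReal.ofReal_ne_top)

lemma integral_axisInterp {φ : ℝ × ℝ → ℝ} (hφ : Measurable φ) (h : Integrable φ ν)
    (h₁ : Integrable (fun x => φ (x.1, 0)) ν) (h₂ : Integrable (fun x => φ (0, x.2)) ν)
    (ht : t ∈ Icc (0 : ℝ) 1) :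
    ∫ x, φ x ∂axisInterp ν t
      = t * ∫ x, φ x ∂ν + (1 - t) * (∫ x, φ (x.1, 0) ∂ν + ∫ x, φ (0, x.2) ∂ν) := by
  have h₁' : Integrable φ (ν.map fun x => (x.1, (0 : ℝ))) :=
    (integrable_map_measure hφ.aestronglyMeasurable (by fun_prop)).2 h₁
  have h₂' : Integrable φ (ν.map fun x => ((0 : ℝ), x.2)) :=
    (integrable_map_measure hφ.aestronglyMeasurable (by fun_prop)).2 h₂
  rw [axisInterp, integral_add_measure (h.smul_measure ENNReal.ofReal_ne_top)
    ((h₁'.add_measure h₂').smul_measure ENNReal.ofReal_ne_top), integral_smul_measure,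
    integral_smul_measure, integral_add_measure h₁' h₂',
    integral_map (by fun_prop) hφ.aestronglyMeasurable,
    integral_map (by fun_prop) hφ.aestronglyMeasurable, ENNReal.toReal_ofReal ht.1,
    ENNReal.toReal_ofReal (sub_nonneg.2 ht.2), smul_eq_mul, smul_eq_mul]

lemma levyExponent_axisInterp (hβ0 : 0 < β) (hβ1 : β < 1) (hν : Integrable (levyWeight β) ν)
    (ht : t ∈ Icc (0 : ℝ) 1) (z : ℝ × ℝ) :
    levyExponent (axisInterp ν t) z = t * levyExponent ν z + (1 - t) * axisExponent ν z := by
  have hint := integrable_one_sub_cos hβ0 hβ1 hν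
  have h := integral_axisInterp (φ := fun x => 1 - Real.cos (z.1 * x.1 + z.2 * x.2))
    (by fun_prop) (hint z) (by simpa using hint (z.1, 0)) (by simpa using hint (0, z.2)) ht
  simpa [levyExponent, axisExponent] using h

lemma axisExponent_sub_levyExponent (hβ0 : 0 < β) (hβ1 : β < 1)
    (hν : Integrable (levyWeight β) ν) (z : ℝ × ℝ) :
    ((axisExponent ν z - levyExponent ν z : ℝ) : ℂ) = ∫ y, mixedDiff y z ∂ν := by
  have hint := integrable_one_sub_cos hβ0 hβ1 hν
  simp only [mixedDiff_eq]
  rw [integral_complex_ofReal, axisExponent, levyExponent, levyExponent, levyExponent,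
    ← integral_add (hint (z.1, 0)) (hint (0, z.2)),
    ← integral_sub ((hint (z.1, 0)).fun_add (hint (0, z.2))) (hint z)]
  simp

@[fun_prop]
lemma measurable_axisExponent (ν : Measure (ℝ × ℝ)) [SFinite ν] : Measurable (axisExponent ν) := by
  unfold axisExponent
  fun_prop

lemma exp_neg_sub_exp_neg_eq_setIntegral (A B : ℝ) :
    Complex.exp (-(A : ℂ)) - Complex.exp (-(B : ℂ)) =
      ∫ t in Ioc (0 : ℝ) 1,
        ((B - A : ℝ) : ℂ) * Complex.exp (-((t * A + (1 - t) * B : ℝ) : ℂ)) := by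
  have hd : ∀ t : ℝ, HasDerivAt (fun t : ℝ => Complex.exp (-((t * A + (1 - t) * B : ℝ) : ℂ)))
      (((B - A : ℝ) : ℂ) * Complex.exp (-((t * A + (1 - t) * B : ℝ) : ℂ))) t := fun t => by
    have hlin : HasDerivAt (fun t : ℝ => t * A + (1 - t) * B) (A - B) t :=
      (((hasDerivAt_id t).mul_const A).add
        (((hasDerivAt_id t).const_sub 1).mul_const B)).congr_deriv (by ring)
    refine hlin.ofReal_comp.neg.cexp.congr_deriv ?_
    rw [Pi.neg_apply]
    push_cast
    ring
  have hftc := intervalIntegral.integral_eq_sub_of_hasDerivAt (a := 0) (b := 1) (fun t _ => hd t)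
    (Continuous.intervalIntegrable (by fun_prop) _ _)
  rw [intervalIntegral.integral_of_le zero_le_one] at hftc
  rw [hftc]
  simp

end AxisInterp

namespace HasLevyBounds

variable {β c C₀ C₁ t : ℝ} {ν : Measure (ℝ × ℝ)}

lemma coercive_axisExponent (hν : HasLevyBounds β c C₀ C₁ ν) (z : ℝ × ℝ) :
    c * l1Norm z - 2 * C₁ ≤ axisExponent ν z := by
  have h₁ := hν.coercive (z.1, 0)
  have h₂ := hν.coercive (0, z.2)
  simp only [l1Norm, abs_zero, add_zero, zero_add] at h₁ h₂
  rw [axisExponent, l1Norm]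
  linarith

protected lemma axisInterp (hβ0 : 0 < β) (hβ1 : β < 1) (hν : HasLevyBounds β c C₀ C₁ ν)
    (ht : t ∈ Icc (0 : ℝ) 1) : HasLevyBounds β c (2 * C₀) (2 * C₁) (axisInterp ν t) where
  integrable := integrable_axisInterp (measurable_levyWeight β) hν.integrable
    (integrable_comp_fst hβ0.le hν.integrable) (integrable_comp_snd hβ0.le hν.integrable) t
  integral_le := by
    have hfst := integrable_comp_fst hβ0.le hν.integrable
    have hsnd := integrable_comp_snd hβ0.le hν.integrable
    rw [integral_axisInterp (measurable_levyWeight β) hν.integrable hfst hsnd ht]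
    have h₁ := integral_mono hfst hν.integrable (levyWeight_fst_le hβ0.le)
    have h₂ := integral_mono hsnd hν.integrable (levyWeight_snd_le hβ0.le)
    have hpos : 0 ≤ ∫ x, levyWeight β x ∂ν := integral_nonneg (levyWeight_nonneg β)
    nlinarith [hν.integral_le, mul_nonneg ht.1 hpos,
      mul_le_mul_of_nonneg_left (add_le_add h₁ h₂) (sub_nonneg.2 ht.2)]
  coercive z := by
    have ht0 : 0 ≤ t := ht.1
    have ht1 : 0 ≤ 1 - t := sub_nonneg.2 ht.2
    have hC₁ : 0 ≤ C₁ := by simpa [l1Norm, levyExponent] using hν.coercive 0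
    rw [levyExponent_axisInterp hβ0 hβ1 hν.integrable ht]
    linear_combination t * hν.coercive z + (1 - t) * hν.coercive_axisExponent z + t * hC₁

lemma integrable_mixedDiff_mul_exp_neg [SFinite ν] (hβ0 : 0 < β) (hβ1 : β < 1) (hc : 0 < c)
    (hν : HasLevyBounds β c C₀ C₁ ν) :
    Integrable (Function.uncurry fun (z : ℝ × ℝ) (p : ℝ × (ℝ × ℝ)) => mixedDiff p.2 z *
        Complex.exp (-((p.1 * levyExponent ν z + (1 - p.1) * axisExponent ν z : ℝ) : ℂ)))
      (volume.prod ((volume.restrict (Ioc (0 : ℝ) 1)).prod ν)) := by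
  have hweight : Integrable (fun p : ℝ × (ℝ × ℝ) => levyWeight β p.2)
      ((volume.restrict (Ioc (0 : ℝ) 1)).prod ν) := hν.integrable.comp_snd _
  refine ((((integrable_expDecay hc).mul_prod (integrable_expDecay hc)).mul_prod
    hweight).const_mul (4 * Real.exp (2 * C₁))).mono'
    (Measurable.aestronglyMeasurable (by unfold Function.uncurry; fun_prop)) ?_
  have hmem : ∀ᵐ q ∂(volume : Measure (ℝ × ℝ)).prod
      ((volume.restrict (Ioc (0 : ℝ) 1)).prod ν), q.2.1 ∈ Ioc (0 : ℝ) 1 :=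
    Measure.quasiMeasurePreserving_snd.ae
      (Measure.quasiMeasurePreserving_fst.ae (ae_restrict_mem measurableSet_Ioc))
  filter_upwards [hmem] with ⟨z, t, y⟩ ht
  have hcoercive := (hν.axisInterp hβ0 hβ1 (Ioc_subset_Icc_self ht)).coercive z
  rw [levyExponent_axisInterp hβ0 hβ1 hν.integrable (Ioc_subset_Icc_self ht)] at hcoercive
  have hexp := one_add_abs_mul_exp_neg_le hcoercive
  have hw := levyWeight_nonneg β y
  simp only [Function.uncurry]
  rw [norm_mul, Complex.norm_exp, ← Complex.ofReal_neg, Complex.ofReal_re]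
  refine (mul_le_mul_of_nonneg_right (norm_mixedDiff_le hβ0 hβ1 y z) (Real.exp_pos _).le).trans ?_
  linear_combination (4 * levyWeight β y) * hexp

lemma exp_neg_sub_exp_neg_axisExponent (hβ0 : 0 < β) (hβ1 : β < 1)
    [SFinite ν] (hν : HasLevyBounds β c C₀ C₁ ν) (z : ℝ × ℝ) :
    Complex.exp (-(levyExponent ν z : ℂ)) - Complex.exp (-(axisExponent ν z : ℂ))
      = ∫ p, mixedDiff p.2 z *
          Complex.exp (-((p.1 * levyExponent ν z + (1 - p.1) * axisExponent ν z : ℝ) : ℂ))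
        ∂(volume.restrict (Ioc (0 : ℝ) 1)).prod ν := by
  rw [exp_neg_sub_exp_neg_eq_setIntegral, integral_const_mul,
    axisExponent_sub_levyExponent hβ0 hβ1 hν.integrable, mul_comm, ← integral_prod_mul]
  simp only [mul_comm]

-- Differentiating along the interpolating Lévy measures turns the difference of the two
-- characteristic functions into an average of mixed differences, each paid for by `truncAbs`.
theorem fourierNorm_exp_neg_sub_exp_neg_le [SFinite ν] (hβ0 : 0 < β) (hβ1 : β < 1) (hc : 0 < c)
    (hν : HasLevyBounds β c C₀ C₁ ν) :
    fourierNorm β (fun z =>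
        Complex.exp (-(levyExponent ν z : ℂ)) - Complex.exp (-(axisExponent ν z : ℂ)))
      ≤ ENNReal.ofReal (9 * levyConst c (2 * C₀) (2 * C₁))
        * ∫⁻ y, ENNReal.ofReal (truncAbs β y.1 * truncAbs β y.2) ∂ν := by
  have hconst := levyConst_nonneg c (2 * C₀) (2 * C₁)
  simp only [hν.exp_neg_sub_exp_neg_axisExponent hβ0 hβ1]
  refine (fourierNorm_integral_le (by unfold Function.uncurry; fun_prop)
    (hν.integrable_mixedDiff_mul_exp_neg hβ0 hβ1 hc)).trans ?_
  calc _ ≤ ∫⁻ p, ENNReal.ofReal (9 * levyConst c (2 * C₀) (2 * C₁))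
          * ENNReal.ofReal (truncAbs β p.2.1 * truncAbs β p.2.2)
        ∂(volume.restrict (Ioc (0 : ℝ) 1)).prod ν := by
        refine lintegral_mono_ae ?_
        filter_upwards [Measure.quasiMeasurePreserving_fst.ae
          (ae_restrict_mem measurableSet_Ioc)] with p hp
        have ht := Ioc_subset_Icc_self hp
        have hbound :=
          (hν.axisInterp hβ0 hβ1 ht).fourierNorm_mixedDiff_mul_exp_neg_le hβ0 hβ1 hc p.2
        simp only [levyExponent_axisInterp hβ0 hβ1 hν.integrable ht] at hbound
        rwa [← ENNReal.ofReal_mul (by positivity)]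
    _ = _ := by
        rw [lintegral_const_mul _ (by fun_prop), lintegral_prod _ (by fun_prop)]
        simp

end HasLevyBounds

/-! ### Fourier inversion and comparison of finite measures on the plane -/

lemma planeChar_neg_neg (x z : ℝ × ℝ) : planeChar (-x) (-z) = planeChar x z := by
  simp [planeChar]

lemma conj_planeChar (x z : ℝ × ℝ) : (starRingEnd ℂ) (planeChar x z) = planeChar (-x) z := by
  rw [planeChar, ← Complex.exp_conj, map_mul, Complex.conj_I, Complex.conj_ofReal, planeChar]
  congr 1
  push_cast [Prod.fst_neg, Prod.snd_neg]
  ring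

section Inversion

variable {Φ : ℝ × ℝ → ℂ}

lemma withLp_prod_inner_eq (v w : WithLp 2 (ℝ × ℝ)) :
    inner ℝ v w = v.ofLp.1 * w.ofLp.1 + v.ofLp.2 * w.ofLp.2 := by
  rw [WithLp.prod_inner_apply]
  simp [mul_comm]

lemma measurableEmbedding_withLp_ofLp : MeasurableEmbedding (@WithLp.ofLp 2 (ℝ × ℝ)) :=
  (MeasurableEquiv.toLp 2 (ℝ × ℝ)).symm.measurableEmbedding

lemma fourier_comp_ofLp (Φ : ℝ × ℝ → ℂ) :
    FourierTransform.fourier (fun v : WithLp 2 (ℝ × ℝ) => Φ v.ofLp)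
      = fun ξ => planeFourier Φ ((2 * π) • ξ.ofLp) := by
  ext ξ
  rw [Real.fourier_eq', planeFourier, ← (WithLp.volume_preserving_ofLp ℝ ℝ).integral_comp
    measurableEmbedding_withLp_ofLp]
  refine integral_congr_ae (Eventually.of_forall fun v => ?_)
  simp only [smul_eq_mul, planeChar, withLp_prod_inner_eq]
  congr 2
  push_cast [Prod.fst_neg, Prod.snd_neg, Prod.smul_fst, Prod.smul_snd, smul_eq_mul]
  ring

/-- The two-dimensional case of `Continuous.fourierInv_fourier_eq`, with `ℝ × ℝ` transported to
the Euclidean plane. -/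
lemma integral_planeChar_mul_planeFourier (hc : Continuous Φ) (hi : Integrable Φ)
    (hF : Integrable (planeFourier Φ)) (z : ℝ × ℝ) :
    ∫ x, planeChar z x * planeFourier Φ x = (2 * π) ^ 2 * Φ z := by
  have hpres := WithLp.volume_preserving_ofLp ℝ ℝ
  have hemb := measurableEmbedding_withLp_ofLp
  have hinv := congrFun ((hc.comp (WithLp.prod_continuous_ofLp 2 ℝ ℝ)).fourierInv_fourier_eq
    ((hpres.integrable_comp_emb hemb).2 hi) (by
      rw [Function.comp_def, fourier_comp_ofLp]
      exact (hpres.integrable_comp_emb hemb).2 (hF.comp_smul two_pi_pos.ne'))) (WithLp.toLp 2 z)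
  have hscale := Measure.integral_comp_smul volume
    (fun x => planeChar z x * planeFourier Φ x) (2 * π)
  rw [← hpres.integral_comp hemb] at hscale
  rw [Function.comp_def, fourier_comp_ofLp, Real.fourierInv_eq'] at hinv
  have hphase : ∀ v : WithLp 2 (ℝ × ℝ), Complex.exp
      (((2 * π * inner ℝ v (WithLp.toLp 2 z) : ℝ) : ℂ) * Complex.I)
        = planeChar z ((2 * π) • v.ofLp) := fun v => by
    rw [planeChar, withLp_prod_inner_eq]
    congr 1
    push_cast [Prod.smul_fst, Prod.smul_snd, smul_eq_mul]
    ring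
  simp only [hphase, smul_eq_mul] at hinv
  rw [hinv, Module.finrank_prod, Module.finrank_self, one_add_one_eq_two,
    abs_of_pos (by positivity), Complex.real_smul] at hscale
  rw [hscale]
  push_cast
  rw [mul_inv_cancel_left₀ (by exact_mod_cast (pow_pos two_pi_pos 2).ne')]

/-- The real density obtained from the characteristic function `Φ` by Fourier inversion. -/
noncomputable def fourierDensity (Φ : ℝ × ℝ → ℂ) (x : ℝ × ℝ) : ℝ :=
  (planeFourier Φ x).re / (2 * π) ^ 2

lemma measurable_fourierDensity (hΦ : Measurable Φ) : Measurable (fourierDensity Φ) :=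
  (Complex.measurable_re.comp (measurable_planeFourier hΦ)).div_const _

lemma abs_fourierDensity_le (Φ : ℝ × ℝ → ℂ) (x : ℝ × ℝ) :
    |fourierDensity Φ x| ≤ ‖planeFourier Φ x‖ := by
  rw [fourierDensity, abs_div]
  refine (div_le_self (abs_nonneg _) ?_).trans (Complex.abs_re_le_norm _)
  rw [abs_of_pos (by positivity)]
  nlinarith [Real.pi_gt_three]

lemma ofReal_fourierDensity (hsymm : ∀ z, Φ (-z) = (starRingEnd ℂ) (Φ z)) (x : ℝ × ℝ) :
    (fourierDensity Φ x : ℂ) = planeFourier Φ x / (2 * π) ^ 2 := by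
  have hreal : (starRingEnd ℂ) (planeFourier Φ x) = planeFourier Φ x := by
    rw [planeFourier, ← integral_conj, ← integral_neg_eq_self]
    refine integral_congr_ae (Eventually.of_forall fun z => ?_)
    simp only [map_mul, conj_planeChar, planeChar_neg_neg, hsymm, Complex.conj_conj]
  rw [fourierDensity, Complex.ofReal_div, Complex.conj_eq_iff_re.1 hreal]
  push_cast
  rfl

lemma integral_planeChar_mul_fourierDensity (hc : Continuous Φ) (hi : Integrable Φ)
    (hF : Integrable (planeFourier Φ)) (hsymm : ∀ z, Φ (-z) = (starRingEnd ℂ) (Φ z)) (z : ℝ × ℝ) :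
    ∫ x, planeChar z x * (fourierDensity Φ x : ℂ) = Φ z := by
  simp only [ofReal_fourierDensity hsymm, ← mul_div_assoc]
  rw [integral_div, integral_planeChar_mul_planeFourier hc hi hF, mul_div_cancel_left₀]
  exact_mod_cast (pow_pos two_pi_pos 2).ne'

end Inversion

section WithDensity

variable {X E : Type*} [MeasurableSpace X] [NormedAddCommGroup E] [NormedSpace ℝ E]
  {μ : Measure X} {d : X → ℝ} {G : X → E}

lemma integrable_max_zero_smul (hd : Measurable d) (hG : Integrable (fun x => d x • G x) μ) :
    Integrable (fun x => max (d x) 0 • G x) μ := by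
  have hset : MeasurableSet {x | 0 < d x} := measurableSet_lt measurable_const hd
  refine (hG.indicator hset).congr (Eventually.of_forall fun x => ?_)
  rcases lt_or_ge 0 (d x) with h | h
  · simp [h, h.le]
  · simp [h, h.not_gt]

lemma integrable_withDensity_ofReal (hd : Measurable d)
    (hG : Integrable (fun x => d x • G x) μ) :
    Integrable G (μ.withDensity fun x => ENNReal.ofReal (d x)) := by
  rw [integrable_withDensity_iff_integrable_smul' hd.ennreal_ofReal
    (Eventually.of_forall fun x => ENNReal.ofReal_lt_top)]
  simpa only [ENNReal.toReal_ofReal'] using integrable_max_zero_smul hd hG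

lemma integral_withDensity_ofReal_sub (hd : Measurable d)
    (hG : Integrable (fun x => d x • G x) μ) :
    ∫ x, G x ∂(μ.withDensity fun x => ENNReal.ofReal (d x))
      - ∫ x, G x ∂(μ.withDensity fun x => ENNReal.ofReal (-d x)) = ∫ x, d x • G x ∂μ := by
  have hG' : Integrable (fun x => -d x • G x) μ := by
    simpa only [neg_smul] using hG.fun_neg
  have hint : ∀ e : X → ℝ, Measurable e → ∫ x, G x ∂(μ.withDensity fun x => ENNReal.ofReal (e x))
      = ∫ x, max (e x) 0 • G x ∂μ := fun e he => by
    rw [integral_withDensity_eq_integral_toReal_smul he.ennreal_ofReal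
      (Eventually.of_forall fun x => ENNReal.ofReal_lt_top)]
    simp only [ENNReal.toReal_ofReal']
  rw [hint d hd, hint (fun x => -d x) hd.neg, ← integral_sub (integrable_max_zero_smul hd hG)
    (integrable_max_zero_smul (d := fun x => -d x) hd.neg hG')]
  simp only [← sub_smul, max_zero_sub_max_neg_zero_eq_self]

end WithDensity

/-- The characteristic function of a measure on the plane. -/
noncomputable def planeCharFun (ρ : Measure (ℝ × ℝ)) (z : ℝ × ℝ) : ℂ :=
  ∫ x, planeChar z x ∂ρ

section PlaneCharFun

variable {ρ ρ₀ ρ₁ : Measure (ℝ × ℝ)} [IsFiniteMeasure ρ] [IsFiniteMeasure ρ₀]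
  [IsFiniteMeasure ρ₁]

lemma integrable_planeChar (ρ : Measure (ℝ × ℝ)) [IsFiniteMeasure ρ] (z : ℝ × ℝ) :
    Integrable (planeChar z) ρ := by
  simpa using integrable_planeChar_mul (integrable_const (1 : ℂ)) z

lemma continuous_planeCharFun (ρ : Measure (ℝ × ℝ)) [IsFiniteMeasure ρ] :
    Continuous (planeCharFun ρ) :=
  continuous_of_dominated (bound := fun _ => 1) (fun z => (integrable_planeChar ρ z).1)
    (fun z => Eventually.of_forall fun x => (norm_planeChar z x).le) (integrable_const _)
    (Eventually.of_forall fun x => continuous_planeChar.comp (Continuous.prodMk_left x))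

lemma planeCharFun_neg (ρ : Measure (ℝ × ℝ)) (z : ℝ × ℝ) :
    planeCharFun ρ (-z) = (starRingEnd ℂ) (planeCharFun ρ z) := by
  simp only [planeCharFun, ← integral_conj, conj_planeChar]

lemma eq_of_planeCharFun_eq (h : planeCharFun ρ₁ = planeCharFun ρ₀) : ρ₁ = ρ₀ := by
  refine Measure.ext_of_charFunDual (funext fun L => ?_)
  have hL : ∀ x, Complex.exp ((L x : ℂ) * Complex.I) = planeChar (L (1, 0), L (0, 1)) x :=
    fun x => by
      have hx : x = x.1 • ((1 : ℝ), (0 : ℝ)) + x.2 • ((0 : ℝ), (1 : ℝ)) := by ext <;> simp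
      rw [planeChar, mul_comm]
      conv_lhs => rw [hx]
      rw [map_add, map_smul, map_smul, smul_eq_mul, smul_eq_mul, mul_comm x.1, mul_comm x.2]
  simp only [charFunDual_apply, hL]
  exact congrFun h (L (1, 0), L (0, 1))

lemma planeCharFun_add (z : ℝ × ℝ) :
    planeCharFun (ρ₁ + ρ₀) z = planeCharFun ρ₁ z + planeCharFun ρ₀ z :=
  integral_add_measure (integrable_planeChar ρ₁ z) (integrable_planeChar ρ₀ z)

/-- Written without subtraction, this says that `ρ₁ - ρ₀` has density `fourierDensity`. -/
lemma add_withDensity_fourierDensity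
    (hi : Integrable (planeCharFun ρ₁ - planeCharFun ρ₀))
    (hF : Integrable (planeFourier (planeCharFun ρ₁ - planeCharFun ρ₀))) :
    ρ₁ + volume.withDensity (fun x =>
        ENNReal.ofReal (-fourierDensity (planeCharFun ρ₁ - planeCharFun ρ₀) x))
      = ρ₀ + volume.withDensity (fun x =>
        ENNReal.ofReal (fourierDensity (planeCharFun ρ₁ - planeCharFun ρ₀) x)) := by
  set Φ := planeCharFun ρ₁ - planeCharFun ρ₀
  have hc : Continuous Φ := (continuous_planeCharFun ρ₁).sub (continuous_planeCharFun ρ₀)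
  have hsymm : ∀ z, Φ (-z) = (starRingEnd ℂ) (Φ z) := fun z => by
    simp only [Φ, Pi.sub_apply, planeCharFun_neg, map_sub]
  have hdm := measurable_fourierDensity hc.measurable
  have hdi : Integrable (fourierDensity Φ) := hF.norm.mono' hdm.aestronglyMeasurable
    (Eventually.of_forall (abs_fourierDensity_le Φ))
  have := isFiniteMeasure_withDensity_ofReal hdi.2
  have := isFiniteMeasure_withDensity_ofReal hdi.neg.2
  refine eq_of_planeCharFun_eq (funext fun z => ?_)
  have hdz : Integrable fun x => fourierDensity Φ x • planeChar z x := by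
    simp only [Complex.real_smul, mul_comm _ (planeChar z _)]
    exact integrable_planeChar_mul hdi.ofReal z
  have hdiff : ∫ x, fourierDensity Φ x • planeChar z x = planeCharFun ρ₁ z - planeCharFun ρ₀ z := by
    simp only [Complex.real_smul, mul_comm _ (planeChar z _)]
    exact integral_planeChar_mul_fourierDensity hc hi hF hsymm z
  rw [← integral_withDensity_ofReal_sub hdm hdz] at hdiff
  rw [planeCharFun_add, planeCharFun_add, add_comm (planeCharFun ρ₀ z)]
  exact (sub_eq_sub_iff_add_eq_add.1 hdiff.symm)

end PlaneCharFun

section Comparison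

variable {β M : ℝ} {W : ℝ≥0∞} {Φ : ℝ × ℝ → ℂ} {ρ ρ₀ ρ₁ : Measure (ℝ × ℝ)} [IsFiniteMeasure ρ]
  [IsFiniteMeasure ρ₀] [IsFiniteMeasure ρ₁]

lemma ofReal_polyWeight_mul_norm (x : ℝ × ℝ) :
    ENNReal.ofReal (polyWeight β x * ‖planeFourier Φ x‖)
      = ENNReal.ofReal (polyWeight β x) * ‖planeFourier Φ x‖ₑ := by
  rw [ENNReal.ofReal_mul (polyWeight_nonneg β x), ofReal_norm]

lemma integrable_polyWeight_mul_norm_planeFourier (hΦ : Measurable Φ)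
    (hW : fourierNorm β Φ ≠ ⊤) : Integrable fun x => polyWeight β x * ‖planeFourier Φ x‖ := by
  refine ⟨((measurable_polyWeight β).mul (measurable_planeFourier hΦ).norm).aestronglyMeasurable,
    ?_⟩
  rw [hasFiniteIntegral_iff_ofReal (Eventually.of_forall fun x =>
    mul_nonneg (polyWeight_nonneg β x) (norm_nonneg _))]
  simp only [ofReal_polyWeight_mul_norm]
  exact hW.lt_top

lemma integral_polyWeight_mul_norm_planeFourier (hΦ : Measurable Φ) :
    ∫ x, polyWeight β x * ‖planeFourier Φ x‖ = (fourierNorm β Φ).toReal := by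
  rw [integral_eq_lintegral_of_nonneg_ae (Eventually.of_forall fun x =>
    mul_nonneg (polyWeight_nonneg β x) (norm_nonneg _))
    ((measurable_polyWeight β).mul (measurable_planeFourier hΦ).norm).aestronglyMeasurable]
  simp only [ofReal_polyWeight_mul_norm, fourierNorm]

lemma integrable_planeFourier (hβ : 0 ≤ β) (hΦ : Measurable Φ) (hW : fourierNorm β Φ ≠ ⊤) :
    Integrable (planeFourier Φ) :=
  (integrable_polyWeight_mul_norm_planeFourier hΦ hW).mono'
    (measurable_planeFourier hΦ).aestronglyMeasurable
    (Eventually.of_forall fun x => le_mul_of_one_le_left (norm_nonneg _) (one_le_polyWeight hβ x))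

lemma absolutelyContinuous_volume_of_fourierNorm (hβ : 0 ≤ β) (hi : Integrable (planeCharFun ρ))
    (hW : fourierNorm β (planeCharFun ρ) ≠ ⊤) : ρ ≪ volume := by
  have hzero : planeCharFun ρ - planeCharFun 0 = planeCharFun ρ := by
    ext z
    simp [planeCharFun]
  have hsum := add_withDensity_fourierDensity (ρ₁ := ρ) (ρ₀ := 0) (by rwa [hzero]) (by
    rw [hzero]
    exact integrable_planeFourier hβ (continuous_planeCharFun ρ).measurable hW)
  rw [zero_add] at hsum
  exact (Measure.absolutelyContinuous_of_le (Measure.le_add_right le_rfl)).trans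
    (hsum ▸ withDensity_absolutelyContinuous _ _)

lemma abs_integral_sub_integral_le (hβ : 0 ≤ β)
    (hi : Integrable (planeCharFun ρ₁ - planeCharFun ρ₀))
    (hW : fourierNorm β (planeCharFun ρ₁ - planeCharFun ρ₀) ≠ ⊤) {H : ℝ × ℝ → ℝ}
    (hH : AEStronglyMeasurable H) (hH₁ : Integrable H ρ₁) (hH₀ : Integrable H ρ₀)
    (hM : ∀ᵐ x, |H x| ≤ M * polyWeight β x) :
    |∫ x, H x ∂ρ₁ - ∫ x, H x ∂ρ₀|
      ≤ M * (fourierNorm β (planeCharFun ρ₁ - planeCharFun ρ₀)).toReal := by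
  have hΦm : Measurable (planeCharFun ρ₁ - planeCharFun ρ₀) :=
    ((continuous_planeCharFun ρ₁).sub (continuous_planeCharFun ρ₀)).measurable
  have hsum := add_withDensity_fourierDensity hi (integrable_planeFourier hβ hΦm hW)
  set Φ := planeCharFun ρ₁ - planeCharFun ρ₀
  have hdm := measurable_fourierDensity hΦm
  have hwi := (integrable_polyWeight_mul_norm_planeFourier hΦm hW).const_mul M
  have hbound : ∀ᵐ x, ‖fourierDensity Φ x • H x‖ ≤ M * (polyWeight β x * ‖planeFourier Φ x‖) := by
    filter_upwards [hM] with x hx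
    calc ‖fourierDensity Φ x • H x‖ = |fourierDensity Φ x| * |H x| := norm_smul _ _
      _ ≤ ‖planeFourier Φ x‖ * (M * polyWeight β x) :=
          mul_le_mul (abs_fourierDensity_le Φ x) hx (abs_nonneg _) (norm_nonneg _)
      _ = M * (polyWeight β x * ‖planeFourier Φ x‖) := by ring
  have hdH : Integrable fun x => fourierDensity Φ x • H x :=
    hwi.mono' (hdm.aestronglyMeasurable.smul hH) hbound
  have hdiff : ∫ x, H x ∂ρ₁ - ∫ x, H x ∂ρ₀ = ∫ x, fourierDensity Φ x • H x := by
    have hdH' : Integrable fun x => -fourierDensity Φ x • H x := by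
      simpa only [neg_smul] using hdH.fun_neg
    rw [← integral_withDensity_ofReal_sub hdm hdH, sub_eq_sub_iff_add_eq_add,
      add_comm (∫ x, H x ∂volume.withDensity _), ← integral_add_measure hH₁
        (integrable_withDensity_ofReal (d := fun x => -fourierDensity Φ x) hdm.neg hdH'),
      ← integral_add_measure hH₀ (integrable_withDensity_ofReal hdm hdH), hsum]
  rw [hdiff, ← integral_polyWeight_mul_norm_planeFourier hΦm, ← integral_const_mul]
  exact norm_integral_le_of_norm_le hwi hbound

end Comparison

/-! ### Power integrals over the half-line -/

lemma lintegral_Ioc_rpow {q R : ℝ} (hq : -1 < q) (hR : 0 < R) :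
    ∫⁻ r in Ioc 0 R, ENNReal.ofReal (r ^ q) = ENNReal.ofReal (R ^ (q + 1) / (q + 1)) := by
  have hi : IntegrableOn (fun r : ℝ => r ^ q) (Ioc 0 R) :=
    (intervalIntegrable_iff_integrableOn_Ioc_of_le hR.le).mp
      (intervalIntegral.intervalIntegrable_rpow' hq)
  rw [← ofReal_integral_eq_lintegral_ofReal hi, ← intervalIntegral.integral_of_le hR.le,
    integral_rpow (Or.inl hq), zero_rpow (by linarith), sub_zero]
  filter_upwards [ae_restrict_mem measurableSet_Ioc] with r hr using rpow_nonneg hr.1.le _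

lemma lintegral_Ioi_rpow {q R : ℝ} (hq : q < -1) (hR : 0 < R) :
    ∫⁻ r in Ioi R, ENNReal.ofReal (r ^ q) = ENNReal.ofReal (R ^ (q + 1) / -(q + 1)) := by
  rw [← ofReal_integral_eq_lintegral_ofReal (integrableOn_Ioi_rpow_of_lt hq hR),
    integral_Ioi_rpow_of_lt hq hR, div_neg, neg_div]
  filter_upwards [ae_restrict_mem measurableSet_Ioi] with r hr using rpow_nonneg (hR.trans hr).le _

lemma lintegral_Ioi_le_of_le_rpow {F : ℝ → ℝ} {a b p q R : ℝ} (ha : 0 ≤ a) (hb : 0 ≤ b)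
    (hp : -1 < p) (hq : q < -1) (hR : 0 < R) (hFp : ∀ r > 0, F r ≤ a * r ^ p)
    (hFq : ∀ r > 0, F r ≤ b * r ^ q) :
    ∫⁻ r in Ioi 0, ENNReal.ofReal (F r) ≤
      ENNReal.ofReal (a * (R ^ (p + 1) / (p + 1)) + b * (R ^ (q + 1) / -(q + 1))) := by
  have hp₁ : 0 < p + 1 := by linarith
  have hq₁ : 0 < -(q + 1) := by linarith
  rw [← Ioc_union_Ioi_eq_Ioi hR.le, ENNReal.ofReal_add (by positivity) (by positivity),
    ENNReal.ofReal_mul ha, ENNReal.ofReal_mul hb, ← lintegral_Ioc_rpow hp hR,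
    ← lintegral_Ioi_rpow hq hR, ← lintegral_const_mul _ (by fun_prop),
    ← lintegral_const_mul _ (by fun_prop)]
  simp_rw [← ENNReal.ofReal_mul ha, ← ENNReal.ofReal_mul hb]
  refine (lintegral_union_le _ _ _).trans (add_le_add ?_ ?_)
  · exact setLIntegral_mono (by fun_prop) fun r hr => ENNReal.ofReal_le_ofReal (hFp r hr.1)
  · exact setLIntegral_mono (by fun_prop) fun r hr =>
      ENNReal.ofReal_le_ofReal (hFq r (hR.trans hr))

/-- The constant `∫₀^∞ min (r², r^{2β}) r^{-1-α} dr` of the radial part of a stable Lévy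
measure. -/
noncomputable def radialConst (α β : ℝ) : ℝ := 1 / (2 - α) + 1 / (α - 2 * β)

lemma radialConst_nonneg {α β : ℝ} (hα : α < 2) (hβ : β < α / 2) : 0 ≤ radialConst α β :=
  add_nonneg (one_div_nonneg.2 (by linarith)) (one_div_nonneg.2 (by linarith))

lemma lintegral_min_rpow_le {α β P : ℝ} (hα : α < 2) (hβ₀ : 0 < β) (hβ : β < α / 2)
    (hP : 0 ≤ P) :
    ∫⁻ r in Ioi 0, ENNReal.ofReal (min (r ^ 2 * P) (r ^ (2 * β) * P ^ β) * r ^ (-1 - α)) ≤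
      ENNReal.ofReal (radialConst α β * P ^ (α / 2)) := by
  rcases hP.eq_or_lt with rfl | hP₀
  · simp [zero_rpow hβ₀.ne']
  -- The two expressions in the minimum agree at `r = P ^ (-1 / 2)`.
  refine (lintegral_Ioi_le_of_le_rpow (R := P ^ (-(1 / 2) : ℝ)) (p := 1 - α)
    (q := 2 * β - 1 - α) hP (rpow_nonneg hP β) (by linarith) (by linarith) (by positivity)
    (fun r hr => ?_) fun r hr => ?_).trans_eq ?_
  · calc min (r ^ 2 * P) (r ^ (2 * β) * P ^ β) * r ^ (-1 - α)
        ≤ r ^ 2 * P * r ^ (-1 - α) := by gcongr; exact min_le_left _ _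
      _ = P * (r ^ (2 : ℝ) * r ^ (-1 - α)) := by rw [rpow_two]; ring
      _ = P * r ^ (1 - α) := by rw [← rpow_add hr]; ring_nf
  · calc min (r ^ 2 * P) (r ^ (2 * β) * P ^ β) * r ^ (-1 - α)
        ≤ r ^ (2 * β) * P ^ β * r ^ (-1 - α) := by gcongr; exact min_le_right _ _
      _ = P ^ β * (r ^ (2 * β) * r ^ (-1 - α)) := by ring
      _ = P ^ β * r ^ (2 * β - 1 - α) := by rw [← rpow_add hr]; ring_nf
  · have hlow : P * (P ^ (-(1 / 2) : ℝ)) ^ (1 - α + 1) = P ^ (α / 2) := by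
      rw [← rpow_mul hP, ← rpow_one_add' hP (by linarith)]
      ring_nf
    have hhigh : P ^ β * (P ^ (-(1 / 2) : ℝ)) ^ (2 * β - 1 - α + 1) = P ^ (α / 2) := by
      rw [← rpow_mul hP, ← rpow_add hP₀]
      ring_nf
    rw [← mul_div_assoc, ← mul_div_assoc, hlow, hhigh, radialConst]
    ring_nf

/-! ### Fractional moments -/

/-- The normalising constant `∫₀^∞ (1 - cos r) r^{-1-p} dr` in the representation of `|x| ^ p` as
a mixture of the functions `1 - cos (r x)`. -/
noncomputable def cosConst (p : ℝ) : ℝ := ∫ r in Ioi (0 : ℝ), (1 - cos r) * r ^ (-1 - p)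

lemma one_sub_cos_nonneg (x : ℝ) : 0 ≤ 1 - cos x := sub_nonneg.2 (cos_le_one x)

lemma one_sub_cos_mul_rpow_nonneg (x q : ℝ) {r : ℝ} (hr : 0 < r) :
    0 ≤ (1 - cos x) * r ^ q := mul_nonneg (one_sub_cos_nonneg x) (rpow_nonneg hr.le _)

lemma integrableOn_one_sub_cos_mul_rpow {p : ℝ} (hp₀ : 0 < p) (hp₂ : p < 2) :
    IntegrableOn (fun r : ℝ => (1 - cos r) * r ^ (-1 - p)) (Ioi 0) := by
  refine ⟨Measurable.aestronglyMeasurable (by fun_prop), ?_⟩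
  rw [hasFiniteIntegral_iff_ofReal ?_]
  · refine (lintegral_Ioi_le_of_le_rpow (a := 1) (b := 2) (p := 1 - p) (q := -1 - p) zero_le_one
      zero_le_two (by linarith) (by linarith) one_pos (fun r hr => ?_) fun r hr => ?_).trans_lt
      ENNReal.ofReal_lt_top
    · calc (1 - cos r) * r ^ (-1 - p) ≤ r ^ 2 * r ^ (-1 - p) := by
            gcongr
            linarith [one_sub_sq_div_two_le_cos (x := r), sq_nonneg r]
        _ = 1 * r ^ (1 - p) := by rw [← rpow_two, ← rpow_add hr]; ring_nf
    · gcongr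
      linarith [neg_one_le_cos r]
  · filter_upwards [ae_restrict_mem measurableSet_Ioi] with r hr
      using one_sub_cos_mul_rpow_nonneg r _ hr

lemma cosConst_pos {p : ℝ} (hp₀ : 0 < p) (hp₂ : p < 2) : 0 < cosConst p := by
  unfold cosConst
  rw [setIntegral_pos_iff_support_of_nonneg_ae ?_ (integrableOn_one_sub_cos_mul_rpow hp₀ hp₂)]
  · refine lt_of_lt_of_le (b := volume (Ioo (0 : ℝ) 1)) (by simp) (measure_mono fun r hr => ?_)
    have hcos : cos r < cos 0 :=
      cos_lt_cos_of_nonneg_of_le_pi le_rfl (by linarith [hr.2, pi_gt_three]) hr.1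
    rw [cos_zero] at hcos
    exact ⟨(mul_pos (sub_pos.2 hcos) (rpow_pos_of_pos hr.1 _)).ne', hr.1⟩
  · filter_upwards [ae_restrict_mem measurableSet_Ioi] with r hr
      using one_sub_cos_mul_rpow_nonneg r _ hr

lemma lintegral_one_sub_cos_mul_rpow {p : ℝ} (hp₀ : 0 < p) (hp₂ : p < 2) (x : ℝ) :
    ∫⁻ r in Ioi 0, ENNReal.ofReal ((1 - cos (r * x)) * r ^ (-1 - p)) =
      ENNReal.ofReal (cosConst p * |x| ^ p) := by
  rcases eq_or_ne x 0 with rfl | hx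
  · simp [zero_rpow hp₀.ne']
  set F : ℝ → ℝ := fun r => (1 - cos r) * r ^ (-1 - p)
  have hx₀ : 0 < |x| := abs_pos.2 hx
  have hscale : ∀ r ∈ Ioi (0 : ℝ),
      (1 - cos (r * x)) * r ^ (-1 - p) = |x| ^ (1 + p) * F (|x| * r) := by
    intro r (hr : 0 < r)
    have hcos : cos (r * x) = cos (|x| * r) := by
      rw [← cos_abs (r * x), abs_mul, abs_of_pos hr, mul_comm]
    have hone : |x| ^ (1 + p) * |x| ^ (-1 - p) = 1 := by
      rw [← rpow_add hx₀, show 1 + p + (-1 - p) = 0 by ring, rpow_zero]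
    simp only [F, hcos, mul_rpow hx₀.le hr.le]
    linear_combination (-((1 - cos (|x| * r)) * r ^ (-1 - p))) * hone
  have hint : IntegrableOn (fun r => F (|x| * r)) (Ioi 0) :=
    (integrableOn_Ioi_comp_mul_left_iff F 0 hx₀).2
      (by simpa using integrableOn_one_sub_cos_mul_rpow hp₀ hp₂)
  rw [setLIntegral_congr_fun measurableSet_Ioi fun r hr => by rw [hscale r hr],
    ← ofReal_integral_eq_lintegral_ofReal (hint.const_mul _), integral_const_mul,
    integral_comp_mul_left_Ioi F 0 hx₀, mul_zero, smul_eq_mul, rpow_one_add' hx₀.le (by linarith)]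
  · congr 1
    simp only [F, cosConst]
    field_simp
  · filter_upwards [ae_restrict_mem measurableSet_Ioi] with r hr
    rw [← hscale r hr]
    exact one_sub_cos_mul_rpow_nonneg _ _ hr

section Moments

variable {ρ : Measure ℝ} [IsProbabilityMeasure ρ]

lemma integrable_cos_mul (r : ℝ) : Integrable (fun x => cos (r * x)) ρ :=
  Integrable.of_bound (C := 1) (Measurable.aestronglyMeasurable (by fun_prop))
    (ae_of_all _ fun x => abs_cos_le_one _)

lemma integral_one_sub_cos (r : ℝ) : ∫ x, (1 - cos (r * x)) ∂ρ = 1 - (charFun ρ r).re := by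
  have hexp : Integrable (fun x : ℝ => Complex.exp (r * x * Complex.I)) ρ :=
    Integrable.of_bound (C := 1) (Measurable.aestronglyMeasurable (by fun_prop))
      (ae_of_all _ fun x => by
        rw [← Complex.ofReal_mul, Complex.norm_exp_ofReal_mul_I])
  have hre : ∀ x : ℝ, (Complex.exp (r * x * Complex.I)).re = cos (r * x) := fun x => by
    rw [← Complex.ofReal_mul, Complex.exp_ofReal_mul_I_re]
  rw [integral_sub (integrable_const _) (integrable_cos_mul r), integral_const, probReal_univ,
    one_smul, charFun_apply_real]
  simp only [← hre]
  exact congrArg (1 - ·) (integral_re hexp)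

lemma integrable_abs_rpow_of_charFun {α N p : ℝ} (hN : 0 ≤ N) (hp₀ : 0 < p) (hp₂ : p < 2)
    (hp : p < α) (hρ : ∀ u, 1 - (charFun ρ u).re ≤ N * |u| ^ α) :
    Integrable (fun x => |x| ^ p) ρ := by
  have hc := cosConst_pos hp₀ hp₂
  suffices h : Integrable (fun x => cosConst p * |x| ^ p) ρ from
    (integrable_const_mul_iff (Ne.isUnit hc.ne') _).1 h
  refine ⟨Measurable.aestronglyMeasurable (by fun_prop), ?_⟩
  rw [hasFiniteIntegral_iff_ofReal (ae_of_all _ fun x => by positivity)]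
  simp_rw [← lintegral_one_sub_cos_mul_rpow hp₀ hp₂]
  rw [lintegral_lintegral_swap (by unfold Function.uncurry; fun_prop)]
  have hinner : ∀ r ∈ Ioi (0 : ℝ), ∫⁻ x, ENNReal.ofReal ((1 - cos (r * x)) * r ^ (-1 - p)) ∂ρ =
      ENNReal.ofReal ((1 - (charFun ρ r).re) * r ^ (-1 - p)) := fun r hr => by
    rw [← integral_one_sub_cos, ← integral_mul_const, ofReal_integral_eq_lintegral_ofReal]
    · exact ((integrable_const _).sub (integrable_cos_mul r)).mul_const _
    · exact ae_of_all _ fun x => one_sub_cos_mul_rpow_nonneg _ _ hr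
  rw [setLIntegral_congr_fun measurableSet_Ioi hinner]
  refine (lintegral_Ioi_le_of_le_rpow (a := N) (b := 2) (p := α - 1 - p) (q := -1 - p) hN
    zero_le_two (by linarith) (by linarith) one_pos (fun r hr => ?_) fun r hr => ?_).trans_lt
    ENNReal.ofReal_lt_top
  · calc (1 - (charFun ρ r).re) * r ^ (-1 - p) ≤ N * |r| ^ α * r ^ (-1 - p) := by
          gcongr
          exact hρ r
      _ = N * r ^ (α - 1 - p) := by
          rw [abs_of_pos hr, mul_assoc, ← rpow_add hr]
          ring_nf
  · gcongr
    linarith [neg_le_of_abs_le ((Complex.abs_re_le_norm _).trans (norm_charFun_le_one (μ := ρ) r))]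

end Moments

lemma add_rpow_le_two_rpow_mul {a b p : ℝ} (ha : 0 ≤ a) (hb : 0 ≤ b) (hp : 0 ≤ p) :
    (a + b) ^ p ≤ 2 ^ p * (a ^ p + b ^ p) := by
  have hmax : max a b ^ p ≤ a ^ p + b ^ p := by
    rcases max_choice a b with h | h <;> rw [h]
    exacts [le_add_of_nonneg_right (rpow_nonneg hb p), le_add_of_nonneg_left (rpow_nonneg ha p)]
  calc (a + b) ^ p ≤ (2 * max a b) ^ p :=
        rpow_le_rpow (by positivity) (by linarith [le_max_left a b, le_max_right a b]) hp
    _ = 2 ^ p * max a b ^ p := mul_rpow zero_le_two (ha.trans (le_max_left a b))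
    _ ≤ 2 ^ p * (a ^ p + b ^ p) := by gcongr

/-! ### The Lévy measure of a jointly stable pair -/

/-- The measure `r^{-1-α} dr` on the half-line. -/
noncomputable def radialMeasure (α : ℝ) : Measure ℝ :=
  (volume.restrict (Ioi (0 : ℝ))).withDensity fun r => ENNReal.ofReal (r ^ (-1 - α))

instance (α : ℝ) : SFinite (radialMeasure α) := by unfold radialMeasure; infer_instance

/-- The Lévy measure of the SαS pair with spectral pair `(f, g)`: the image of
`μ(ds) r^{-1-α} dr / cosConst α` under `(s, r) ↦ (r f(s), r g(s))`. -/
noncomputable def stableLevyMeasure (α : ℝ) {S : Type*} [MeasurableSpace S] (μ : Measure S)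
    (f g : S → ℝ) : Measure (ℝ × ℝ) :=
  (ENNReal.ofReal (cosConst α)⁻¹ • μ.prod (radialMeasure α)).map
    fun p : S × ℝ => (p.2 * f p.1, p.2 * g p.1)

section StableLevyMeasure

variable {α β : ℝ} {S : Type*} [MeasurableSpace S] {μ : Measure S} {f g : S → ℝ}

lemma integrable_abs_mul_rpow_half (hf : MemLalpha α μ f) (hg : MemLalpha α μ g) :
    Integrable (fun s => |f s * g s| ^ (α / 2)) μ := by
  have hfm := hf.1.aemeasurable
  have hgm := hg.1.aemeasurable
  have hsq : ∀ x : ℝ, |x| ^ α = (|x| ^ (α / 2)) ^ 2 := fun x => by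
    rw [← rpow_two, ← rpow_mul (abs_nonneg _), div_mul_cancel₀ _ two_ne_zero]
  refine (hf.2.add hg.2).mono' (AEMeasurable.aestronglyMeasurable (by fun_prop))
    (ae_of_all _ fun s => ?_)
  rw [norm_of_nonneg (by positivity), abs_mul, mul_rpow (abs_nonneg _) (abs_nonneg _),
    Pi.add_apply, hsq, hsq]
  nlinarith [two_mul_le_add_sq (|f s| ^ (α / 2)) (|g s| ^ (α / 2)),
    sq_nonneg (|f s| ^ (α / 2)), sq_nonneg (|g s| ^ (α / 2))]

lemma truncAbs_mul_truncAbs_le {r a b : ℝ} (hr : 0 < r) :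
    truncAbs β (r * a) * truncAbs β (r * b) ≤
      min (r ^ 2 * |a * b|) (r ^ (2 * β) * |a * b| ^ β) := by
  simp only [truncAbs, abs_mul, abs_of_pos hr]
  refine le_min ?_ ?_
  · calc _ ≤ (r * |a|) * (r * |b|) := by gcongr <;> exact min_le_left _ _
      _ = r ^ 2 * (|a| * |b|) := by ring
  · calc _ ≤ (r * |a|) ^ β * (r * |b|) ^ β := by gcongr <;> exact min_le_right _ _
      _ = r ^ (2 * β) * (|a| * |b|) ^ β := by
        rw [mul_rpow hr.le (abs_nonneg _), mul_rpow hr.le (abs_nonneg _),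
          mul_rpow (abs_nonneg _) (abs_nonneg _), two_mul, rpow_add hr]
        ring

instance [SFinite μ] : SFinite (stableLevyMeasure α μ f g) := by
  unfold stableLevyMeasure; infer_instance

lemma lintegral_stableLevyMeasure (hf : AEMeasurable f μ) (hg : AEMeasurable g μ) {F : ℝ × ℝ → ℝ}
    (hF : Measurable F) :
    ∫⁻ x, ENNReal.ofReal (F x) ∂stableLevyMeasure α μ f g = ENNReal.ofReal (cosConst α)⁻¹ *
      ∫⁻ s, (∫⁻ r in Ioi 0, ENNReal.ofReal (F (r * f s, r * g s) * r ^ (-1 - α))) ∂μ := by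
  have hm : AEMeasurable (fun p : S × ℝ => (p.2 * f p.1, p.2 * g p.1)) (μ.prod (radialMeasure α)) :=
    (measurable_snd.aemeasurable.mul hf.comp_fst).prodMk
      (measurable_snd.aemeasurable.mul hg.comp_fst)
  rw [stableLevyMeasure, lintegral_map' hF.ennreal_ofReal.aemeasurable
      (hm.mono_ac Measure.smul_absolutelyContinuous), lintegral_smul_measure, smul_eq_mul,
    lintegral_prod (fun p : S × ℝ => ENNReal.ofReal (F (p.2 * f p.1, p.2 * g p.1)))
      (hF.comp_aemeasurable hm).ennreal_ofReal]
  congr 1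
  refine lintegral_congr fun s => ?_
  have hray : Measurable fun r => ENNReal.ofReal (F (r * f s, r * g s)) := by fun_prop
  rw [radialMeasure, lintegral_withDensity_eq_lintegral_mul _ (by fun_prop) hray]
  refine setLIntegral_congr_fun measurableSet_Ioi fun r (hr : 0 < r) => ?_
  rw [Pi.mul_apply, mul_comm, ENNReal.ofReal_mul' (rpow_nonneg hr.le _)]

lemma levyExponent_stableLevyMeasure (hα₀ : 0 < α) (hα₂ : α < 2) (hf : AEMeasurable f μ)
    (hg : AEMeasurable g μ) (z : ℝ × ℝ) :
    levyExponent (stableLevyMeasure α μ f g) z = ∫ s, |z.1 * f s + z.2 * g s| ^ α ∂μ := by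
  have hc := cosConst_pos hα₀ hα₂
  rw [levyExponent, integral_eq_lintegral_of_nonneg_ae (ae_of_all _ fun x => one_sub_cos_nonneg _)
      (Measurable.aestronglyMeasurable (by fun_prop)),
    integral_eq_lintegral_of_nonneg_ae (ae_of_all _ fun x => by positivity)
      (AEMeasurable.aestronglyMeasurable (by fun_prop)),
    lintegral_stableLevyMeasure hf hg (by fun_prop),
    ← lintegral_const_mul' _ _ ENNReal.ofReal_ne_top]
  congr 1
  refine lintegral_congr fun s => ?_
  have hphase : ∀ r, z.1 * (r * f s) + z.2 * (r * g s) = r * (z.1 * f s + z.2 * g s) :=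
    fun r => by ring
  simp only [hphase]
  rw [lintegral_one_sub_cos_mul_rpow hα₀ hα₂, ← ENNReal.ofReal_mul (by positivity),
    inv_mul_cancel_left₀ hc.ne']

lemma lintegral_stableLevyMeasure_le (hα₀ : 0 < α) (hα₂ : α < 2) (hβ₀ : 0 < β) (hβ : β < α / 2)
    (hf : AEMeasurable f μ) (hg : AEMeasurable g μ) {F : ℝ × ℝ → ℝ} (hF : Measurable F) {P : S → ℝ}
    (hP : ∀ s, 0 ≤ P s) (hPi : Integrable (fun s => P s ^ (α / 2)) μ)
    (hFP : ∀ s, ∀ r > 0, F (r * f s, r * g s) ≤ min (r ^ 2 * P s) (r ^ (2 * β) * P s ^ β)) :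
    ∫⁻ x, ENNReal.ofReal (F x) ∂stableLevyMeasure α μ f g ≤
      ENNReal.ofReal ((cosConst α)⁻¹ * radialConst α β * ∫ s, P s ^ (α / 2) ∂μ) := by
  have hc := cosConst_pos hα₀ hα₂
  have hJ := radialConst_nonneg hα₂ hβ
  have hPα : ∀ s, 0 ≤ P s ^ (α / 2) := fun s => rpow_nonneg (hP s) _
  have hray : ∀ s, ∫⁻ r in Ioi 0, ENNReal.ofReal (F (r * f s, r * g s) * r ^ (-1 - α)) ≤
      ENNReal.ofReal (radialConst α β * P s ^ (α / 2)) := fun s => by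
    refine le_trans ?_ (lintegral_min_rpow_le hα₂ hβ₀ hβ (hP s))
    refine setLIntegral_mono' measurableSet_Ioi fun r (hr : 0 < r) => ENNReal.ofReal_le_ofReal ?_
    gcongr
    exact hFP s r hr
  rw [lintegral_stableLevyMeasure hf hg hF, mul_assoc, ENNReal.ofReal_mul (by positivity),
    ← integral_const_mul, ofReal_integral_eq_lintegral_ofReal (hPi.const_mul _)
      (ae_of_all _ fun s => mul_nonneg hJ (hPα s))]
  gcongr with s
  exact hray s

lemma lintegral_levyWeight_stableLevyMeasure_le (hα₀ : 0 < α) (hα₂ : α < 2) (hβ₀ : 0 < β)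
    (hβ : β < α / 2) (hf : MemLalpha α μ f) (hg : MemLalpha α μ g) :
    ∫⁻ x, ENNReal.ofReal (levyWeight β x) ∂stableLevyMeasure α μ f g ≤
      ENNReal.ofReal ((cosConst α)⁻¹ * radialConst α β *
        (2 ^ α * (∫ s, |f s| ^ α ∂μ + ∫ s, |g s| ^ α ∂μ))) := by
  have hc := cosConst_pos hα₀ hα₂
  have hJ := radialConst_nonneg hα₂ hβ
  have hfm := hf.1.aemeasurable
  have hgm := hg.1.aemeasurable
  have hpow : ∀ s, ((|f s| + |g s|) ^ 2) ^ (α / 2) = (|f s| + |g s|) ^ α := fun s => by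
    rw [← rpow_two, ← rpow_mul (by positivity), mul_div_cancel₀ _ two_ne_zero]
  have hsum : Integrable (fun s => 2 ^ α * (|f s| ^ α + |g s| ^ α)) μ :=
    (hf.2.add hg.2).const_mul _
  have hle : ∀ s, ((|f s| + |g s|) ^ 2) ^ (α / 2) ≤ 2 ^ α * (|f s| ^ α + |g s| ^ α) := fun s =>
    (hpow s).trans_le (add_rpow_le_two_rpow_mul (abs_nonneg _) (abs_nonneg _) hα₀.le)
  have hPi : Integrable (fun s => ((|f s| + |g s|) ^ 2) ^ (α / 2)) μ :=
    hsum.mono' (AEMeasurable.aestronglyMeasurable (by fun_prop)) (ae_of_all _ fun s => by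
      rw [norm_of_nonneg (by positivity)]
      exact hle s)
  refine (lintegral_stableLevyMeasure_le hα₀ hα₂ hβ₀ hβ hfm hgm (measurable_levyWeight β)
    (fun s => sq_nonneg (|f s| + |g s|)) hPi fun s r hr => ?_).trans (ENNReal.ofReal_le_ofReal ?_)
  · have hl : l1Norm (r * f s, r * g s) = r * (|f s| + |g s|) := by
      simp only [l1Norm, abs_mul, abs_of_pos hr, mul_add]
    rw [levyWeight, hl, mul_pow, mul_rpow hr.le (by positivity),
      ← rpow_two (|f s| + |g s|), ← rpow_mul (by positivity)]
  · rw [← integral_add hf.2 hg.2, ← integral_const_mul (2 ^ α)]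
    exact mul_le_mul_of_nonneg_left (integral_mono hPi hsum hle) (by positivity)

lemma lintegral_truncAbs_stableLevyMeasure_le (hα₀ : 0 < α) (hα₂ : α < 2) (hβ₀ : 0 < β)
    (hβ : β < α / 2) (hf : MemLalpha α μ f) (hg : MemLalpha α μ g) :
    ∫⁻ x, ENNReal.ofReal (truncAbs β x.1 * truncAbs β x.2) ∂stableLevyMeasure α μ f g ≤
      ENNReal.ofReal ((cosConst α)⁻¹ * radialConst α β * dep2 α μ f g) :=
  lintegral_stableLevyMeasure_le hα₀ hα₂ hβ₀ hβ hf.1.aemeasurable hg.1.aemeasurable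
    (by have := measurable_truncAbs β; fun_prop) (fun s => abs_nonneg (f s * g s))
    (integrable_abs_mul_rpow_half hf hg) fun _ _ hr => truncAbs_mul_truncAbs_le hr

end StableLevyMeasure

/-! ### Covariance bounds -/

section PolyGrowth

/-- Almost everywhere bounds `|K x| ≤ A (1 + |x|)^β`. Exceptional null sets are allowed because
(K1) and (K3) say nothing about the values of `K` at finitely many points. -/
def HasPolyGrowth (β A : ℝ) (K : ℝ → ℝ) : Prop := ∀ᵐ x, |K x| ≤ A * (1 + |x|) ^ β

variable {β β' A B : ℝ} {K L : ℝ → ℝ}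

lemma HasPolyGrowth.nonneg (hK : HasPolyGrowth β A K) : 0 ≤ A := by
  obtain ⟨x, hx⟩ := hK.exists
  exact nonneg_of_mul_nonneg_left ((abs_nonneg _).trans hx) (by positivity)

lemma HasPolyGrowth.mono (hK : HasPolyGrowth β A K) (hβ : β ≤ β') : HasPolyGrowth β' A K := by
  have hA := hK.nonneg
  filter_upwards [hK] with x hx
  refine hx.trans ?_
  gcongr
  linarith [abs_nonneg x]

lemma exists_hasPolyGrowth {x₀ c : ℝ} (hβ : 0 ≤ β) (hK : ∀ x, x₀ < |x| → |K x| ≤ c * |x| ^ β)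
    (hM : ∃ T : Finset ℝ, ∃ M, ∀ x, |x| ≤ x₀ → x ∉ T → |K x| ≤ M) :
    ∃ A, HasPolyGrowth β A K := by
  obtain ⟨T, M, hM⟩ := hM
  refine ⟨max |c| |M|, ?_⟩
  have hT : ∀ᵐ x, x ∉ T := measure_eq_zero_iff_ae_notMem.1 (T.finite_toSet.measure_zero volume)
  filter_upwards [hT] with x hx
  rcases le_or_gt |x| x₀ with h | h
  · calc |K x| ≤ max |c| |M| * 1 := by
          rw [mul_one]
          exact (hM x h hx).trans ((le_abs_self M).trans (le_max_right _ _))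
      _ ≤ max |c| |M| * (1 + |x|) ^ β := by
          gcongr
          exact one_le_rpow (by linarith [abs_nonneg x]) hβ
  · calc |K x| ≤ c * |x| ^ β := hK x h
      _ ≤ max |c| |M| * (1 + |x|) ^ β := by
          gcongr
          · exact (le_abs_self c).trans (le_max_left _ _)
          · linarith

lemma HasPolyGrowth.abs_mul_le (hK : HasPolyGrowth β A K) (hL : HasPolyGrowth β B L) :
    ∀ᵐ x : ℝ × ℝ, |K x.1 * L x.2| ≤ A * B * polyWeight β x := by
  have hA := hK.nonneg
  filter_upwards [Measure.quasiMeasurePreserving_fst.ae hK,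
    Measure.quasiMeasurePreserving_snd.ae hL] with x hx₁ hx₂
  calc |K x.1 * L x.2| = |K x.1| * |L x.2| := abs_mul _ _
    _ ≤ (A * (1 + |x.1|) ^ β) * (B * (1 + |x.2|) ^ β) := by gcongr
    _ = A * B * polyWeight β x := by rw [polyWeight]; ring

lemma HasPolyGrowth.memLp_two {ρ : Measure ℝ} [IsFiniteMeasure ρ] (hK : HasPolyGrowth β A K)
    (hKm : Measurable K) (hβ : 0 ≤ β) (hρ : ρ ≪ volume)
    (hmom : Integrable (fun x => |x| ^ (2 * β)) ρ) : MemLp K 2 ρ := by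
  rw [memLp_two_iff_integrable_sq hKm.aestronglyMeasurable]
  refine (((integrable_const (1 : ℝ)).add hmom).const_mul (A ^ 2 * 2 ^ (2 * β))).mono'
    (Measurable.aestronglyMeasurable (by fun_prop)) ?_
  filter_upwards [hρ.ae_le hK] with x hx
  have hx₀ : (0 : ℝ) ≤ 1 + |x| := by positivity
  have hsplit := add_rpow_le_two_rpow_mul zero_le_one (abs_nonneg x) (p := 2 * β) (by positivity)
  rw [one_rpow] at hsplit
  calc ‖K x ^ 2‖ = |K x| ^ 2 := by rw [norm_pow, norm_eq_abs]
    _ ≤ (A * (1 + |x|) ^ β) ^ 2 := by gcongr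
    _ = A ^ 2 * (1 + |x|) ^ (2 * β) := by
        rw [mul_pow, ← rpow_two ((1 + |x|) ^ β), ← rpow_mul hx₀, mul_comm β]
    _ ≤ A ^ 2 * (2 ^ (2 * β) * (1 + |x| ^ (2 * β))) := by gcongr
    _ = _ := by rw [Pi.add_apply]; ring

end PolyGrowth

section Marginals

variable {ρ : Measure (ℝ × ℝ)}

lemma charFun_fst (ρ : Measure (ℝ × ℝ)) (u : ℝ) : charFun ρ.fst u = planeCharFun ρ (u, 0) := by
  rw [charFun_apply_real, Measure.fst, integral_map measurable_fst.aemeasurable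
    (Continuous.aestronglyMeasurable (by fun_prop)), planeCharFun]
  refine integral_congr_ae (ae_of_all _ fun x => ?_)
  simp only [planeChar, zero_mul, add_zero, Complex.ofReal_mul, mul_comm Complex.I]

lemma charFun_snd (ρ : Measure (ℝ × ℝ)) (v : ℝ) : charFun ρ.snd v = planeCharFun ρ (0, v) := by
  rw [charFun_apply_real, Measure.snd, integral_map measurable_snd.aemeasurable
    (Continuous.aestronglyMeasurable (by fun_prop)), planeCharFun]
  refine integral_congr_ae (ae_of_all _ fun x => ?_)
  simp only [planeChar, zero_mul, zero_add, Complex.ofReal_mul, mul_comm Complex.I]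

lemma planeCharFun_prod (ρ₁ ρ₂ : Measure ℝ) [SFinite ρ₁] [SFinite ρ₂] (z : ℝ × ℝ) :
    planeCharFun (ρ₁.prod ρ₂) z = charFun ρ₁ z.1 * charFun ρ₂ z.2 := by
  rw [charFun_apply_real, charFun_apply_real, ← integral_prod_mul, planeCharFun]
  refine integral_congr_ae (ae_of_all _ fun x => ?_)
  simp only [planeChar, ← Complex.exp_add]
  congr 1
  push_cast
  ring

lemma fst_absolutelyContinuous (h : ρ ≪ volume) : ρ.fst ≪ volume :=
  (h.map measurable_fst).trans Measure.quasiMeasurePreserving_fst.absolutelyContinuous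

lemma snd_absolutelyContinuous (h : ρ ≪ volume) : ρ.snd ≪ volume :=
  (h.map measurable_snd).trans Measure.quasiMeasurePreserving_snd.absolutelyContinuous

lemma planeCharFun_prod_marginals {ν : Measure (ℝ × ℝ)} [SFinite ρ]
    (hρ : planeCharFun ρ = fun z => Complex.exp (-(levyExponent ν z : ℂ))) :
    planeCharFun (ρ.fst.prod ρ.snd) = fun z => Complex.exp (-(axisExponent ν z : ℂ)) := by
  ext z
  rw [planeCharFun_prod, charFun_fst, charFun_snd, hρ, ← Complex.exp_add, axisExponent]
  congr 1
  push_cast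
  ring

end Marginals

namespace HasLevyBounds

variable {β c C₀ C₁ : ℝ} {ν ρ : Measure (ℝ × ℝ)} [SFinite ν] [IsFiniteMeasure ρ]

lemma absolutelyContinuous_volume (hβ0 : 0 < β) (hβ1 : β < 1) (hc : 0 < c)
    (hν : HasLevyBounds β c C₀ C₁ ν)
    (hρ : planeCharFun ρ = fun z => Complex.exp (-(levyExponent ν z : ℂ))) : ρ ≪ volume := by
  have hW := hν.fourierNorm_mul_exp_neg_le hβ0 hβ1 hc isStripLinear_one isStripLinear_one
  simp only [one_mul] at hW
  exact absolutelyContinuous_volume_of_fourierNorm hβ0.le (hρ ▸ hν.integrable_exp_neg hc)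
    (hρ ▸ (hW.trans_lt ENNReal.ofReal_lt_top).ne)

lemma integrable_exp_neg_axisExponent (hβ0 : 0 < β) (hβ1 : β < 1) (hc : 0 < c)
    (hν : HasLevyBounds β c C₀ C₁ ν) :
    Integrable fun z => Complex.exp (-(axisExponent ν z : ℂ)) := by
  simpa only [levyExponent_axisInterp hβ0 hβ1 hν.integrable (left_mem_Icc.2 zero_le_one),
    zero_mul, zero_add, sub_zero, one_mul] using
    (hν.axisInterp hβ0 hβ1 (left_mem_Icc.2 zero_le_one)).integrable_exp_neg hc

theorem abs_integral_mul_sub_le (hβ0 : 0 < β) (hβ1 : β < 1) (hc : 0 < c)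
    (hν : HasLevyBounds β c C₀ C₁ ν)
    (hρ : planeCharFun ρ = fun z => Complex.exp (-(levyExponent ν z : ℂ))) {D : ℝ}
    (hD₀ : 0 ≤ D)
    (hD : ∫⁻ x, ENNReal.ofReal (truncAbs β x.1 * truncAbs β x.2) ∂ν ≤ ENNReal.ofReal D)
    {A B : ℝ} {K L : ℝ → ℝ} (hKm : Measurable K) (hLm : Measurable L)
    (hK : HasPolyGrowth β A K) (hL : HasPolyGrowth β B L) (hK₂ : MemLp K 2 ρ.fst)
    (hL₂ : MemLp L 2 ρ.snd) :
    |∫ x, K x.1 * L x.2 ∂ρ - (∫ x, K x ∂ρ.fst) * ∫ x, L x ∂ρ.snd|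
      ≤ A * B * (9 * levyConst c (2 * C₀) (2 * C₁) * D) := by
  have hA := hK.nonneg
  have hB := hL.nonneg
  have hC := levyConst_nonneg c (2 * C₀) (2 * C₁)
  have hdiff := planeCharFun_prod_marginals hρ
  have hW : fourierNorm β (planeCharFun ρ - planeCharFun (ρ.fst.prod ρ.snd)) ≤
      ENNReal.ofReal (9 * levyConst c (2 * C₀) (2 * C₁) * D) := by
    rw [hρ, hdiff, ENNReal.ofReal_mul (by positivity)]
    exact (hν.fourierNorm_exp_neg_sub_exp_neg_le hβ0 hβ1 hc).trans (by gcongr)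
  have hi : Integrable (planeCharFun ρ - planeCharFun (ρ.fst.prod ρ.snd)) := by
    rw [hρ, hdiff]
    exact (hν.integrable_exp_neg hc).sub (hν.integrable_exp_neg_axisExponent hβ0 hβ1 hc)
  have hKL : Integrable (fun x : ℝ × ℝ => K x.1 * L x.2) ρ :=
    (hK₂.comp_measurePreserving ⟨measurable_fst, rfl⟩).integrable_mul
      (hL₂.comp_measurePreserving ⟨measurable_snd, rfl⟩)
  have hcmp := abs_integral_sub_integral_le hβ0.le hi (hW.trans_lt ENNReal.ofReal_lt_top).ne
    (Measurable.aestronglyMeasurable (by fun_prop)) hKL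
    ((hK₂.integrable one_le_two).mul_prod (hL₂.integrable one_le_two)) (hK.abs_mul_le hL)
  rw [integral_prod_mul] at hcmp
  refine hcmp.trans ?_
  gcongr
  exact ENNReal.toReal_le_of_le_ofReal (by positivity) hW

end HasLevyBounds

/-! ### Jointly stable pairs -/

section Stable

variable {α β ε₂ : ℝ} {S : Type*} [MeasurableSpace S] {μ : Measure S} {f g : S → ℝ}

lemma nrm_nonneg (α : ℝ) (μ : Measure S) (f : S → ℝ) : 0 ≤ nrm α μ f :=
  rpow_nonneg (integral_nonneg fun _ => by positivity) _

lemma nrm_rpow (hα : 0 < α) (μ : Measure S) (f : S → ℝ) :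
    nrm α μ f ^ α = ∫ s, |f s| ^ α ∂μ := by
  rw [nrm, ← rpow_mul (integral_nonneg fun s => by positivity), one_div_mul_cancel hα.ne', rpow_one]

lemma nrm_const_mul_rpow (hα : 0 < α) (μ : Measure S) (f : S → ℝ) (u : ℝ) :
    nrm α μ (fun s => u * f s) ^ α = |u| ^ α * nrm α μ f ^ α := by
  simp only [nrm_rpow hα, abs_mul, mul_rpow (abs_nonneg _) (abs_nonneg _), integral_const_mul]

lemma dep2_nonneg (α : ℝ) (μ : Measure S) (f g : S → ℝ) : 0 ≤ dep2 α μ f g :=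
  integral_nonneg fun _ => by positivity

lemma dep1_nonneg (α : ℝ) (μ : Measure S) (f g : S → ℝ) : 0 ≤ dep1 α μ f g :=
  add_nonneg (integral_nonneg fun _ => by positivity) (integral_nonneg fun _ => by positivity)

lemma abs_sub_one_le_abs_rpow (hα : 1 ≤ α) (u : ℝ) : |u| - 1 ≤ |u| ^ α := by
  rcases le_total |u| 1 with h | h
  · exact (sub_nonpos.2 h).trans (by positivity)
  · linarith [self_le_rpow_of_one_le h hα]

lemma integrable_and_integral_le_of_lintegral_le {X : Type*} [MeasurableSpace X] {ν : Measure X}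
    {F : X → ℝ} {C : ℝ} (hF : AEStronglyMeasurable F ν) (hF₀ : 0 ≤ F) (hC : 0 ≤ C)
    (h : ∫⁻ x, ENNReal.ofReal (F x) ∂ν ≤ ENNReal.ofReal C) :
    Integrable F ν ∧ ∫ x, F x ∂ν ≤ C := by
  refine ⟨⟨hF, ?_⟩, ?_⟩
  · rw [hasFiniteIntegral_iff_ofReal (ae_of_all _ hF₀)]
    exact h.trans_lt ENNReal.ofReal_lt_top
  · rw [integral_eq_lintegral_of_nonneg_ae (ae_of_all _ hF₀) hF]
    exact ENNReal.toReal_le_of_le_ofReal hC h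

lemma le_levyExponent_stableLevyMeasure (hα₁ : 1 ≤ α) (hα₂ : α < 2) (hε₂ : 0 ≤ ε₂)
    (hf : AEMeasurable f μ) (hg : AEMeasurable g μ) (h : A2 α ε₂ μ f g) (z : ℝ × ℝ) :
    ε₂ * min (nrm α μ f ^ α) (nrm α μ g ^ α) * l1Norm z
        - 2 * (ε₂ * min (nrm α μ f ^ α) (nrm α μ g ^ α))
      ≤ levyExponent (stableLevyMeasure α μ f g) z := by
  have hα₀ : 0 < α := one_pos.trans_le hα₁
  set m := min (nrm α μ f ^ α) (nrm α μ g ^ α)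
  have hm : 0 ≤ m := le_min (rpow_nonneg (nrm_nonneg α μ f) α) (rpow_nonneg (nrm_nonneg α μ g) α)
  rw [levyExponent_stableLevyMeasure hα₀ hα₂ hf hg, ← nrm_rpow hα₀]
  calc ε₂ * m * l1Norm z - 2 * (ε₂ * m) = ε₂ * ((|z.1| - 1) * m + (|z.2| - 1) * m) := by
        rw [l1Norm]; ring
    _ ≤ ε₂ * (|z.1| ^ α * m + |z.2| ^ α * m) := by
        gcongr <;> exact abs_sub_one_le_abs_rpow hα₁ _
    _ ≤ ε₂ * (|z.1| ^ α * nrm α μ f ^ α + |z.2| ^ α * nrm α μ g ^ α) := by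
        gcongr
        · exact min_le_left _ _
        · exact min_le_right _ _
    _ ≤ _ := h z.1 z.2

lemma hasLevyBounds_stableLevyMeasure (hα₁ : 1 ≤ α) (hα₂ : α < 2) (hβ₀ : 0 < β) (hβ : β < α / 2)
    (hε₂ : 0 ≤ ε₂) (hf : MemLalpha α μ f) (hg : MemLalpha α μ g) (h : A2 α ε₂ μ f g) :
    HasLevyBounds β (ε₂ * min (nrm α μ f ^ α) (nrm α μ g ^ α))
      ((cosConst α)⁻¹ * radialConst α β * (2 ^ α * (nrm α μ f ^ α + nrm α μ g ^ α)))
      (2 * (ε₂ * min (nrm α μ f ^ α) (nrm α μ g ^ α))) (stableLevyMeasure α μ f g) := by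
  have hα₀ : 0 < α := one_pos.trans_le hα₁
  have hc := cosConst_pos hα₀ hα₂
  have hJ := radialConst_nonneg hα₂ hβ
  have hweight := lintegral_levyWeight_stableLevyMeasure_le hα₀ hα₂ hβ₀ hβ hf hg
  rw [← nrm_rpow hα₀, ← nrm_rpow hα₀] at hweight
  obtain ⟨hint, hle⟩ := integrable_and_integral_le_of_lintegral_le
    (measurable_levyWeight β).aestronglyMeasurable (levyWeight_nonneg β)
    (by have := nrm_nonneg α μ f; have := nrm_nonneg α μ g; positivity) hweight
  exact ⟨hint, hle, le_levyExponent_stableLevyMeasure hα₁ hα₂ hε₂ hf.1.aemeasurable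
    hg.1.aemeasurable h⟩

/-- The constant of the covariance bound for pairs in `L^α` with norms `nf`, `ng` that satisfy
(A2), up to the growth constants of the two functions. -/
noncomputable def stableCovConst (α β ε₂ nf ng : ℝ) : ℝ :=
  9 * levyConst (ε₂ * min (nf ^ α) (ng ^ α))
      (2 * ((cosConst α)⁻¹ * radialConst α β * (2 ^ α * (nf ^ α + ng ^ α))))
      (2 * (2 * (ε₂ * min (nf ^ α) (ng ^ α))))
    * ((cosConst α)⁻¹ * radialConst α β)

lemma stableCovConst_nonneg (hα₀ : 0 < α) (hα₂ : α < 2) (hβ : β < α / 2) (ε₂ nf ng : ℝ) :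
    0 ≤ stableCovConst α β ε₂ nf ng := by
  have hcos := cosConst_pos hα₀ hα₂
  have hJ := radialConst_nonneg hα₂ hβ
  have hconst := levyConst_nonneg (ε₂ * min (nf ^ α) (ng ^ α))
      (2 * ((cosConst α)⁻¹ * radialConst α β * (2 ^ α * (nf ^ α + ng ^ α))))
      (2 * (2 * (ε₂ * min (nf ^ α) (ng ^ α))))
  unfold stableCovConst
  positivity

namespace JointSAS

variable {A B : ℝ} {K L : ℝ → ℝ} {Ω : Type*} [MeasurableSpace Ω] {P : Measure Ω} {ξ η : Ω → ℝ}

lemma symm (h : JointSAS α μ f g P ξ η) : JointSAS α μ g f P η ξ := fun u v => by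
  simpa only [add_comm] using h v u

lemma planeCharFun_map (h : JointSAS α μ f g P ξ η) (hα₀ : 0 < α) (hα₂ : α < 2)
    (hf : AEMeasurable f μ) (hg : AEMeasurable g μ) (hξ : Measurable ξ) (hη : Measurable η) :
    planeCharFun (P.map fun ω => (ξ ω, η ω)) =
      fun z => Complex.exp (-(levyExponent (stableLevyMeasure α μ f g) z : ℂ)) := by
  ext z
  rw [levyExponent_stableLevyMeasure hα₀ hα₂ hf hg, ← nrm_rpow hα₀, ← h z.1 z.2, planeCharFun,
    integral_map (hξ.prodMk hη).aemeasurable]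
  · rfl
  · exact (continuous_planeChar.comp (Continuous.prodMk_right z)).aestronglyMeasurable

lemma charFun_map (h : JointSAS α μ f g P ξ η) (hα : 0 < α) (hξ : Measurable ξ) (u : ℝ) :
    charFun (P.map ξ) u = Real.exp (-(|u| ^ α * nrm α μ f ^ α)) := by
  have hu := h u 0
  simp only [zero_mul, add_zero, nrm_const_mul_rpow hα] at hu
  rw [charFun_apply_real, integral_map hξ.aemeasurable
    (Continuous.aestronglyMeasurable (by fun_prop)), Complex.ofReal_exp, Complex.ofReal_neg, ← hu]
  refine integral_congr_ae (ae_of_all _ fun ω => ?_)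
  simp only [Complex.ofReal_mul, mul_comm Complex.I]

lemma integrable_abs_rpow [IsProbabilityMeasure P] (h : JointSAS α μ f g P ξ η) (hα₂ : α < 2)
    (hξ : Measurable ξ) {p : ℝ} (hp₀ : 0 < p) (hp : p < α) :
    Integrable (fun x => |x| ^ p) (P.map ξ) := by
  have := Measure.isProbabilityMeasure_map (μ := P) hξ.aemeasurable
  refine integrable_abs_rpow_of_charFun (rpow_nonneg (nrm_nonneg α μ f) α) hp₀ (hp.trans hα₂) hp
    fun u => ?_
  rw [h.charFun_map (hp₀.trans hp) hξ, Complex.ofReal_re]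
  linarith [Real.add_one_le_exp (-(|u| ^ α * nrm α μ f ^ α))]

lemma memLp_two [IsProbabilityMeasure P] (h : JointSAS α μ f g P ξ η) (hα₂ : α < 2)
    (hβ₀ : 0 < β) (hβ : β < α / 2) (hξ : Measurable ξ) (hac : P.map ξ ≪ volume)
    (hKm : Measurable K) (hK : HasPolyGrowth β A K) : MemLp (fun ω => K (ξ ω)) 2 P :=
  (hK.memLp_two hKm hβ₀.le hac (h.integrable_abs_rpow hα₂ hξ (by positivity)
    (by linarith))).comp_of_map hξ.aemeasurable

lemma absolutelyContinuous_map [SFinite μ] [IsFiniteMeasure P] (h : JointSAS α μ f g P ξ η)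
    (hα₁ : 1 ≤ α) (hα₂ : α < 2) (hε₂ : 0 < ε₂) (hf : MemLalpha α μ f) (hg : MemLalpha α μ g)
    (hf₀ : 0 < nrm α μ f) (hg₀ : 0 < nrm α μ g) (hA2 : A2 α ε₂ μ f g) (hξ : Measurable ξ)
    (hη : Measurable η) : P.map (fun ω => (ξ ω, η ω)) ≪ volume := by
  have hα₀ : 0 < α := one_pos.trans_le hα₁
  obtain ⟨β, hβ₀, hβ⟩ := exists_between (half_pos hα₀)
  exact (hasLevyBounds_stableLevyMeasure hα₁ hα₂ hβ₀ hβ hε₂.le hf hg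
    hA2).absolutelyContinuous_volume hβ₀ (by linarith) (by positivity)
    (h.planeCharFun_map hα₀ hα₂ hf.1.aemeasurable hg.1.aemeasurable hξ hη)

lemma abs_covariance_le [SFinite μ] [IsFiniteMeasure P] (h : JointSAS α μ f g P ξ η)
    (hα₁ : 1 ≤ α) (hα₂ : α < 2) (hβ₀ : 0 < β) (hβ : β < α / 2) (hε₂ : 0 < ε₂)
    (hf : MemLalpha α μ f) (hg : MemLalpha α μ g) (hf₀ : 0 < nrm α μ f) (hg₀ : 0 < nrm α μ g)
    (hA2 : A2 α ε₂ μ f g) (hξ : Measurable ξ) (hη : Measurable η) (hKm : Measurable K)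
    (hLm : Measurable L) (hK : HasPolyGrowth β A K) (hL : HasPolyGrowth β B L)
    (hK₂ : MemLp (fun ω => K (ξ ω)) 2 P) (hL₂ : MemLp (fun ω => L (η ω)) 2 P) :
    |(∫ ω, K (ξ ω) * L (η ω) ∂P) - (∫ ω, K (ξ ω) ∂P) * (∫ ω, L (η ω) ∂P)|
      ≤ A * B * (stableCovConst α β ε₂ (nrm α μ f) (nrm α μ g) * dep2 α μ f g) := by
  have hα₀ : 0 < α := one_pos.trans_le hα₁
  have hcos := cosConst_pos hα₀ hα₂
  have hJ := radialConst_nonneg hα₂ hβ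
  have hd := dep2_nonneg α μ f g
  have hbound := (hasLevyBounds_stableLevyMeasure hα₁ hα₂ hβ₀ hβ hε₂.le hf hg
    hA2).abs_integral_mul_sub_le hβ₀ (by linarith) (by positivity)
    (h.planeCharFun_map hα₀ hα₂ hf.1.aemeasurable hg.1.aemeasurable hξ hη) (by positivity)
    (lintegral_truncAbs_stableLevyMeasure_le hα₀ hα₂ hβ₀ hβ hf hg) hKm hLm hK hL
  rw [Measure.fst_map_prodMk hη, Measure.snd_map_prodMk hξ,
    memLp_map_measure_iff hKm.aestronglyMeasurable hξ.aemeasurable,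
    memLp_map_measure_iff hLm.aestronglyMeasurable hη.aemeasurable,
    integral_map hξ.aemeasurable hKm.aestronglyMeasurable,
    integral_map hη.aemeasurable hLm.aestronglyMeasurable,
    integral_map (hξ.prodMk hη).aemeasurable
      (Measurable.aestronglyMeasurable (by fun_prop))] at hbound
  rw [stableCovConst, mul_assoc _ (_ * _) (dep2 α μ f g)]
  exact hbound hK₂ hL₂

end JointSAS

end Stable

theorem stmt5_general {α ε₂ nf ng βK βL : ℝ} (hα₁ : 1 ≤ α) (hα₂ : α < 2) (hε₂ : 0 < ε₂)
    (hnf : 0 < nf) (hng : 0 < ng) {K L : ℝ → ℝ} (hKm : Measurable K) (hLm : Measurable L)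
    (hβK : βK < α / 2) (hβL : βL < α / 2) (hK : ∃ A, HasPolyGrowth βK A K)
    (hL : ∃ B, HasPolyGrowth βL B L) :
    ∃ C > (0 : ℝ), ∀ (S : Type*) [MeasurableSpace S] (μ : Measure S) [SFinite μ]
      (f g : S → ℝ), MemLalpha α μ f → MemLalpha α μ g →
      nrm α μ f = nf → nrm α μ g = ng → A2 α ε₂ μ f g →
      ∀ (Ω : Type*) [MeasurableSpace Ω] (P : Measure Ω) [IsProbabilityMeasure P]
        (ξ η : Ω → ℝ), Measurable ξ → Measurable η → JointSAS α μ f g P ξ η →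
          Integrable (fun ω => K (ξ ω) ^ 2) P ∧
          Integrable (fun ω => L (η ω) ^ 2) P ∧
          |(∫ ω, K (ξ ω) * L (η ω) ∂P) - (∫ ω, K (ξ ω) ∂P) * (∫ ω, L (η ω) ∂P)|
            ≤ C * dep2 α μ f g := by
  have hα₀ : 0 < α := one_pos.trans_le hα₁
  obtain ⟨β, hβmax, hβ⟩ := exists_between (max_lt (max_lt hβK hβL) (half_pos hα₀))
  obtain ⟨⟨hKβ, hLβ⟩, hβ₀⟩ : (βK < β ∧ βL < β) ∧ 0 < β := by simpa only [max_lt_iff] using hβmax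
  obtain ⟨A, hK⟩ := hK.imp fun _ h => h.mono hKβ.le
  obtain ⟨B, hL⟩ := hL.imp fun _ h => h.mono hLβ.le
  have hA := hK.nonneg
  have hB := hL.nonneg
  have hC := stableCovConst_nonneg hα₀ hα₂ hβ ε₂ nf ng
  refine ⟨A * B * stableCovConst α β ε₂ nf ng + 1, by positivity, ?_⟩
  rintro S _ μ _ f g hf hg rfl rfl hA2 Ω _ P _ ξ η hξ hη h
  have hac := h.absolutelyContinuous_map hα₁ hα₂ hε₂ hf hg hnf hng hA2 hξ hη
  have hξac := fst_absolutelyContinuous hac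
  have hηac := snd_absolutelyContinuous hac
  rw [Measure.fst_map_prodMk hη] at hξac
  rw [Measure.snd_map_prodMk hξ] at hηac
  have hK₂ := h.memLp_two hα₂ hβ₀ hβ hξ hξac hKm hK
  have hL₂ := h.symm.memLp_two hα₂ hβ₀ hβ hη hηac hLm hL
  refine ⟨hK₂.integrable_sq, hL₂.integrable_sq, ?_⟩
  refine (h.abs_covariance_le hα₁ hα₂ hβ₀ hβ hε₂ hf hg hnf hng hA2 hξ hη hKm hLm hK hL hK₂
    hL₂).trans ?_
  rw [← mul_assoc]
  exact mul_le_mul_of_nonneg_right (le_add_of_nonneg_right zero_le_one) (dep2_nonneg α μ f g)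

/-- Paper's Theorem 2.4. -/
theorem stmt5 (α ε₁ ε₂ nf ng : ℝ) (hα1 : 1 < α) (hα2 : α < 2)
    (hε₁ : 0 < ε₁) (hε₂ : 0 < ε₂) (hnf : 0 < nf) (hng : 0 < ng)
    (K L : ℝ → ℝ) (hKm : Measurable K) (hLm : Measurable L)
    (βK x₀K cK : ℝ) (hβK0 : 0 < βK) (hβK : βK < α / 2) (hx₀K : 0 < x₀K)
    (hK1 : ∀ x : ℝ, x₀K < |x| → |K x| ≤ cK * |x| ^ βK)
    (hK2a : AntitoneOn (fun x => K x / x) (Set.Ioi x₀K))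
    (hK2b : MonotoneOn (fun x => K x / x) (Set.Iio (-x₀K)))
    (hK3 : ∃ T : Finset ℝ, (∃ M : ℝ, ∀ x : ℝ, |x| ≤ x₀K → x ∉ T → |K x| ≤ M) ∧
      ∀ x ∈ T, ∃ δ > (0:ℝ), IntegrableOn K (Set.Ioo (x - δ) (x + δ)) volume)
    (βL x₀L cL : ℝ) (hβL0 : 0 < βL) (hβL : βL < α / 2) (hx₀L : 0 < x₀L)
    (hL1 : ∀ x : ℝ, x₀L < |x| → |L x| ≤ cL * |x| ^ βL)
    (hL2a : AntitoneOn (fun x => L x / x) (Set.Ioi x₀L))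
    (hL2b : MonotoneOn (fun x => L x / x) (Set.Iio (-x₀L)))
    (hL3 : ∃ T : Finset ℝ, (∃ M : ℝ, ∀ x : ℝ, |x| ≤ x₀L → x ∉ T → |L x| ≤ M) ∧
      ∀ x ∈ T, ∃ δ > (0:ℝ), IntegrableOn L (Set.Ioo (x - δ) (x + δ)) volume) :
    ∃ C > (0:ℝ), ∀ (S : Type) [MeasurableSpace S] (μ : Measure S) [SigmaFinite μ]
      (f g : S → ℝ), MemLalpha α μ f → MemLalpha α μ g →
      nrm α μ f = nf → nrm α μ g = ng → A1 α ε₁ μ f g → A2 α ε₂ μ f g →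
      ∀ (Ω : Type) [MeasurableSpace Ω] (P : Measure Ω) [IsProbabilityMeasure P]
        (ξ η : Ω → ℝ), Measurable ξ → Measurable η → JointSAS α μ f g P ξ η →
          Integrable (fun ω => (K (ξ ω)) ^ 2) P ∧
          Integrable (fun ω => (L (η ω)) ^ 2) P ∧
          |(∫ ω, K (ξ ω) * L (η ω) ∂P) - (∫ ω, K (ξ ω) ∂P) * (∫ ω, L (η ω) ∂P)|
            ≤ C * (dep1 α μ f g + dep2 α μ f g) := by
  obtain ⟨C, hC, hcov⟩ := stmt5_general hα1.le hα2 hε₂ hnf hng hKm hLm hβK hβL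
    (exists_hasPolyGrowth hβK0.le hK1 (hK3.imp fun _ h => h.1))
    (exists_hasPolyGrowth hβL0.le hL1 (hL3.imp fun _ h => h.1))
  refine ⟨C, hC, fun S _ μ _ f g hf hg hnf' hng' _ hA2 Ω _ P _ ξ η hξ hη h =>
    (hcov S μ f g hf hg hnf' hng' hA2 Ω P ξ η hξ hη h).imp_right (And.imp_right fun hle =>
      hle.trans (mul_le_mul_of_nonneg_left ?_ hC.le))⟩
  exact le_add_of_nonneg_left (dep1_nonneg α μ f g)
end

section
/- Let α ∈ (1,2) and f, g ∈ L^α(S, μ). Then for all u, v ∈ ℝ the partial derivative ∂U/∂u(u,v) exists and equals D₁(u,v). Moreover, at every (u,v) for which ∫_S |uf+vg|^{α−2}|f||g| dμ < ∞ (with the convention that the integrand is 0 at points where f(s) = 0 or g(s) = 0), the mixed partial derivative ∂²U/(∂u∂v)(u,v) exists and equals D₂(u,v). (Paper's Lemma 3.2.) -/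
open MeasureTheory Real Set Filter
open scoped ENNReal Topology

/-!
Both derivatives are taken under the integral sign. For `∂/∂u ∫ |uf + vg| ^ α` the differentiated
integrand is dominated, locally uniformly in `u`, by a multiple of `(|f| + |g|) ^ α`.

For the mixed derivative this fails: `a ↦ a^⟨α-1⟩` is not differentiable at `0`, and
`|uf + yg| ^ (α - 2) |fg|` admits in general no majorant uniform in `y` near `v`. Two facts replace
it. Finiteness of `∫ |uf + vg| ^ (α - 2) |fg|` forces `uf + vg ≠ 0` almost everywhere on
`{fg ≠ 0}`, so almost every integrand is differentiable at the single point `v`. And for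
`0 < p ≤ 1` the signed power satisfies `|x^⟨p⟩ - a^⟨p⟩| ≤ 2 |a| ^ (p - 1) |x - a|` for all `x`, so
the difference quotients based at `v` are dominated by `2 |uf + vg| ^ (α - 2) |fg|`.
-/

section SignedPower

variable {a p : ℝ}

lemma spow_eq_abs_rpow_mul (a p : ℝ) : spow a p = |a| ^ (p - 1) * a := by
  unfold spow
  rcases lt_trichotomy a 0 with ha | rfl | ha
  · have hne : a ≠ 0 := ha.ne
    rw [sign_of_neg ha, rpow_sub_one (abs_ne_zero.2 hne), abs_of_neg ha]
    field_simp
  · simp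
  · rw [sign_of_pos ha, abs_of_pos ha, rpow_sub_one ha.ne']
    field_simp

lemma spow_of_nonneg (ha : 0 ≤ a) (hp : p ≠ 0) : spow a p = a ^ p := by
  rcases ha.eq_or_lt with rfl | ha
  · simp [spow, zero_rpow hp]
  · simp [spow, sign_of_pos ha, abs_of_pos ha]

lemma spow_mul (a b p : ℝ) : spow (a * b) p = spow a p * spow b p := by
  simp only [spow_eq_abs_rpow_mul, abs_mul, mul_rpow (abs_nonneg a) (abs_nonneg b)]
  ring

lemma abs_spow_le (a p : ℝ) : |spow a p| ≤ |a| ^ p := by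
  have hpow : 0 ≤ |a| ^ p := rpow_nonneg (abs_nonneg a) p
  rw [spow, abs_mul, abs_of_nonneg hpow]
  rcases Real.sign_apply_eq a with h | h | h <;> simp [h, hpow]

@[fun_prop]
lemma measurable_spow (p : ℝ) : Measurable fun a => spow a p := by
  simp_rw [spow_eq_abs_rpow_mul]
  fun_prop

lemma hasDerivAt_spow (p : ℝ) (ha : a ≠ 0) :
    HasDerivAt (fun x => spow x p) (p * |a| ^ (p - 1)) a := by
  have habs : |a| ≠ 0 := abs_ne_zero.2 ha
  simp_rw [spow_eq_abs_rpow_mul]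
  refine (((hasDerivAt_abs ha).rpow_const (p := p - 1) (Or.inl habs)).mul
    (hasDerivAt_id a)).congr_deriv ?_
  rw [rpow_sub_one habs (p - 1)]
  field_simp
  simp only [id_eq]
  linear_combination (p - 1) * sign_mul_self a

lemma abs_spow_sub_one_le (hp0 : 0 < p) (hp1 : p ≤ 1) (x : ℝ) :
    |spow x p - 1| ≤ 2 * |x - 1| := by
  rcases le_total 0 x with hx | hx
  · rw [spow_of_nonneg hx hp0.ne']
    rcases le_total x 1 with hx1 | hx1
    · have lower : x ≤ x ^ p := self_le_rpow_of_le_one hx hx1 hp1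
      have upper : x ^ p ≤ 1 := rpow_le_one hx hx1 hp0.le
      rw [abs_of_nonpos (by linarith), abs_of_nonpos (by linarith)]
      linarith
    · have lower : 1 ≤ x ^ p := one_le_rpow hx1 hp0.le
      have upper : x ^ p ≤ x := rpow_le_self_of_one_le hx1 hp1
      rw [abs_of_nonneg (by linarith), abs_of_nonneg (by linarith)]
      linarith
  · have growth : |x| ^ p ≤ 1 + |x| := by
      rcases le_total |x| 1 with hx1 | hx1
      · linarith [rpow_le_one (abs_nonneg x) hx1 hp0.le, abs_nonneg x]
      · linarith [rpow_le_self_of_one_le hx1 hp1]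
    calc |spow x p - 1| ≤ |spow x p| + |1| := abs_sub _ _
      _ ≤ (1 + |x|) + 1 := by rw [abs_one]; gcongr; exact (abs_spow_le x p).trans growth
      _ ≤ 2 * |x - 1| := by
        rw [abs_of_nonpos hx, abs_of_nonpos (by linarith : x - 1 ≤ 0)]; linarith

-- By homogeneity the bound reduces to `a = 1`.
lemma abs_spow_sub_spow_le (hp0 : 0 < p) (hp1 : p ≤ 1) (ha : a ≠ 0) (x : ℝ) :
    |spow x p - spow a p| ≤ 2 * |a| ^ (p - 1) * |x - a| := by
  calc |spow x p - spow a p| = |spow a p| * |spow (x / a) p - 1| := by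
        rw [← abs_mul, mul_sub, ← spow_mul, mul_div_cancel₀ x ha, mul_one]
    _ ≤ |a| ^ p * (2 * |x / a - 1|) := by
        gcongr
        exacts [abs_spow_le a p, abs_spow_sub_one_le hp0 hp1 _]
    _ = 2 * |a| ^ (p - 1) * |x - a| := by
        rw [div_sub_one ha, abs_div, rpow_sub_one (abs_ne_zero.2 ha)]
        ring

lemma abs_spow_mul_le {x y M : ℝ} (hp : 0 ≤ p) (hx : |x| ≤ M) (hy : |y| ≤ M) :
    |spow x p * y| ≤ M ^ (p + 1) := by
  have hM : 0 ≤ M := (abs_nonneg x).trans hx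
  calc |spow x p * y| = |spow x p| * |y| := abs_mul _ _
    _ ≤ M ^ p * M := by
        gcongr
        exact (abs_spow_le x p).trans (rpow_le_rpow (abs_nonneg x) hx hp)
    _ = M ^ (p + 1) := (rpow_add_one' hM (by linarith)).symm

lemma hasDerivAt_abs_add_mul_rpow {q : ℝ} (hq : 1 < q) (a b t : ℝ) :
    HasDerivAt (fun x => |a + x * b| ^ q) (q * (spow (a + t * b) (q - 1) * b)) t := by
  have affine : HasDerivAt (fun x => a + x * b) b t := (hasDerivAt_mul_const b).const_add a
  refine ((hasDerivAt_abs_rpow (a + t * b) hq).comp t affine).congr_deriv ?_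
  rw [spow_eq_abs_rpow_mul, show q - 1 - 1 = q - 2 by ring]
  ring

lemma hasDerivAt_spow_add_mul_mul (p : ℝ) {a b c t : ℝ} (h : c * b ≠ 0 → a + t * b ≠ 0) :
    HasDerivAt (fun x => spow (a + x * b) p * c)
      (p * (|a + t * b| ^ (p - 1) * (c * b))) t := by
  rcases eq_or_ne c 0 with rfl | hc
  · simpa using hasDerivAt_const t (0 : ℝ)
  rcases eq_or_ne b 0 with rfl | hb
  · simpa using hasDerivAt_const t (spow a p * c)
  have affine : HasDerivAt (fun x => a + x * b) b t := (hasDerivAt_mul_const b).const_add a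
  refine (((hasDerivAt_spow p (h (mul_ne_zero hc hb))).comp t affine).mul_const c).congr_deriv ?_
  ring

lemma abs_spow_add_mul_mul_sub_le (hp0 : 0 < p) (hp1 : p ≤ 1) {a b c t : ℝ}
    (h : c * b ≠ 0 → a + t * b ≠ 0) (x : ℝ) :
    |spow (a + x * b) p * c - spow (a + t * b) p * c| ≤
      2 * |(|a + t * b| ^ (p - 1) * (c * b))| * |x - t| := by
  rcases eq_or_ne c 0 with rfl | hc
  · simp
  rcases eq_or_ne b 0 with rfl | hb
  · simp
  have hw : a + t * b ≠ 0 := h (mul_ne_zero hc hb)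
  calc |spow (a + x * b) p * c - spow (a + t * b) p * c|
      = |spow (a + x * b) p - spow (a + t * b) p| * |c| := by rw [← sub_mul, abs_mul]
    _ ≤ 2 * |a + t * b| ^ (p - 1) * |a + x * b - (a + t * b)| * |c| := by
        gcongr
        exact abs_spow_sub_spow_le hp0 hp1 hw _
    _ = 2 * |(|a + t * b| ^ (p - 1) * (c * b))| * |x - t| := by
        rw [show a + x * b - (a + t * b) = (x - t) * b by ring, abs_mul, abs_mul, abs_mul,
          abs_of_nonneg (rpow_nonneg (abs_nonneg _) _)]
        ring

end SignedPower

section Integral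

variable {S : Type*} [MeasurableSpace S] {μ : Measure S} {α p q t : ℝ} {a b c f g h w : S → ℝ}

lemma memLalpha_iff_memLp (hα : 0 < α) : MemLalpha α μ f ↔ MemLp f (ENNReal.ofReal α) μ := by
  refine and_congr_right_iff.2 fun hf => ?_
  have h := integrable_norm_rpow_iff hf (ENNReal.ofReal_pos.2 hα).ne' ENNReal.ofReal_ne_top
  rw [ENNReal.toReal_ofReal hα.le] at h
  exact h.trans (and_iff_right hf)

lemma MemLalpha.aemeasurable (hf : MemLalpha α μ f) : AEMeasurable f μ :=
  hf.1.aemeasurable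

lemma MemLalpha.zero (hα : 0 < α) : MemLalpha α μ fun _ => 0 :=
  (memLalpha_iff_memLp hα).2 MemLp.zero'

lemma MemLalpha.add (hα : 0 < α) (hf : MemLalpha α μ f) (hg : MemLalpha α μ g) :
    MemLalpha α μ fun s => f s + g s :=
  (memLalpha_iff_memLp hα).2 <|
    ((memLalpha_iff_memLp hα).1 hf).add ((memLalpha_iff_memLp hα).1 hg)

lemma MemLalpha.const_mul (hα : 0 < α) (hf : MemLalpha α μ f) (c : ℝ) :
    MemLalpha α μ fun s => c * f s :=
  (memLalpha_iff_memLp hα).2 (((memLalpha_iff_memLp hα).1 hf).const_mul c)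

lemma MemLalpha.abs (hα : 0 < α) (hf : MemLalpha α μ f) : MemLalpha α μ fun s => |f s| :=
  (memLalpha_iff_memLp hα).2 ((memLalpha_iff_memLp hα).1 hf).abs

lemma nrm_rpow_self (hα : α ≠ 0) : nrm α μ f ^ α = ∫ s, |f s| ^ α ∂μ := by
  have hnonneg : 0 ≤ ∫ s, |f s| ^ α ∂μ := integral_nonneg fun s => rpow_nonneg (abs_nonneg _) _
  rw [nrm, ← rpow_mul hnonneg, one_div_mul_cancel hα, rpow_one]

lemma integrable_spow_mul (hα : 1 ≤ α) (ha : MemLalpha α μ a) (hb : MemLalpha α μ b) :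
    Integrable (fun s => spow (a s) (α - 1) * b s) μ := by
  have hα0 : 0 < α := one_pos.trans_le hα
  have dominated : MemLalpha α μ fun s => |a s| + |b s| := (ha.abs hα0).add hα0 (hb.abs hα0)
  have ham := ha.aemeasurable
  have hbm := hb.aemeasurable
  refine dominated.2.mono' (by fun_prop) (ae_of_all _ fun s => ?_)
  rw [abs_of_nonneg (by positivity : 0 ≤ |a s| + |b s|)]
  simpa only [Real.norm_eq_abs, sub_add_cancel] using abs_spow_mul_le (sub_nonneg.2 hα)
    (le_add_of_nonneg_right (abs_nonneg (b s))) (le_add_of_nonneg_left (abs_nonneg (a s)))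

lemma hasDerivAt_nrm_rpow (hα : 1 < α) (ha : MemLalpha α μ a) (hb : MemLalpha α μ b) (t : ℝ) :
    HasDerivAt (fun x => nrm α μ (fun s => a s + x * b s) ^ α)
      (α * ∫ s, spow (a s + t * b s) (α - 1) * b s ∂μ) t := by
  have hα0 : 0 < α := one_pos.trans hα
  have hline (x : ℝ) : MemLalpha α μ fun s => a s + x * b s := ha.add hα0 (hb.const_mul hα0 x)
  set M : S → ℝ := fun s => |a s| + (|t| + 1) * |b s|
  have hM : MemLalpha α μ M := (ha.abs hα0).add hα0 ((hb.abs hα0).const_mul hα0 _)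
  have bound (s : S) (x : ℝ) (hx : x ∈ Metric.ball t 1) :
      ‖α * (spow (a s + x * b s) (α - 1) * b s)‖ ≤ α * |M s| ^ α := by
    have hxt : |x| ≤ |t| + 1 := by
      linarith [abs_sub_abs_le_abs_sub x t, Real.dist_eq x t ▸ Metric.mem_ball.1 hx]
    have hval : |a s + x * b s| ≤ |M s| := calc
      |a s + x * b s| ≤ |a s| + |x| * |b s| := abs_mul x (b s) ▸ abs_add_le _ _
      _ ≤ |a s| + (|t| + 1) * |b s| := by gcongr
      _ ≤ |M s| := le_abs_self (M s)
    have hdir : |b s| ≤ |M s| := calc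
      |b s| ≤ (|t| + 1) * |b s| :=
        le_mul_of_one_le_left (abs_nonneg _) (le_add_of_nonneg_left (abs_nonneg t))
      _ ≤ |a s| + (|t| + 1) * |b s| := le_add_of_nonneg_left (abs_nonneg _)
      _ ≤ |M s| := le_abs_self (M s)
    rw [norm_mul, norm_of_nonneg hα0.le]
    gcongr
    simpa only [Real.norm_eq_abs, sub_add_cancel] using
      abs_spow_mul_le (sub_nonneg.2 hα.le) hval hdir
  have key := (hasDerivAt_integral_of_dominated_loc_of_deriv_le (Metric.ball_mem_nhds t one_pos)
    (Eventually.of_forall fun x => (hline x).2.aestronglyMeasurable) (hline t).2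
    ((integrable_spow_mul hα.le (hline t) hb).const_mul α).aestronglyMeasurable
    (ae_of_all _ bound) (hM.2.const_mul α)
    (ae_of_all _ fun s x _ => hasDerivAt_abs_add_mul_rpow hα (a s) (b s) x)).2
  simpa only [nrm_rpow_self hα0.ne', integral_const_mul] using key

lemma ae_ne_zero_of_lintegral_enorm_rpow_mul_lt_top (hq : q < 0) (hw : AEMeasurable w μ)
    (hh : AEMeasurable h μ) (hfin : ∫⁻ s, ‖w s‖ₑ ^ q * ‖h s‖ₑ ∂μ < ⊤) :
    ∀ᵐ s ∂μ, h s ≠ 0 → w s ≠ 0 := by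
  filter_upwards [ae_lt_top' (by fun_prop) hfin.ne] with s hs hhs hws
  rw [hws, enorm_zero, ENNReal.zero_rpow_of_neg hq, ENNReal.top_mul (enorm_ne_zero.2 hhs)] at hs
  exact lt_irrefl _ hs

lemma integrable_abs_rpow_mul_of_lintegral_lt_top (hw : AEMeasurable w μ) (hh : AEMeasurable h μ)
    (hfin : ∫⁻ s, ‖w s‖ₑ ^ q * ‖h s‖ₑ ∂μ < ⊤) :
    Integrable (fun s => |w s| ^ q * h s) μ := by
  have pointwise (x : ℝ) : ‖|x| ^ q‖ₑ ≤ ‖x‖ₑ ^ q := by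
    rcases eq_or_ne x 0 with rfl | hx
    · rcases eq_or_ne q 0 with rfl | hq <;> simp [*]
    · rw [Real.enorm_of_nonneg (rpow_nonneg (abs_nonneg x) q),
        ← ENNReal.ofReal_rpow_of_pos (abs_pos.2 hx), Real.enorm_eq_ofReal_abs]
  refine ⟨by fun_prop, (lintegral_mono fun s => ?_).trans_lt hfin⟩
  rw [enorm_mul]
  gcongr
  exact pointwise (w s)

lemma hasDerivAt_integral_spow_mul (hp0 : 0 < p) (hp1 : p ≤ 1) (ha : AEMeasurable a μ)
    (hb : AEMeasurable b μ) (hc : AEMeasurable c μ)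
    (hF : Integrable (fun s => spow (a s + t * b s) p * c s) μ)
    (hF' : Integrable (fun s => |a s + t * b s| ^ (p - 1) * (c s * b s)) μ)
    (hne : ∀ᵐ s ∂μ, c s * b s ≠ 0 → a s + t * b s ≠ 0) :
    HasDerivAt (fun x => ∫ s, spow (a s + x * b s) p * c s ∂μ)
      (p * ∫ s, |a s + t * b s| ^ (p - 1) * (c s * b s) ∂μ) t := by
  have hderiv : Integrable (fun s => p * (|a s + t * b s| ^ (p - 1) * (c s * b s))) μ :=
    hF'.const_mul p
  obtain ⟨hderiv_toSpan, key⟩ := hasFDerivAt_integral_of_dominated_loc_of_lip' univ_mem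
    (fun x _ => by fun_prop) hF
    ((ContinuousLinearMap.toSpanSingletonCLE (𝕜 := ℝ) (E := ℝ)).continuous
      |>.comp_aestronglyMeasurable hderiv.aestronglyMeasurable)
    (hne.mono fun s hs x _ => abs_spow_add_mul_mul_sub_le hp0 hp1 hs x)
    (hF'.abs.const_mul 2)
    (hne.mono fun s hs => (hasDerivAt_spow_add_mul_mul p hs).hasFDerivAt)
  refine key.hasDerivAt.congr_deriv ?_
  rw [ContinuousLinearMap.integral_apply hderiv_toSpan]
  simp [integral_const_mul]

end Integral

section PartialDerivatives

variable {S : Type*} [MeasurableSpace S] {μ : Measure S} {α : ℝ} {f g : S → ℝ}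

lemma hasDerivAt_nrm_rpow_const_mul (hα : 1 < α) (hf : MemLalpha α μ f) (u : ℝ) :
    HasDerivAt (fun x => nrm α μ (fun s => x * f s) ^ α)
      (α * ∫ s, spow (u * f s) (α - 1) * f s ∂μ) u := by
  simpa only [zero_add] using hasDerivAt_nrm_rpow hα (MemLalpha.zero (one_pos.trans hα)) hf u

lemma hasDerivAt_Ufun (hα : 1 < α) (hf : MemLalpha α μ f) (hg : MemLalpha α μ g) (u v : ℝ) :
    HasDerivAt (fun x => Ufun α μ f g x v) (D1 α μ f g u v) u := by
  have joint : HasDerivAt (fun x => nrm α μ (fun s => x * f s + v * g s) ^ α)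
      (α * ∫ s, spow (u * f s + v * g s) (α - 1) * f s ∂μ) u := by
    simpa only [add_comm] using
      hasDerivAt_nrm_rpow hα (hg.const_mul (one_pos.trans hα) v) hf u
  have marginal := hasDerivAt_nrm_rpow_const_mul hα hf u
  refine (joint.neg.exp.sub (marginal.neg.sub_const (nrm α μ (fun s => v * g s) ^ α)).exp
    ).congr_deriv ?_
  simp only [D1, Pi.neg_apply]
  ring

lemma hasDerivAt_integral_spow_mul_of_lintegral_lt_top (hα1 : 1 < α) (hα2 : α < 2)
    (hf : MemLalpha α μ f) (hg : MemLalpha α μ g) {u v : ℝ}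
    (hfin : ∫⁻ s, ‖u * f s + v * g s‖ₑ ^ (α - 2) * ‖f s * g s‖ₑ ∂μ < ⊤) :
    HasDerivAt (fun y => ∫ s, spow (u * f s + y * g s) (α - 1) * f s ∂μ)
      ((α - 1) * ∫ s, |u * f s + v * g s| ^ (α - 2) * (f s * g s) ∂μ) v := by
  have hα0 : 0 < α := one_pos.trans hα1
  have hline : MemLalpha α μ fun s => u * f s + v * g s :=
    (hf.const_mul hα0 u).add hα0 (hg.const_mul hα0 v)
  have hfg : AEMeasurable (fun s => f s * g s) μ := hf.aemeasurable.mul hg.aemeasurable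
  have hexp : α - 1 - 1 = α - 2 := by ring
  have hF := integrable_abs_rpow_mul_of_lintegral_lt_top hline.aemeasurable hfg hfin
  have hne := ae_ne_zero_of_lintegral_enorm_rpow_mul_lt_top (sub_neg.2 hα2)
    hline.aemeasurable hfg hfin
  rw [← hexp] at hF ⊢
  exact hasDerivAt_integral_spow_mul (sub_pos.2 hα1) (by linarith)
    (hf.const_mul hα0 u).aemeasurable hg.aemeasurable hf.aemeasurable
    (integrable_spow_mul hα1.le hline hf) hF hne

lemma ite_eq_zero_or_eq_zero_mul (k x y : ℝ) :
    (if x = 0 ∨ y = 0 then 0 else k * (x * y)) = k * (x * y) :=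
  ite_eq_right_iff.2 fun h => by rw [mul_eq_zero.2 h, mul_zero]

-- In `ℝ≥0∞` the convention of the hypothesis agrees with `∞ * 0 = 0`.
lemma ite_eq_zero_or_eq_zero_ofReal_rpow_mul (z q x y : ℝ) :
    (if x = 0 ∨ y = 0 then 0 else ENNReal.ofReal |z| ^ q * ENNReal.ofReal (|x| * |y|)) =
      ‖z‖ₑ ^ q * ‖x * y‖ₑ := by
  rw [Real.enorm_eq_ofReal_abs, Real.enorm_eq_ofReal_abs, abs_mul]
  refine ite_eq_right_iff.2 fun h => ?_
  rw [← abs_mul, mul_eq_zero.2 h, abs_zero, ENNReal.ofReal_zero, mul_zero]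

lemma hasDerivAt_D1 (hα1 : 1 < α) (hα2 : α < 2) (hf : MemLalpha α μ f) (hg : MemLalpha α μ g)
    {u v : ℝ} (hfin : ∫⁻ s, ‖u * f s + v * g s‖ₑ ^ (α - 2) * ‖f s * g s‖ₑ ∂μ < ⊤) :
    HasDerivAt (fun y => D1 α μ f g u y) (D2 α μ f g u v) v := by
  have inner := hasDerivAt_integral_spow_mul_of_lintegral_lt_top hα1 hα2 hf hg hfin
  have joint := hasDerivAt_nrm_rpow hα1 (hf.const_mul (one_pos.trans hα1) u) hg v
  have marginal := hasDerivAt_nrm_rpow_const_mul hα1 hg v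
  refine (((inner.const_mul (-α)).mul joint.neg.exp).add
    ((marginal.const_sub (-(nrm α μ (fun s => u * f s) ^ α))).exp.const_mul
      (α * ∫ s, spow (u * f s) (α - 1) * f s ∂μ))).congr_deriv ?_
  simp only [D2, ite_eq_zero_or_eq_zero_mul, Pi.neg_apply]
  ring

end PartialDerivatives

theorem stmt7_general {S : Type*} [MeasurableSpace S] (μ : Measure S) (α : ℝ) (hα1 : 1 < α)
    (f g : S → ℝ) (hf : MemLalpha α μ f) (hg : MemLalpha α μ g) (u v : ℝ) :
    HasDerivAt (fun u' => Ufun α μ f g u' v) (D1 α μ f g u v) u ∧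
    (α < 2 → (∫⁻ s, (if f s = 0 ∨ g s = 0 then (0:ℝ≥0∞) else
        (ENNReal.ofReal |u * f s + v * g s|) ^ (α - 2) *
          ENNReal.ofReal (|f s| * |g s|)) ∂μ) < ⊤ →
      HasDerivAt (fun v' => D1 α μ f g u v') (D2 α μ f g u v) v) := by
  refine ⟨hasDerivAt_Ufun hα1 hf hg u v, fun hα2 hfin => ?_⟩
  simp only [ite_eq_zero_or_eq_zero_ofReal_rpow_mul] at hfin
  exact hasDerivAt_D1 hα1 hα2 hf hg hfin

/-- Paper's Lemma 3.2. -/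
theorem stmt7 {S : Type*} [MeasurableSpace S] (μ : Measure S) [SigmaFinite μ]
    (α : ℝ) (hα1 : 1 < α) (hα2 : α < 2) (f g : S → ℝ)
    (hf : MemLalpha α μ f) (hg : MemLalpha α μ g) (u v : ℝ) :
    HasDerivAt (fun u' => Ufun α μ f g u' v) (D1 α μ f g u v) u ∧
    ((∫⁻ s, (if f s = 0 ∨ g s = 0 then (0:ℝ≥0∞) else
        (ENNReal.ofReal |u * f s + v * g s|) ^ (α - 2) *
          ENNReal.ofReal (|f s| * |g s|)) ∂μ) < ⊤ →
      HasDerivAt (fun v' => D1 α μ f g u v') (D2 α μ f g u v) v) := by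
  obtain ⟨derivU, derivD1⟩ := stmt7_general μ α hα1 f g hf hg u v
  exact ⟨derivU, derivD1 hα2⟩
end
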